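/- arXiv:2503.02536 — 2 statements merged into one kernel-verified Lean document; each statement's English description precedes it below -/
import Mathlib

section
/- Assume m ≥ n+1 and that f_1,…,f_m satisfy the SNC hypothesis. Then the likelihood ideal equals the determinantal ideal: I_A = I_{m+1}(Q^s_{∖1}) + ⟨d_1·s_1 + d_2·s_2 + ⋯ + d_m·s_m⟩. In particular, I_A is generated by the linear form Σ_{i=1}^m d_i·s_i together with all (m+1)×(m+1) minors of the matrix Q^s_{∖1}. -/
open MvPolynomial

noncomputable section

/-- The polynomial ring `R = ℂ[x_1,…,x_n]`. -/
abbrev Rp (n : ℕ) := MvPolynomial (Fin n) ℂ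

/-- The polynomial ring `S = ℂ[s_1,…,s_m,x_1,…,x_n]`; `Sum.inl i ↦ s_i`, `Sum.inr j ↦ x_j`. -/
abbrev Sp (n m : ℕ) := MvPolynomial (Fin m ⊕ Fin n) ℂ

/-- The inclusion `R ⊆ S`. -/
def toS (n m : ℕ) : Rp n →ₐ[ℂ] Sp n m := rename Sum.inr

/-- Column index set for `Q_{∖1}`: diagonal columns `2,…,m` and the `n` Jacobian columns. -/
abbrev Col (n m : ℕ) := {k : Fin m // (k : ℕ) ≠ 0} ⊕ Fin n

/-- The SNC (strict normal crossing) hypothesis, via the Jacobian criterion. -/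
def SNC (n m : ℕ) (f : Fin m → Rp n) : Prop :=
  (∀ i, Irreducible (f i)) ∧
  ∀ I : Finset (Fin m), 1 ≤ I.card → I.card ≤ n →
    ∀ p : Fin n → ℂ, p ≠ 0 → (∀ i ∈ I, eval p (f i) = 0) →
      (Matrix.of fun (i : I) (j : Fin n) => eval p (pderiv j (f i.1))).rank = I.card

/-- The matrix `Q = (diag(f_1,…,f_m) | J_f)`. -/
def Qmat (n m : ℕ) (f : Fin m → Rp n) : Matrix (Fin m) (Fin m ⊕ Fin n) (Rp n) :=
  Matrix.of fun i => Sum.elim (fun k => if i = k then f i else 0) (fun j => pderiv j (f i))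

/-- The matrix `Q_{∖1}`, obtained from `Q` by deleting the first column. -/
def Q1 (n m : ℕ) (f : Fin m → Rp n) : Matrix (Fin m) (Col n m) (Rp n) :=
  Matrix.of fun i => Sum.elim (fun k => if i = (k : Fin m) then f i else 0)
    (fun j => pderiv j (f i))

/-- The matrix `Q^s_{∖1}`: `Q_{∖1}` (over `S`) with the row `(s_2,…,s_m,0,…,0)` appended. -/
def Qs1 (n m : ℕ) (f : Fin m → Rp n) : Matrix (Option (Fin m)) (Col n m) (Sp n m) :=
  Matrix.of fun i? c =>
    i?.elim (Sum.elim (fun k : {k : Fin m // (k : ℕ) ≠ 0} => (X (Sum.inl (k : Fin m)) : Sp n m)) (fun _ : Fin n => (0 : Sp n m)) c)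
      (fun i => toS n m (Q1 n m f i c))

/-- The ideal generated by all `k × k` minors of a matrix. -/
def minorsIdeal {A : Type*} [CommRing A] {ι κ : Type*} (k : ℕ) (M : Matrix ι κ A) : Ideal A :=
  Ideal.span {x | ∃ r : Fin k → ι, ∃ c : Fin k → κ,
    Function.Injective r ∧ Function.Injective c ∧ x = (M.submatrix r c).det}

/-- `h_j = Σ_i s_i·(Π_{k≠i} f_k)·∂f_i/∂x_j`. -/
def hpoly (n m : ℕ) (f : Fin m → Rp n) (j : Fin n) : Sp n m :=
  ∑ i, X (Sum.inl i) * toS n m (((Finset.univ.erase i).prod f) * pderiv j (f i))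

/-- The linear form `Σ_i d_i·s_i`. -/
def linForm (n m : ℕ) (d : Fin m → ℕ) : Sp n m := ∑ i, (d i : Sp n m) * X (Sum.inl i)

/-- The likelihood ideal `I_A`: contraction to `S` of the ideal `⟨h_1,…,h_n⟩` of `S_f`. -/
def IA (n m : ℕ) (f : Fin m → Rp n) : Ideal (Sp n m) :=
  (Ideal.span (Set.range fun j =>
      algebraMap (Sp n m) (Localization.Away (toS n m (∏ i, f i))) (hpoly n m f j))).comap
    (algebraMap (Sp n m) (Localization.Away (toS n m (∏ i, f i))))

/-!
Put `F = f_1 ⋯ f_m`, `H = ⟨h_1,…,h_n⟩` and `J = I_{m+1}(Q^s_{∖1}) + ⟨∑ d_i s_i⟩`. Multiplying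
`Q^s_{∖1}` on the left by the cleared Lagrange multipliers `(F, -s_i ∏_{k ≠ i} f_k)` and using
Euler's relation gives `F · J ⊆ H`; Cramer's rule together with Euler's relation gives `F · H ⊆ J`.
So it suffices that `J` is saturated with respect to `F`, and by eliminating `s_1` through the
linear form this reduces to the saturation of `I = I_{m+1}(Q^s_{∖1})`.

The matrix has `m + 1` rows and `m + n - 1` columns, so the Eagon–Northcott complex of its maximal
minors has length `n - 1`. At an associated prime `P` of `I` containing `F`, a weakly regular
sequence of length `n` in `P` would contradict the acyclicity lemma, provided the complex is
exact away from `I` and `I` itself contains a regular sequence of length `n - 1`. Both depths come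
from dimension counts: over a prime containing `I`, at a point `x ≠ 0` with Jacobian of rank `r`,
normal crossing and the Nullstellensatz bound the transcendence degree of `x` by `r` (by `r - 1` if
some `f_i` vanishes at `x`), the multipliers `s_i / f_i` contribute at most `m - r`, and `s_1`
contributes at most `1`.
-/

section RegularSequences

universe u v

open RingTheory.Sequence
open scoped Pointwise Polynomial

theorem isWeaklyRegular_of_flat_module {A C : Type*} [CommRing A] [AddCommGroup C] [Module A C]
    [Module.Flat A C] {gs : List A} (h : IsWeaklyRegular A gs) : IsWeaklyRegular C gs :=
  ((TensorProduct.rid A C).isWeaklyRegular_congr gs).1 h.isWeaklyRegular_lTensor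

theorem isWeaklyRegular_map_ringEquiv {A B : Type*} [CommRing A] [CommRing B] (e : A ≃+* B)
    {gs : List A} (h : IsWeaklyRegular A gs) : IsWeaklyRegular B (gs.map e) := by
  refine (AddEquiv.isWeaklyRegular_congr (e := e.toAddEquiv) ?_).1 h
  exact List.forall₂_map_right_iff.mpr (List.forall₂_same.mpr fun r _ x => by simp)

theorem isWeaklyRegular_cons_map_C_of_monic {A : Type*} [CommRing A] [IsDomain A] {gs : List A}
    (h : IsWeaklyRegular A gs) {g : A[X]} (hg : g.Monic) :
    IsWeaklyRegular A[X] (g :: gs.map (algebraMap A A[X])) := by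
  refine .cons (fun x y hxy => mul_left_cancel₀ hg.ne_zero hxy) ?_
  rw [isWeaklyRegular_map_algebraMap_iff]
  have hspan : g • (⊤ : Submodule A[X] A[X]) = Ideal.span {g} := by
    rw [← Submodule.ideal_span_singleton_smul, smul_eq_mul, Ideal.mul_top]
  have e : QuotSMulTop g A[X] ≃ₗ[A] A[X] ⧸ Ideal.span {g} :=
    (Submodule.quotEquivOfEq _ _ hspan).restrictScalars A
  have := hg.free_quotient
  exact (e.isWeaklyRegular_congr gs).2 (isWeaklyRegular_of_flat_module h)

section LinearSubstitution

variable {k σ A : Type*} [CommRing k] [CommRing A] [Algebra k A] {ℓ : σ → A[X]}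

theorem natDegree_prod_pow_le_degree (hℓ : ∀ i, (ℓ i).natDegree ≤ 1) (s : σ →₀ ℕ) :
    (s.prod fun i e => ℓ i ^ e).natDegree ≤ s.degree := by
  refine (Polynomial.natDegree_prod_le _ _).trans (Finset.sum_le_sum fun i _ => ?_)
  exact (Polynomial.natDegree_pow_le_of_le _ (hℓ i)).trans_eq (mul_one _)

theorem coeff_degree_prod_pow (hℓ : ∀ i, (ℓ i).natDegree ≤ 1) (s : σ →₀ ℕ) :
    (s.prod fun i e => ℓ i ^ e).coeff s.degree = s.prod fun i e => (ℓ i).coeff 1 ^ e := by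
  classical
  induction s using Finsupp.induction with
  | zero => simp
  | single_add i e s _ _ ih =>
    rw [Finsupp.prod_add_index' (by simp) (by simp [pow_add]),
      Finsupp.prod_add_index' (by simp) (by simp [pow_add]), map_add, Finsupp.degree_single,
      Finsupp.prod_single_index (h := fun i e => ℓ i ^ e) (pow_zero _),
      Finsupp.prod_single_index (h := fun i e => (ℓ i).coeff 1 ^ e) (pow_zero _), ← ih,
      Polynomial.coeff_mul_add_eq_of_natDegree_le _ (natDegree_prod_pow_le_degree hℓ s)]
    · congr 1
      simpa using Polynomial.coeff_pow_of_natDegree_le (m := e) (hℓ i)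
    · exact (Polynomial.natDegree_pow_le_of_le _ (hℓ i)).trans_eq (mul_one _)

theorem aeval_eq_sum_support (g : MvPolynomial σ k) :
    aeval ℓ g = ∑ s ∈ g.support, algebraMap k A[X] (g.coeff s) * s.prod fun i e => ℓ i ^ e := by
  rw [aeval_def, eval₂_eq]
  rfl

theorem natDegree_aeval_le_totalDegree (hℓ : ∀ i, (ℓ i).natDegree ≤ 1) (g : MvPolynomial σ k) :
    (aeval ℓ g).natDegree ≤ g.totalDegree := by
  rw [aeval_eq_sum_support]
  refine Polynomial.natDegree_sum_le_of_forall_le _ _ fun s hs => ?_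
  rw [IsScalarTower.algebraMap_apply k A A[X]]
  exact (Polynomial.natDegree_C_mul_le _ _).trans
    ((natDegree_prod_pow_le_degree hℓ s).trans (le_totalDegree hs))

theorem coeff_totalDegree_aeval (hℓ : ∀ i, (ℓ i).natDegree ≤ 1) (g : MvPolynomial σ k) :
    (aeval ℓ g).coeff g.totalDegree =
      aeval (fun i => (ℓ i).coeff 1) (homogeneousComponent g.totalDegree g) := by
  rw [aeval_eq_sum_support, Polynomial.finsetSum_coeff, homogeneousComponent_apply, map_sum,
    Finset.sum_filter]
  refine Finset.sum_congr rfl fun s hs => ?_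
  rw [IsScalarTower.algebraMap_apply k A A[X], Polynomial.algebraMap_eq, Polynomial.coeff_C_mul]
  split_ifs with h
  · rw [← h, coeff_degree_prod_pow hℓ, aeval_monomial]
  · rw [Polynomial.coeff_eq_zero_of_natDegree_lt, mul_zero]
    exact (natDegree_prod_pow_le_degree hℓ s).trans_lt (lt_of_le_of_ne (le_totalDegree hs) h)

end LinearSubstitution

/-- The linear change of coordinates of `k[x_0,…,x_N]` that sends the point `(1,0,…,0)` to `p`:
`x_0 ↦ p_0 x_0` and `x_i ↦ x_i + p_i x_0` for `i ≥ 1`. -/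
def shearEquiv {k : Type*} [Field k] {N : ℕ} (p : Fin (N + 1) → k) (hp : p 0 ≠ 0) :
    MvPolynomial (Fin (N + 1)) k ≃ₐ[k] MvPolynomial (Fin (N + 1)) k :=
  AlgEquiv.ofAlgHom
    (aeval (Fin.cons (p 0 • X 0) fun i => X i.succ + p i.succ • X 0))
    (aeval (Fin.cons ((p 0)⁻¹ • X 0) fun i => X i.succ - (p i.succ * (p 0)⁻¹) • X 0))
    (by ext1 i; cases i using Fin.cases <;> simp [smul_smul, hp])
    (by ext1 i; cases i using Fin.cases <;> simp [smul_smul, hp])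

theorem exists_eval_homogeneousComponent_totalDegree_ne_zero {k : Type*} [Field k] [Infinite k]
    {σ : Type*} (i : σ) {g : MvPolynomial σ k} (hg : g ≠ 0) :
    ∃ p : σ → k, p i ≠ 0 ∧ eval p (homogeneousComponent g.totalDegree g) ≠ 0 := by
  by_contra! h
  have hprod : X i * homogeneousComponent g.totalDegree g = 0 := by
    refine MvPolynomial.funext fun p => ?_
    by_cases hp : p i = 0
    · simp [hp]
    · simp [h p hp]
  have htop : homogeneousComponent g.totalDegree g = 0 :=
    (mul_eq_zero.1 hprod).resolve_left (X_ne_zero i)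
  obtain ⟨s, hs, hsd⟩ := g.support.exists_mem_eq_sup (support_nonempty.2 hg) Finsupp.degree
  have hdeg : s.degree = g.totalDegree := hsd.symm
  have hcoeff := congrArg (coeff s) htop
  rw [coeff_homogeneousComponent, if_pos hdeg] at hcoeff
  exact mem_support_iff.1 hs hcoeff

theorem exists_algEquiv_isUnit_leadingCoeff {k : Type*} [Field k] [Infinite k] {N : ℕ}
    {g : MvPolynomial (Fin (N + 1)) k} (hg : g ≠ 0) :
    ∃ e : MvPolynomial (Fin (N + 1)) k ≃ₐ[k] (MvPolynomial (Fin N) k)[X],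
      IsUnit (e g).leadingCoeff := by
  obtain ⟨p, hp0, hp⟩ := exists_eval_homogeneousComponent_totalDegree_ne_zero 0 hg
  let e := (shearEquiv p hp0).trans (finSuccEquiv k N)
  let ℓ : Fin (N + 1) → (MvPolynomial (Fin N) k)[X] := fun i => e (X i)
  have hℓ : ∀ i, (ℓ i).natDegree ≤ 1 ∧ (ℓ i).coeff 1 = C (p i) := by
    intro i
    cases i using Fin.cases with
    | zero =>
      have h : ℓ 0 = p 0 • Polynomial.X := by
        simp [ℓ, e, shearEquiv, MvPolynomial.finSuccEquiv_X_zero]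
      rw [h]
      exact ⟨(Polynomial.natDegree_smul_le _ _).trans Polynomial.natDegree_X_le,
        by simp [smul_eq_C_mul]⟩
    | succ i =>
      have h : ℓ i.succ = p i.succ • Polynomial.X + Polynomial.C (X i) := by
        simp [ℓ, e, shearEquiv, MvPolynomial.finSuccEquiv_X_zero,
          MvPolynomial.finSuccEquiv_X_succ, add_comm]
      rw [h]
      refine ⟨Polynomial.natDegree_add_le_of_degree_le
        ((Polynomial.natDegree_smul_le _ _).trans Polynomial.natDegree_X_le) (by simp), ?_⟩
      simp [smul_eq_C_mul]
  have he : e g = aeval ℓ g := (aeval_unique e.toAlgHom).symm ▸ rfl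
  have hcoeff : (aeval ℓ g).coeff g.totalDegree =
      C (eval p (homogeneousComponent g.totalDegree g)) := by
    rw [coeff_totalDegree_aeval fun i => (hℓ i).1, funext fun i => (hℓ i).2]
    exact aeval_algebraMap_apply (MvPolynomial (Fin N) k) p _
  refine ⟨e, ?_⟩
  have hunit : IsUnit ((aeval ℓ g).coeff g.totalDegree) :=
    hcoeff ▸ (isUnit_iff_ne_zero.2 hp).map C
  have hdeg : (aeval ℓ g).natDegree = g.totalDegree :=
    le_antisymm (natDegree_aeval_le_totalDegree (fun i => (hℓ i).1) g)
      (Polynomial.le_natDegree_of_ne_zero hunit.ne_zero)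
  rwa [he, Polynomial.leadingCoeff, hdeg]

theorem lift_trdeg_quotient_ker_le {k : Type*} {A : Type u} {B : Type v} [Field k] [CommRing A]
    [CommRing B] [Algebra k A] [Algebra k B] (φ : A →ₐ[k] B) :
    Cardinal.lift.{v} (Algebra.trdeg k (A ⧸ RingHom.ker φ)) ≤
      Cardinal.lift.{u} (Algebra.trdeg k B) :=
  lift_trdeg_le_of_injective (Ideal.kerLiftAlg φ) (Ideal.kerLiftAlg_injective φ)

theorem exists_isWeaklyRegular_mem_prime_fin {k : Type*} [Field k] [Infinite k] (N : ℕ) :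
    ∀ (P : Ideal (MvPolynomial (Fin N) k)) [P.IsPrime],
      ∃ gs : List (MvPolynomial (Fin N) k), (∀ g ∈ gs, g ∈ P) ∧
        IsWeaklyRegular (MvPolynomial (Fin N) k) gs ∧
        (N : Cardinal) ≤ gs.length + Algebra.trdeg k (MvPolynomial (Fin N) k ⧸ P) := by
  induction N with
  | zero => exact fun P _ => ⟨[], by simp, .nil _ _, by simp⟩
  | succ N ih =>
    intro P hP
    obtain rfl | hbot := eq_or_ne P ⊥
    · refine ⟨[], by simp, .nil _ _, ?_⟩
      rw [(AlgEquiv.quotientBot k (MvPolynomial (Fin (N + 1)) k)).trdeg_eq,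
        MvPolynomial.trdeg_of_isDomain]
      simp
    obtain ⟨g, hgP, hg0⟩ := Submodule.exists_mem_ne_zero_of_ne_bot hbot
    obtain ⟨e, he⟩ := exists_algEquiv_isUnit_leadingCoeff hg0
    let φ : MvPolynomial (Fin N) k →ₐ[k] MvPolynomial (Fin (N + 1)) k ⧸ P :=
      ((Ideal.Quotient.mkₐ k P).comp e.symm.toAlgHom).comp Polynomial.CAlgHom
    have : (RingHom.ker φ).IsPrime := RingHom.ker_isPrime φ
    have hmonic := Polynomial.monic_of_isUnit_leadingCoeff_inv_smul he
    obtain ⟨gs, hgs, hreg, hle⟩ := ih (RingHom.ker φ)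
    refine ⟨(he.unit⁻¹ • e g :: gs.map (algebraMap _ _)).map e.symm, ?_,
      isWeaklyRegular_map_ringEquiv e.symm.toRingEquiv
        (isWeaklyRegular_cons_map_C_of_monic hreg hmonic), ?_⟩
    · simp only [List.map_cons, List.map_map, List.mem_cons, List.mem_map]
      rintro _ (rfl | ⟨y, hy, rfl⟩)
      · rw [Units.smul_def, Polynomial.smul_eq_C_mul, map_mul, e.symm_apply_apply]
        exact P.mul_mem_left _ hgP
      · exact Ideal.Quotient.eq_zero_iff_mem.1 (hgs y hy)
    · simp only [List.length_map, List.length_cons, Nat.cast_add, Nat.cast_one]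
      calc (N : Cardinal) + 1
          ≤ (gs.length + Algebra.trdeg k (MvPolynomial (Fin N) k ⧸ RingHom.ker φ)) + 1 := by gcongr
        _ ≤ (gs.length + Algebra.trdeg k (MvPolynomial (Fin (N + 1)) k ⧸ P)) + 1 := by
          gcongr
          simpa using lift_trdeg_quotient_ker_le φ
        _ = _ := by ring

theorem exists_isWeaklyRegular_mem_prime {k : Type u} {σ : Type v} [Field k] [Infinite k]
    [Fintype σ] (P : Ideal (MvPolynomial σ k)) [P.IsPrime] :
    ∃ gs : List (MvPolynomial σ k), (∀ g ∈ gs, g ∈ P) ∧ IsWeaklyRegular (MvPolynomial σ k) gs ∧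
      (Fintype.card σ : Cardinal) ≤ gs.length + Algebra.trdeg k (MvPolynomial σ k ⧸ P) := by
  let e : MvPolynomial (Fin (Fintype.card σ)) k ≃ₐ[k] MvPolynomial σ k :=
    renameEquiv k (Fintype.equivFin σ).symm
  let φ := (Ideal.Quotient.mkₐ k P).comp e.toAlgHom
  have : (RingHom.ker φ).IsPrime := RingHom.ker_isPrime φ
  obtain ⟨gs, hgs, hreg, hle⟩ := exists_isWeaklyRegular_mem_prime_fin _ (RingHom.ker φ)
  refine ⟨gs.map e, ?_, isWeaklyRegular_map_ringEquiv e.toRingEquiv hreg, ?_⟩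
  · intro g hg
    obtain ⟨y, hy, rfl⟩ := List.mem_map.1 hg
    exact Ideal.Quotient.eq_zero_iff_mem.1 (hgs y hy)
  · have hlift := Cardinal.lift_le.{max u v}.2 hle
    rw [Cardinal.lift_add, Cardinal.lift_natCast, Cardinal.lift_natCast] at hlift
    rw [List.length_map, ← Cardinal.lift_le.{u}, Cardinal.lift_add, Cardinal.lift_natCast,
      Cardinal.lift_natCast]
    exact hlift.trans (by gcongr; exact lift_trdeg_quotient_ker_le φ)

end RegularSequences

section Acyclicity

open RingTheory.Sequence
open scoped Pointwise

universe u v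

theorem quotSMulTop_mk_eq_zero_iff {A M : Type*} [CommRing A] [AddCommGroup M] [Module A M]
    {g : A} {x : M} : (Submodule.Quotient.mk x : QuotSMulTop g M) = 0 ↔ ∃ y, g • y = x := by
  rw [Submodule.Quotient.mk_eq_zero, Submodule.mem_smul_pointwise_iff_exists]
  simp only [Submodule.mem_top, true_and]

theorem quotSMulTop_map_injective {A B C W : Type*} [CommRing A] [AddCommGroup B] [Module A B]
    [AddCommGroup C] [Module A C] [AddCommGroup W] [Module A W] {g : A} {i : B →ₗ[A] C}
    {π : C →ₗ[A] W} (hi : Function.Injective i) (hex : Function.Exact i π)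
    (hg : IsSMulRegular W g) : Function.Injective (QuotSMulTop.map g i) := by
  rw [injective_iff_map_eq_zero]
  intro x hx
  obtain ⟨b, rfl⟩ := Submodule.mkQ_surjective _ x
  rw [Submodule.mkQ_apply] at hx ⊢
  rw [QuotSMulTop.map_apply_mk, quotSMulTop_mk_eq_zero_iff] at hx
  obtain ⟨c, hc⟩ := hx
  have hπc : π c = 0 := hg (by simp [← map_smul, hc, hex.apply_apply_eq_zero b])
  obtain ⟨b', rfl⟩ := (hex c).1 hπc
  exact quotSMulTop_mk_eq_zero_iff.2 ⟨b', hi (by rw [map_smul, hc])⟩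

/-- `W` has a resolution `0 → C_L → ⋯ → C_0 → W → 0` of length `L` by modules `C_i` on which the
sequence `gs` is weakly regular. It replaces a bound on the projective dimension of `W`. -/
def HasRegularResolution {A : Type u} [CommRing A] (gs : List A) :
    ℕ → ∀ (W : Type v) [AddCommGroup W] [Module A W], Prop
  | 0 => fun W _ _ => IsWeaklyRegular W gs
  | L + 1 => fun W _ _ => ∃ (B C : Type v) (_ : AddCommGroup B) (_ : Module A B)
      (_ : AddCommGroup C) (_ : Module A C) (i : B →ₗ[A] C) (π : C →ₗ[A] W),
      Function.Injective i ∧ Function.Surjective π ∧ Function.Exact i π ∧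
      IsWeaklyRegular C gs ∧ HasRegularResolution gs L B

namespace HasRegularResolution

variable {A : Type u} [CommRing A]

theorem quotSMulTop {g : A} {gs : List A} {L : ℕ} :
    ∀ {W : Type v} [AddCommGroup W] [Module A W], HasRegularResolution (g :: gs) L W →
      IsSMulRegular W g → HasRegularResolution gs L (QuotSMulTop g W) := by
  induction L with
  | zero => exact fun h _ => ((isWeaklyRegular_cons_iff _ g gs).1 h).2
  | succ L ih =>
    rintro W _ _ ⟨B, C, _, _, _, _, i, π, hi, hπ, hex, hC, hB⟩ hg
    rw [isWeaklyRegular_cons_iff] at hC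
    exact ⟨QuotSMulTop g B, QuotSMulTop g C, inferInstance, inferInstance, inferInstance,
      inferInstance, QuotSMulTop.map g i, QuotSMulTop.map g π,
      quotSMulTop_map_injective hi hex hg, QuotSMulTop.map_surjective g hπ,
      QuotSMulTop.map_exact g hex hπ, hC.2, ih hB (hC.1.of_injective i hi)⟩

theorem eq_zero_of_smul_eq_zero (P : Ideal A) {L : ℕ} :
    ∀ {gs : List A} {W : Type v} [AddCommGroup W] [Module A W], HasRegularResolution gs L W →
      L < gs.length → (∀ g ∈ gs, g ∈ P) → ∀ {w : W}, (∀ a ∈ P, a • w = 0) → w = 0 := by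
  induction L with
  | zero =>
    rintro (_ | ⟨g, gs⟩) W _ _ h hL hP w hw
    · exact absurd hL (Nat.lt_irrefl 0)
    · exact ((isWeaklyRegular_cons_iff W g gs).1 h).1 (by simpa using hw g (hP g (by simp)))
  | succ L ih =>
    rintro (_ | ⟨g, gs⟩) W _ _ h hL hP w hw
    · exact absurd hL (Nat.not_lt_zero _)
    obtain ⟨B, C, _, _, _, _, i, π, hi, hπ, hex, hC, hB⟩ := h
    rw [isWeaklyRegular_cons_iff] at hC
    obtain ⟨c, rfl⟩ := hπ w
    have hlift : ∀ a ∈ P, ∃ b, i b = a • c := fun a ha => (hex _).1 (by rw [map_smul, hw a ha])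
    -- `c` descends to `B/gB`: the class of `b` with `i b = g • c` is again killed by `P`.
    obtain ⟨b, hb⟩ := hlift g (hP g (by simp))
    have hb0 : (Submodule.Quotient.mk b : QuotSMulTop g B) = 0 := by
      refine ih (hB.quotSMulTop (hC.1.of_injective i hi)) (by simpa using hL)
        (fun x hx => hP x (by simp [hx])) fun a ha => ?_
      obtain ⟨b', hb'⟩ := hlift a ha
      rw [← Submodule.Quotient.mk_smul, quotSMulTop_mk_eq_zero_iff]
      exact ⟨b', hi (by rw [map_smul, map_smul, hb, hb', smul_comm])⟩
    obtain ⟨b', hb'⟩ := quotSMulTop_mk_eq_zero_iff.1 hb0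
    have hc : i b' = c := hC.1 <| by
      change g • i b' = g • c
      rw [← map_smul, hb', hb]
    rw [← hc, hex.apply_apply_eq_zero]

end HasRegularResolution

/-- A complex `⋯ → C 2 → C 1 → C 0` of flat submodules of one ambient module `V`, with
differentials induced by endomorphisms of `V`, that vanishes above degree `N` and whose homology in
positive degrees is killed by powers of each element of a set `G`. -/
structure IsTorsionComplex {A V : Type*} [CommRing A] [AddCommGroup V] [Module A V] (G : Set A)
    (N : ℕ) (C : ℕ → Submodule A V) (D : ℕ → V →ₗ[A] V) : Prop where
  flat : ∀ j, Module.Flat A (C j)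
  map_mem : ∀ j, ∀ x ∈ C (j + 1), D j x ∈ C j
  d_comp_d : ∀ j, ∀ x ∈ C (j + 2), D j (D (j + 1) x) = 0
  eq_bot : C (N + 1) = ⊥
  torsion : ∀ j, ∀ x ∈ C (j + 1), D j x = 0 → ∀ δ ∈ G, ∃ k : ℕ, ∃ y ∈ C (j + 2),
    δ ^ k • x = D (j + 1) y

namespace IsTorsionComplex

variable {A : Type u} {V : Type v} [CommRing A] [AddCommGroup V] [Module A V] {G : Set A} {N : ℕ}
  {C : ℕ → Submodule A V} {D : ℕ → V →ₗ[A] V}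

/-- The differential `C (j + 1) → C j`. -/
def d (h : IsTorsionComplex G N C D) (j : ℕ) : C (j + 1) →ₗ[A] C j :=
  (D j).restrict (h.map_mem j)

theorem exists_isAssociatedPrime (h : IsTorsionComplex G N C D) [IsNoetherianRing A] {j : ℕ}
    (hne : ¬ LinearMap.ker (h.d j) ≤ LinearMap.range (h.d (j + 1))) :
    ∃ P : Ideal A, P.IsPrime ∧ Ideal.span G ≤ P ∧
      ∃ w : C (j + 1) ⧸ LinearMap.range (h.d (j + 1)), w ≠ 0 ∧ ∀ a ∈ P, a • w = 0 := by
  let B := LinearMap.range (h.d (j + 1))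
  let K : Submodule A (C (j + 1) ⧸ B) := (LinearMap.ker (h.d j)).map B.mkQ
  have hK : K ≠ ⊥ := fun hK => hne <| by
    rwa [← LinearMap.le_ker_iff_map, Submodule.ker_mkQ] at hK
  have : Nontrivial K := (Submodule.nontrivial_iff_ne_bot).2 hK
  obtain ⟨P, hP⟩ := associatedPrimes.nonempty A K
  obtain ⟨hprime, ⟨w, hwK⟩, hPw⟩ := isAssociatedPrime_iff.1 (AssociatedPrimes.mem_iff.1 hP)
  have hmem : ∀ a, a ∈ P ↔ a • w = 0 := fun a => by
    rw [hPw]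
    simp [Submodule.mem_colon_singleton, ← Subtype.val_inj]
  refine ⟨P, hprime, Ideal.span_le.2 fun δ hδ => ?_, w, ?_, fun a => (hmem a).1⟩
  · obtain ⟨z, hz, hzw⟩ := Submodule.mem_map.1 hwK
    have hz0 : D j z = 0 := congrArg Subtype.val (LinearMap.mem_ker.1 hz)
    obtain ⟨k, y, hy, hk⟩ := h.torsion j z z.2 hz0 δ hδ
    refine hprime.mem_of_pow_mem k ((hmem _).2 ?_)
    rw [← hzw, ← map_smul, Submodule.mkQ_apply, Submodule.Quotient.mk_eq_zero]
    exact ⟨⟨y, hy⟩, Subtype.ext hk.symm⟩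
  · rintro rfl
    exact hprime.one_notMem ((hmem 1).2 (smul_zero _))

/-- The acyclicity lemma of Peskine and Szpiro. -/
theorem hasRegularResolution [IsNoetherianRing A] (h : IsTorsionComplex G N C D)
    (hdepth : ∀ P : Ideal A, P.IsPrime → Ideal.span G ≤ P → ∃ gs : List A, (∀ g ∈ gs, g ∈ P) ∧
      IsWeaklyRegular A gs ∧ N ≤ gs.length) {gs : List A} (hgs : IsWeaklyRegular A gs) :
    ∀ L j, j + L = N → HasRegularResolution gs L (C j ⧸ LinearMap.range (h.d j)) := by
  intro L
  induction L generalizing gs with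
  | zero =>
    rintro j rfl
    have hrange : LinearMap.range (h.d j) = ⊥ := by
      refine LinearMap.range_eq_bot.2 (LinearMap.ext fun x => ?_)
      have hx : x = 0 := Subtype.ext ((Submodule.mem_bot A).1 (h.eq_bot ▸ x.2))
      rw [hx, map_zero, map_zero]
    have := h.flat j
    exact ((Submodule.quotEquivOfEqBot _ hrange).isWeaklyRegular_congr gs).2
      (isWeaklyRegular_of_flat_module hgs)
  | succ L ih =>
    intro j hj
    have hker : LinearMap.ker (h.d j) ≤ LinearMap.range (h.d (j + 1)) := by
      by_contra hne
      obtain ⟨P, hprime, hGP, w, hw0, hw⟩ := h.exists_isAssociatedPrime hne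
      obtain ⟨gs', hmem, hreg, hlen⟩ := hdepth P hprime hGP
      exact hw0 ((ih hreg (j + 1) (by lia)).eq_zero_of_smul_eq_zero P (by lia) hmem hw)
    have hle : LinearMap.range (h.d (j + 1)) ≤ LinearMap.ker (h.d j) := by
      rintro _ ⟨x, rfl⟩
      exact Subtype.ext (h.d_comp_d j x x.2)
    have := h.flat j
    exact ⟨_, C j, inferInstance, inferInstance, inferInstance, inferInstance,
      Submodule.liftQ _ (h.d j) hle, Submodule.mkQ _,
      LinearMap.ker_eq_bot.1 (Submodule.ker_liftQ_eq_bot _ _ _ hker),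
      Submodule.mkQ_surjective _,
      by rw [LinearMap.exact_iff, Submodule.ker_mkQ, Submodule.range_liftQ],
      isWeaklyRegular_of_flat_module hgs, ih hgs (j + 1) (by lia)⟩

end IsTorsionComplex

end Acyclicity

section KoszulOperators

open scoped Polynomial

theorem prod_add_sub_natCast_mul {B : Type*} [CommRing B] {δ n : B} (hn : n * n = δ * n) (u : B)
    (r : ℕ) :
    ∏ k ∈ Finset.range (r + 1), (n + u - k * δ) =
      ∏ k ∈ Finset.range (r + 1), (u - k * δ) +
        (r + 1) * n * ∏ k ∈ Finset.range r, (u - k * δ) := by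
  induction r with
  | zero => simp [add_comm]
  | succ r ih =>
    rw [Finset.prod_range_succ, ih, Finset.prod_range_succ _ (r + 1), Finset.prod_range_succ _ r]
    push_cast
    linear_combination (r + 1) * (∏ k ∈ Finset.range r, (u - k * δ)) * hn

/-- On a domain each `n i` is `0` or `δ`, so that a sum of `p` of them is one of `0, δ, …, pδ`. -/
theorem prod_sum_sub_natCast_mul_eq_zero {B ι : Type*} [CommRing B] {δ : B} {n : ι → B}
    (hn : ∀ i, n i * n i = δ * n i) (s : Finset ι) :
    ∏ k ∈ Finset.range (s.card + 1), (∑ i ∈ s, n i - k * δ) = 0 := by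
  classical
  induction s using Finset.induction_on with
  | empty => simp
  | insert i s hi ih =>
    rw [Finset.card_insert_of_notMem hi, Finset.sum_insert hi, prod_add_sub_natCast_mul (hn i), ih,
      Finset.prod_range_succ, ih]
    simp

theorem aeval_apply_sub_eval_smul_mem {A V : Type*} [CommRing A] [AddCommGroup V] [Module A V]
    {K : Submodule A V} {U : Module.End A V} (hU : ∀ v ∈ K, U v ∈ K) {c : A} {x : V}
    (hx : U x - c • x ∈ K) (q : A[X]) : Polynomial.aeval U q x - q.eval c • x ∈ K := by
  induction q using Polynomial.induction_on with
  | C a => simp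
  | add q r hq hr =>
    rw [map_add, LinearMap.add_apply, Polynomial.eval_add, add_smul, add_sub_add_comm]
    exact K.add_mem hq hr
  | monomial n a ih =>
    set q := Polynomial.C a * Polynomial.X ^ n
    have haeval : Polynomial.aeval U (Polynomial.C a * Polynomial.X ^ (n + 1)) =
        U * Polynomial.aeval U q := by
      rw [pow_succ, ← mul_assoc, mul_comm, map_mul, Polynomial.aeval_X]
    have heval : (Polynomial.C a * Polynomial.X ^ (n + 1)).eval c = q.eval c * c := by
      rw [pow_succ, ← mul_assoc, Polynomial.eval_mul, Polynomial.eval_X]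
    have hsplit : U (Polynomial.aeval U q x) - (q.eval c * c) • x =
        U (Polynomial.aeval U q x - q.eval c • x) + q.eval c • (U x - c • x) := by
      rw [map_sub, map_smul, smul_sub, smul_smul]
      abel
    rw [haeval, heval, Module.End.mul_apply, hsplit]
    exact K.add_mem (hU _ ih) (K.smul_mem _ hx)

/-- The relations between the following operators on `⋀ F ⊗ A[z]`: `a i` is the contraction by
`φ i ∈ F*`, `b i` the exterior multiplication by `v i ∈ F`, where `φ i (v j) = δ` if `i = j` and `0`
otherwise, `z i` the multiplication by a variable and `D i` the corresponding partial
derivative. -/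
structure KoszulRelations {A V ι : Type*} [CommRing A] [AddCommGroup V] [Module A V]
    [DecidableEq ι] (a b D z : ι → Module.End A V) (δ : A) : Prop where
  a_sq : ∀ i, a i * a i = 0
  a_a : ∀ i j, a i * a j = -(a j * a i)
  b_b : ∀ i j, b i * b j = -(b j * b i)
  a_b : ∀ i j, a i * b j = (if i = j then δ • 1 else 0) - b j * a i
  D_D : ∀ i j, Commute (D i) (D j)
  D_z : ∀ i j, D i * z j = z j * D i + (if i = j then 1 else 0)
  a_D : ∀ i j, Commute (a i) (D j)
  a_z : ∀ i j, Commute (a i) (z j)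
  b_D : ∀ i j, Commute (b i) (D j)
  b_z : ∀ i j, Commute (b i) (z j)

namespace KoszulRelations

variable {A V ι : Type*} [CommRing A] [AddCommGroup V] [Module A V] [DecidableEq ι]
  {a b D z : ι → Module.End A V} {δ : A}

theorem b_a (H : KoszulRelations a b D z δ) (i j : ι) :
    b j * a i = (if i = j then δ • 1 else 0) - a i * b j := by
  rw [H.a_b i j, sub_sub_cancel]

theorem ab_sq (H : KoszulRelations a b D z δ) (i : ι) :
    a i * b i * (a i * b i) = δ • (a i * b i) := by
  have hba : b i * a i = δ • 1 - a i * b i := by rw [H.b_a, if_pos rfl]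
  calc a i * b i * (a i * b i) = a i * (b i * a i) * b i := by noncomm_ring
    _ = δ • (a i * b i) - a i * a i * (b i * b i) := by
      rw [hba, mul_sub, mul_smul_comm, mul_one, sub_mul, smul_mul_assoc]
      noncomm_ring
    _ = δ • (a i * b i) := by rw [H.a_sq, zero_mul, sub_zero]

theorem commute_ab_ab (H : KoszulRelations a b D z δ) (i j : ι) :
    Commute (a i * b i) (a j * b j) := by
  obtain rfl | hij := eq_or_ne i j
  · exact Commute.refl _
  have hij' : b i * a j = -(a j * b i) := by rw [H.b_a, if_neg hij.symm, zero_sub]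
  have hji : b j * a i = -(a i * b j) := by rw [H.b_a, if_neg hij, zero_sub]
  calc a i * b i * (a j * b j) = a i * (b i * a j) * b j := by noncomm_ring
    _ = -(a i * a j * (b i * b j)) := by rw [hij']; noncomm_ring
    _ = -(a j * a i * (b j * b i)) := by rw [H.a_a i j, H.b_b i j]; noncomm_ring
    _ = a j * (b j * a i) * b i := by rw [hji]; noncomm_ring
    _ = a j * b j * (a i * b i) := by noncomm_ring

theorem ab_mul_a (H : KoszulRelations a b D z δ) (i j : ι) :
    a i * b i * a j = a j * (a i * b i) + if i = j then δ • a j else 0 := by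
  rw [mul_assoc, H.b_a j i, mul_sub, ← mul_assoc, H.a_a i j]
  obtain rfl | h := eq_or_ne i j
  · simp only [if_true, mul_smul_comm, mul_one]
    noncomm_ring
  · simp only [if_neg h, if_neg h.symm]
    noncomm_ring

theorem list_prod_a_mul_b (H : KoszulRelations a b D z δ) {l : List ι} {i : ι} (hi : i ∉ l) :
    (l.map a).prod * b i = (-1) ^ l.length * (b i * (l.map a).prod) := by
  induction l with
  | nil => simp
  | cons j l ih =>
    rw [List.mem_cons, not_or] at hi
    have hcomm : a j * b i = -(b i * a j) := by rw [H.a_b, if_neg (Ne.symm hi.1), zero_sub]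
    have hsign : a j * (-1) ^ l.length = (-1) ^ l.length * a j :=
      ((Commute.neg_one_right (a j)).pow_right _).eq
    rw [List.map_cons, List.prod_cons, List.length_cons, pow_succ, mul_assoc, ih hi.2,
      ← mul_assoc, hsign, mul_assoc, ← mul_assoc (a j), hcomm]
    noncomm_ring

theorem list_prod_a_mul_a (H : KoszulRelations a b D z δ) {l : List ι} {i : ι} (hi : i ∈ l) :
    (l.map a).prod * a i = 0 := by
  induction l using List.reverseRecOn with
  | nil => simp at hi
  | append_singleton l j ih =>
    rw [List.map_append, List.prod_append, List.map_singleton, List.prod_singleton, mul_assoc]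
    obtain rfl | hij := eq_or_ne i j
    · rw [H.a_sq, mul_zero]
    · have hil : i ∈ l := by simpa [hij] using hi
      rw [H.a_a, mul_neg, ← mul_assoc, ih hil, zero_mul, neg_zero]

variable [Fintype ι]

theorem aD_mul_bz_add (H : KoszulRelations a b D z δ) (i : ι) :
    (∑ j, a j * D j) * (b i * z i) + b i * z i * ∑ j, a j * D j =
      δ • (z i * D i) + a i * b i := by
  have hterm : ∀ j, a j * D j * (b i * z i) + b i * z i * (a j * D j) =
      if j = i then δ • (z i * D i) + a i * b i else 0 := fun j => by
    calc a j * D j * (b i * z i) + b i * z i * (a j * D j)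
        = a j * (D j * b i) * z i + b i * (z i * a j) * D j := by noncomm_ring
      _ = a j * b i * (D j * z i) + b i * a j * (z i * D j) := by
        rw [← (H.b_D i j).eq, ← (H.a_z j i).eq]; noncomm_ring
      _ = _ := by
        rw [H.D_z, H.b_a]
        split_ifs with h
        · subst h
          rw [sub_mul, smul_mul_assoc, one_mul]
          noncomm_ring
        · noncomm_ring
  rw [Finset.sum_mul, Finset.mul_sum, ← Finset.sum_add_distrib,
    Finset.sum_congr rfl fun j _ => hterm j, Finset.sum_ite_eq' Finset.univ,
    if_pos (Finset.mem_univ i)]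

theorem aD_sq (H : KoszulRelations a b D z δ) : (∑ i, a i * D i) * ∑ i, a i * D i = 0 := by
  have hterm : ∀ i j, a i * D i * (a j * D j) = a i * a j * (D i * D j) := fun i j => by
    calc a i * D i * (a j * D j) = a i * (D i * a j) * D j := by noncomm_ring
      _ = _ := by rw [← (H.a_D j i).eq]; noncomm_ring
  rw [Finset.sum_mul_sum, ← Finset.sum_product']
  refine Finset.sum_involution (fun x _ => x.swap) (fun x _ => ?_) (fun x _ hx hswap => hx ?_)
    (by simp) (by simp)
  · rw [hterm, Prod.fst_swap, Prod.snd_swap, hterm, H.a_a, (H.D_D x.1 x.2).eq, neg_mul,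
      neg_add_cancel]
  · rw [hterm, show x.1 = x.2 from congrArg Prod.snd hswap, H.a_sq, zero_mul]

theorem ab_mul_aD (H : KoszulRelations a b D z δ) :
    (∑ i, a i * b i) * ∑ j, a j * D j = (∑ j, a j * D j) * (∑ i, a i * b i + δ • 1) := by
  have ha : ∀ j, (∑ i, a i * b i) * a j = a j * (∑ i, a i * b i + δ • 1) := fun j => by
    rw [Finset.sum_mul, Finset.sum_congr rfl fun i _ => H.ab_mul_a i j, Finset.sum_add_distrib,
      ← Finset.mul_sum, Finset.sum_ite_eq' Finset.univ, if_pos (Finset.mem_univ j), mul_add,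
      mul_smul_comm, mul_one]
  have hD : ∀ j, Commute (∑ i, a i * b i) (D j) := fun j =>
    Commute.sum_left _ _ _ fun i _ => (H.a_D i j).mul_left (H.b_D i j)
  rw [Finset.mul_sum, Finset.sum_mul]
  refine Finset.sum_congr rfl fun j _ => ?_
  rw [← mul_assoc, ha, mul_assoc, mul_assoc,
    ((hD j).add_left ((Commute.one_left _).smul_left δ)).eq]

theorem aeval_sum_ab_prod_eq_zero (H : KoszulRelations a b D z δ) :
    Polynomial.aeval (∑ i, a i * b i)
      (∏ k ∈ Finset.range (Fintype.card ι + 1), (Polynomial.X - Polynomial.C (k * δ))) = 0 := by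
  let B := Algebra.adjoin A (Set.range fun i => a i * b i)
  have hB : IsMulCommutative B := Algebra.isMulCommutative_adjoin A <| by
    rintro _ ⟨i, rfl⟩ _ ⟨j, rfl⟩
    exact H.commute_ab_ab i j
  let _ : CommRing B := { (inferInstance : Ring B) with mul_comm := hB.is_comm.comm }
  let n : ι → B := fun i => ⟨a i * b i, Algebra.subset_adjoin ⟨i, rfl⟩⟩
  have hn : ∀ i, n i * n i = algebraMap A B δ * n i := fun i => by
    rw [← Algebra.smul_def]
    exact Subtype.ext (H.ab_sq i)
  have hsum : (∑ i, a i * b i : Module.End A V) = B.val (∑ i, n i) := (map_sum B.val n _).symm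
  have hprod := prod_sum_sub_natCast_mul_eq_zero hn Finset.univ
  rw [hsum, Polynomial.aeval_algHom_apply, map_prod]
  simp only [map_sub, Polynomial.aeval_X, Polynomial.aeval_C, map_mul, map_natCast]
  exact (congrArg B.val hprod).trans (map_zero _)

theorem exists_pow_smul_eq_of_pos (H : KoszulRelations a b D z δ) [Algebra ℚ A] {e : ℕ}
    (he : 0 < e) {x : V} (hd : (∑ j, a j * D j) x = 0) (hx : (∑ j, z j * D j) x = (e : A) • x) :
    ∃ k : ℕ, ∃ y, δ ^ k • x = (∑ j, a j * D j) y := by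
  set d := ∑ j, a j * D j
  set U := ∑ i, a i * b i
  have hU : ∀ v ∈ LinearMap.range d, U v ∈ LinearMap.range d := by
    rintro _ ⟨v, rfl⟩
    exact ⟨_, (LinearMap.congr_fun H.ab_mul_aD v).symm⟩
  have hUx : U x - (-(e * δ)) • x ∈ LinearMap.range d := by
    refine ⟨(∑ i, b i * z i) x, ?_⟩
    have hhom : d * (∑ i, b i * z i) + (∑ i, b i * z i) * d = δ • (∑ i, z i * D i) + U := by
      rw [Finset.mul_sum, Finset.sum_mul, ← Finset.sum_add_distrib,
        Finset.sum_congr rfl fun i _ => H.aD_mul_bz_add i, Finset.sum_add_distrib,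
        Finset.smul_sum]
    have hhomx := LinearMap.congr_fun hhom x
    simp only [LinearMap.add_apply, Module.End.mul_apply, LinearMap.smul_apply, hd, hx, map_zero,
      add_zero, smul_smul] at hhomx
    rw [hhomx, neg_smul, sub_neg_eq_add, mul_comm, add_comm]
  -- `U` acts on the class of `x` modulo the image of `d` as the scalar `-eδ`, hence a polynomial
  -- killing `U` yields a power of `δ`, up to a nonzero rational, that kills this class.
  let r : ℚ := ∏ k ∈ Finset.range (Fintype.card ι + 1), (-((e : ℚ) + k))
  have hr : r ≠ 0 := Finset.prod_ne_zero_iff.2 fun k _ => neg_ne_zero.2 (by positivity)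
  have heval : (∏ k ∈ Finset.range (Fintype.card ι + 1),
      (Polynomial.X - Polynomial.C (k * δ))).eval (-(e * δ)) =
        algebraMap ℚ A r * δ ^ (Fintype.card ι + 1) := by
    have hfactor : ∀ k : ℕ, -(e * δ) - k * δ = algebraMap ℚ A (-((e : ℚ) + k)) * δ := fun k => by
      simp only [map_neg, map_add, map_natCast]
      ring
    rw [Polynomial.eval_prod, map_prod, ← Finset.card_range (Fintype.card ι + 1),
      ← Finset.prod_const, Finset.card_range, ← Finset.prod_mul_distrib]
    simp only [Polynomial.eval_sub, Polynomial.eval_X, Polynomial.eval_C, hfactor]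
  have hmem := aeval_apply_sub_eval_smul_mem hU hUx
    (∏ k ∈ Finset.range (Fintype.card ι + 1), (Polynomial.X - Polynomial.C (k * δ)))
  rw [H.aeval_sum_ab_prod_eq_zero, heval, LinearMap.zero_apply, zero_sub, neg_mem_iff] at hmem
  obtain ⟨y, hy⟩ := Submodule.smul_mem _ (algebraMap ℚ A r⁻¹) hmem
  refine ⟨Fintype.card ι + 1, y, ?_⟩
  rw [hy, smul_smul, ← mul_assoc, ← map_mul, inv_mul_cancel₀ hr, map_one, one_mul]

theorem exists_pow_smul_eq_of_list_prod (H : KoszulRelations a b D z δ) {l : List ι}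
    (hl : l.Nodup) {x : V} (hD : ∀ i, D i x = 0) (hx : (l.map a).prod x = 0) :
    ∃ y, δ ^ l.length • x = (∑ j, a j * D j) y := by
  induction l using List.reverseRecOn generalizing x with
  | nil => exact ⟨0, by simpa using hx⟩
  | append_singleton l j ih =>
    have hbound : (a j * b j) x = (∑ j, a j * D j) ((b j * z j) x) := by
      have h := LinearMap.congr_fun (H.aD_mul_bz_add j) x
      have hdx : (∑ j, a j * D j) x = 0 := by simp [LinearMap.sum_apply, hD]
      simpa [hD, hdx] using h.symm
    rw [List.nodup_append] at hl
    have hjl : j ∉ l := fun hj => hl.2.2 j hj j (List.mem_singleton_self j) rfl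
    have hDba : ∀ i, D i ((b j * a j) x) = 0 := fun i => by
      have hcomm := ((H.b_D j i).mul_left (H.a_D j i)).eq
      rw [← Module.End.mul_apply, ← hcomm, Module.End.mul_apply, hD, map_zero]
    have hlba : (l.map a).prod ((b j * a j) x) = 0 := by
      rw [List.map_append, List.prod_append, List.map_singleton, List.prod_singleton,
        Module.End.mul_apply] at hx
      rw [← Module.End.mul_apply, ← mul_assoc, H.list_prod_a_mul_b hjl]
      simp [hx]
    obtain ⟨y, hy⟩ := ih hl.1 hDba hlba
    refine ⟨y + δ ^ l.length • (b j * z j) x, ?_⟩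
    rw [map_add, map_smul, ← hy, ← hbound, H.b_a, if_pos rfl, List.length_append,
      List.length_singleton, pow_succ, ← smul_add, LinearMap.sub_apply, sub_add_cancel, mul_smul]
    rfl

end KoszulRelations

end KoszulOperators

section ExteriorContraction

variable {A F : Type*} [CommRing A] [AddCommGroup F] [Module A F]

/-- The contraction of the exterior algebra by a linear form: the antiderivation extending it. -/
def exteriorContraction (φ : Module.Dual A F) : Module.End A (ExteriorAlgebra A F) :=
  CliffordAlgebra.contractLeft (Q := (0 : QuadraticForm A F)) φ

theorem exteriorContraction_ι_mul (φ : Module.Dual A F) (v : F) (x : ExteriorAlgebra A F) :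
    exteriorContraction φ (ExteriorAlgebra.ι A v * x) =
      φ v • x - ExteriorAlgebra.ι A v * exteriorContraction φ x :=
  CliffordAlgebra.contractLeft_ι_mul φ v x

theorem exteriorContraction_one (φ : Module.Dual A F) :
    exteriorContraction φ (1 : ExteriorAlgebra A F) = 0 :=
  CliffordAlgebra.contractLeft_one (Q := (0 : QuadraticForm A F)) φ

theorem exteriorContraction_mul_self (φ : Module.Dual A F) :
    exteriorContraction φ * exteriorContraction φ = 0 :=
  LinearMap.ext fun x => CliffordAlgebra.contractLeft_contractLeft φ x

theorem exteriorContraction_mul_eq_neg (φ ψ : Module.Dual A F) :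
    exteriorContraction φ * exteriorContraction ψ =
      -(exteriorContraction ψ * exteriorContraction φ) :=
  LinearMap.ext fun x => CliffordAlgebra.contractLeft_comm φ ψ x

theorem mulLeft_ι_mul_eq_neg (v w : F) :
    LinearMap.mulLeft A (ExteriorAlgebra.ι A v) * LinearMap.mulLeft A (ExteriorAlgebra.ι A w) =
      -(LinearMap.mulLeft A (ExteriorAlgebra.ι A w) *
        LinearMap.mulLeft A (ExteriorAlgebra.ι A v)) := by
  refine LinearMap.ext fun x => ?_
  have hswap := eq_neg_of_add_eq_zero_left (ExteriorAlgebra.ι_add_mul_swap (R := A) v w)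
  simp only [Module.End.mul_apply, LinearMap.mulLeft_apply, LinearMap.neg_apply, ← mul_assoc,
    hswap, neg_mul]

theorem exteriorContraction_mul_mulLeft_ι (φ : Module.Dual A F) (v : F) :
    exteriorContraction φ * LinearMap.mulLeft A (ExteriorAlgebra.ι A v) =
      φ v • 1 - LinearMap.mulLeft A (ExteriorAlgebra.ι A v) * exteriorContraction φ :=
  LinearMap.ext fun x => exteriorContraction_ι_mul φ v x

theorem exteriorContraction_ιMulti (φ : Module.Dual A F) {k : ℕ} (v : Fin (k + 1) → F) :
    exteriorContraction φ (ExteriorAlgebra.ιMulti A (k + 1) v) =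
      ∑ j : Fin (k + 1), ((-1) ^ (j : ℕ) * φ (v j)) •
        ExteriorAlgebra.ιMulti A k (fun i => v (j.succAbove i)) := by
  induction k with
  | zero =>
    rw [ExteriorAlgebra.ιMulti_succ_apply, exteriorContraction_ι_mul]
    simp [ExteriorAlgebra.ιMulti_zero_apply, exteriorContraction_one]
  | succ k ih =>
    rw [ExteriorAlgebra.ιMulti_succ_apply, exteriorContraction_ι_mul, Fin.sum_univ_succ, ih,
      Finset.mul_sum, sub_eq_add_neg, ← Finset.sum_neg_distrib]
    congr 1
    · simp [Matrix.vecTail, Function.comp_def]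
    · refine Finset.sum_congr rfl fun j _ => ?_
      rw [ExteriorAlgebra.ιMulti_succ_apply, mul_smul_comm, ← neg_smul]
      simp only [Fin.succ_succAbove_zero, Fin.val_succ, pow_succ, Matrix.vecTail,
        Function.comp_def, Fin.succ_succAbove_succ, mul_neg, mul_one, neg_mul]

theorem exteriorContraction_mem (φ : Module.Dual A F) {k : ℕ} {x : ExteriorAlgebra A F}
    (hx : x ∈ ⋀[A]^(k + 1) F) : exteriorContraction φ x ∈ ⋀[A]^k F := by
  rw [← ExteriorAlgebra.ιMulti_span_fixedDegree] at hx ⊢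
  refine Submodule.span_le (p := (Submodule.span A _).comap (exteriorContraction φ)) |>.2 ?_ hx
  rintro _ ⟨v, rfl⟩
  rw [SetLike.mem_coe, Submodule.mem_comap, exteriorContraction_ιMulti]
  exact Submodule.sum_mem _ fun j _ => Submodule.smul_mem _ _ (Submodule.subset_span ⟨_, rfl⟩)

theorem prod_exteriorContraction_ιMulti {k : ℕ} (φ : Fin k → Module.Dual A F) (v : Fin k → F) :
    (((List.finRange k).reverse.map fun i => exteriorContraction (φ i)).prod)
        (ExteriorAlgebra.ιMulti A k v) =
      (Matrix.of fun i j => φ i (v j)).det • (1 : ExteriorAlgebra A F) := by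
  induction k with
  | zero => simp
  | succ k ih =>
    rw [List.finRange_succ, List.reverse_cons, List.map_append, List.prod_append,
      List.map_singleton, List.prod_singleton, Module.End.mul_apply, exteriorContraction_ιMulti,
      map_sum, Matrix.det_succ_row_zero, Finset.sum_smul, ← List.map_reverse, List.map_map]
    refine Finset.sum_congr rfl fun j _ => ?_
    rw [map_smul, ← smul_smul _ _ (1 : ExteriorAlgebra A F)]
    exact congrArg _ (ih (fun i => φ i.succ) fun i => v (j.succAbove i))

/-- The projection of the exterior algebra onto its component of degree `k`. -/
def exteriorProj (k : ℕ) : Module.End A (ExteriorAlgebra A F) :=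
  GradedAlgebra.proj (fun i : ℕ => ⋀[A]^i F) k

theorem exteriorProj_of_mem_same {k : ℕ} {x : ExteriorAlgebra A F} (hx : x ∈ ⋀[A]^k F) :
    exteriorProj k x = x :=
  DirectSum.decompose_of_mem_same (fun i : ℕ => ⋀[A]^i F) hx

theorem exteriorProj_of_mem_ne {k l : ℕ} {x : ExteriorAlgebra A F} (hx : x ∈ ⋀[A]^k F)
    (h : k ≠ l) : exteriorProj l x = 0 :=
  DirectSum.decompose_of_mem_ne (fun i : ℕ => ⋀[A]^i F) hx h

theorem exteriorProj_mem (k : ℕ) (x : ExteriorAlgebra A F) : exteriorProj k x ∈ ⋀[A]^k F :=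
  (DirectSum.decompose (fun i : ℕ => ⋀[A]^i F) x k).2

theorem exteriorProj_mul_self (k : ℕ) :
    (exteriorProj k * exteriorProj k : Module.End A (ExteriorAlgebra A F)) = exteriorProj k :=
  LinearMap.ext fun _ => exteriorProj_of_mem_same (exteriorProj_mem k _)

theorem exteriorContraction_mul_exteriorProj (φ : Module.Dual A F) (k : ℕ) :
    exteriorContraction φ * exteriorProj (k + 1) = exteriorProj k * exteriorContraction φ := by
  refine LinearMap.ext fun x => ?_
  simp only [Module.End.mul_apply]
  induction x using DirectSum.Decomposition.inductionOn (fun i : ℕ => ⋀[A]^i F) with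
  | zero => simp only [map_zero]
  | add x y hx hy => rw [map_add, map_add, map_add, map_add, hx, hy]
  | @homogeneous i x =>
    obtain ⟨x, hx⟩ := x
    obtain _ | i := i
    · rw [exteriorProj_of_mem_ne hx (by lia), map_zero]
      obtain ⟨r, rfl⟩ := Submodule.mem_one.1 (show x ∈ (1 : Submodule A _) from hx)
      change 0 = exteriorProj k (exteriorContraction φ (algebraMap A _ r))
      rw [Algebra.algebraMap_eq_smul_one, map_smul, exteriorContraction_one, smul_zero, map_zero]
    · obtain rfl | h := eq_or_ne i k
      · rw [exteriorProj_of_mem_same hx, exteriorProj_of_mem_same (exteriorContraction_mem φ hx)]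
      · rw [exteriorProj_of_mem_ne hx (by lia), map_zero,
          exteriorProj_of_mem_ne (exteriorContraction_mem φ hx) h]

theorem exteriorProj_eq_zero_of_finrank_lt [IsDomain A] [Module.Free A F] [Module.Finite A F]
    {k : ℕ} (hk : Module.finrank A F < k) :
    (exteriorProj k : Module.End A (ExteriorAlgebra A F)) = 0 := by
  have hrank := exteriorPower.finrank_eq A k (M := F)
  rw [Nat.choose_eq_zero_of_lt hk] at hrank
  have : Subsingleton (⋀[A]^k F) := Module.finrank_zero_iff.1 hrank
  exact LinearMap.ext fun x => congrArg Subtype.val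
    (Subsingleton.elim (⟨exteriorProj k x, exteriorProj_mem k x⟩ : ⋀[A]^k F) 0)

theorem free_exteriorAlgebra [Module.Free A F] : Module.Free A (ExteriorAlgebra A F) := by
  classical
  let _ : LinearOrder (Module.Free.ChooseBasisIndex A F) := linearOrderOfSTO WellOrderingRel
  exact Module.Free.of_basis (Module.Free.chooseBasis A F).ExteriorAlgebra

end ExteriorContraction

section PartialDerivatives

variable {A σ : Type*} [CommRing A]

theorem commute_pderiv (i j : σ) :
    Commute ((pderiv i).toLinearMap : Module.End A (MvPolynomial σ A)) (pderiv j).toLinearMap := by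
  classical
  have hbracket : ⁅pderiv (R := A) i, pderiv (R := A) j⁆ = 0 := derivation_ext fun k => by
    simp [Derivation.commutator_apply, pderiv_X, Pi.single_apply, apply_ite]
  refine LinearMap.ext fun x => sub_eq_zero.1 ?_
  have hx := DFunLike.congr_fun hbracket x
  rwa [Derivation.commutator_apply] at hx

theorem pderiv_mul_mulLeft_X [DecidableEq σ] (i j : σ) :
    ((pderiv i).toLinearMap * LinearMap.mulLeft A (X j) : Module.End A (MvPolynomial σ A)) =
      LinearMap.mulLeft A (X j) * (pderiv i).toLinearMap + if i = j then 1 else 0 := by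
  refine LinearMap.ext fun x => ?_
  obtain rfl | hij := eq_or_ne i j
  · simp
  · simp [hij, pderiv_X_of_ne hij.symm]

theorem pderiv_homogeneousComponent_succ (i : σ) (e : ℕ) (x : MvPolynomial σ A) :
    pderiv i (homogeneousComponent (e + 1) x) = homogeneousComponent e (pderiv i x) := by
  induction x using MvPolynomial.induction_on' with
  | add x y hx hy => simp only [map_add, hx, hy]
  | monomial u a =>
    have hu : (monomial u a).IsHomogeneous u.degree := isHomogeneous_monomial a rfl
    rw [homogeneousComponent_of_mem hu, homogeneousComponent_of_mem (hu.pderiv (i := i))]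
    by_cases h0 : u.degree = 0
    · obtain rfl : u = 0 := (Finsupp.degree_eq_zero_iff u).1 h0
      simp [-monomial_zero', show pderiv i (monomial (0 : σ →₀ ℕ) a) = 0 from pderiv_C]
    · have hdeg : e + 1 = u.degree ↔ e = u.degree - 1 := by lia
      simp only [hdeg, apply_ite (pderiv i), map_zero]

theorem sum_X_mul_pderiv_homogeneousComponent [Fintype σ] (e : ℕ) (x : MvPolynomial σ A) :
    ∑ i, X i * pderiv i (homogeneousComponent e x) = (e : A) • homogeneousComponent e x := by
  rw [(homogeneousComponent_isHomogeneous e x).sum_X_mul_pderiv, Nat.cast_smul_eq_nsmul]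

end PartialDerivatives

section MaximalMinors

open scoped TensorProduct

universe u v

/-- The module `⋀ F ⊗ A[z_1,…,z_p]`, whose bigraded pieces are the terms of the Eagon–Northcott
complex of a linear map `F → A^p`; the divided powers of the usual definition are replaced by
polynomials with differential `Σ φ_i ⊗ ∂/∂z_i`, which is harmless over `ℚ`. -/
abbrev EagonNorthcott (A : Type u) (F : Type v) [CommRing A] [AddCommGroup F] [Module A F]
    (p : ℕ) :=
  ExteriorAlgebra A F ⊗[A] MvPolynomial (Fin p) A

namespace EagonNorthcott

variable {A : Type u} {F : Type v} [CommRing A] [AddCommGroup F] [Module A F] {p : ℕ}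

/-- Endomorphisms of the exterior algebra acting on the first factor. -/
abbrev extEnd : Module.End A (ExteriorAlgebra A F) →ₐ[A] Module.End A (EagonNorthcott A F p) :=
  Module.End.rTensorAlgHom A _ _

/-- Endomorphisms of the polynomial ring acting on the second factor. -/
abbrev polyEnd :
    Module.End A (MvPolynomial (Fin p) A) →ₐ[A] Module.End A (EagonNorthcott A F p) :=
  Module.End.lTensorAlgHom A _ _

theorem commute_extEnd_polyEnd (f : Module.End A (ExteriorAlgebra A F))
    (g : Module.End A (MvPolynomial (Fin p) A)) : Commute (extEnd f) (polyEnd g) :=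
  TensorProduct.ext' fun _ _ => rfl

theorem extEnd_mul_polyEnd_mul (f f' : Module.End A (ExteriorAlgebra A F))
    (g g' : Module.End A (MvPolynomial (Fin p) A)) :
    extEnd f * polyEnd g * (extEnd f' * polyEnd g') = extEnd (f * f') * polyEnd (g * g') :=
  TensorProduct.ext' fun _ _ => rfl

theorem koszulRelations (φ : Fin p → Module.Dual A F) (v : Fin p → F) (δ : A)
    (h : ∀ i j, φ i (v j) = if i = j then δ else 0) :
    KoszulRelations (V := EagonNorthcott A F p) (fun i => extEnd (exteriorContraction (φ i)))
      (fun i => extEnd (LinearMap.mulLeft A (ExteriorAlgebra.ι A (v i))))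
      (fun i => polyEnd (pderiv i).toLinearMap) (fun i => polyEnd (LinearMap.mulLeft A (X i)))
      δ where
  a_sq i := by rw [← map_mul, exteriorContraction_mul_self, map_zero]
  a_a i j := by rw [← map_mul, exteriorContraction_mul_eq_neg, map_neg, map_mul]
  b_b i j := by rw [← map_mul, mulLeft_ι_mul_eq_neg, map_neg, map_mul]
  a_b i j := by
    rw [← map_mul, exteriorContraction_mul_mulLeft_ι, map_sub, map_mul, h, map_smul, map_one,
      ite_smul, zero_smul]
  D_D i j := (commute_pderiv i j).map polyEnd
  D_z i j := by
    rw [← map_mul, pderiv_mul_mulLeft_X, map_add, map_mul, apply_ite polyEnd, map_one, map_zero]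
  a_D _ _ := commute_extEnd_polyEnd _ _
  a_z _ _ := commute_extEnd_polyEnd _ _
  b_D _ _ := commute_extEnd_polyEnd _ _
  b_z _ _ := commute_extEnd_polyEnd _ _

theorem koszulRelations_zero (φ : Fin p → Module.Dual A F) :
    KoszulRelations (V := EagonNorthcott A F p) (fun i => extEnd (exteriorContraction (φ i)))
      (fun _ => extEnd (LinearMap.mulLeft A (ExteriorAlgebra.ι A 0)))
      (fun i => polyEnd (pderiv i).toLinearMap) (fun i => polyEnd (LinearMap.mulLeft A (X i)))
      0 :=
  koszulRelations φ (fun _ => 0) 0 (by simp)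

/-- The projection onto `⋀^(p + e) F ⊗ A[z]_e`. -/
def bidegreeProj (A : Type u) (F : Type v) [CommRing A] [AddCommGroup F] [Module A F] (p e : ℕ) :
    Module.End A (EagonNorthcott A F p) :=
  extEnd (exteriorProj (p + e)) * polyEnd (homogeneousComponent e)

theorem bidegreeProj_mul_self (e : ℕ) :
    bidegreeProj A F p e * bidegreeProj A F p e = bidegreeProj A F p e := by
  have hpoly : (homogeneousComponent e * homogeneousComponent e :
      Module.End A (MvPolynomial (Fin p) A)) = homogeneousComponent e :=
    LinearMap.ext fun x => homogeneousComponent_eq_self (homogeneousComponent_isHomogeneous e x)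
  rw [bidegreeProj, extEnd_mul_polyEnd_mul, exteriorProj_mul_self, hpoly]

theorem bidegreeProj_zero_tmul (u : ExteriorAlgebra A F) (g : MvPolynomial (Fin p) A) :
    bidegreeProj A F p 0 (u ⊗ₜ g) = coeff 0 g • (exteriorProj p u ⊗ₜ 1) := by
  change exteriorProj (p + 0) u ⊗ₜ[A] homogeneousComponent 0 g = _
  rw [homogeneousComponent_zero, ← mul_one (C _), ← smul_eq_C_mul, TensorProduct.tmul_smul,
    add_zero]

/-- The terms of the complex: `⋀^(p + e) F ⊗ A[z]_e` in degree `e + 1`, and in degree `0` the whole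
module, which contains `A` as the span of `1 ⊗ 1`. -/
def term (A : Type u) (F : Type v) [CommRing A] [AddCommGroup F] [Module A F] (p : ℕ) :
    ℕ → Submodule A (EagonNorthcott A F p)
  | 0 => ⊤
  | e + 1 => LinearMap.range (bidegreeProj A F p e)

/-- The differential: `Σ φ_i ⊗ ∂/∂z_i` in positive degrees, and the contraction by
`φ_1 ∧ ⋯ ∧ φ_p` in the last step. -/
def differential (φ : Fin p → Module.Dual A F) : ℕ → Module.End A (EagonNorthcott A F p)
  | 0 => ((List.finRange p).reverse.map fun i => extEnd (exteriorContraction (φ i))).prod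
  | _ + 1 => ∑ i, extEnd (exteriorContraction (φ i)) * polyEnd (pderiv i).toLinearMap

theorem differential_zero (φ : Fin p → Module.Dual A F) :
    differential φ 0 =
      extEnd ((List.finRange p).reverse.map fun i => exteriorContraction (φ i)).prod := by
  rw [map_list_prod, List.map_map]
  rfl

theorem differential_succ_mul_bidegreeProj (φ : Fin p → Module.Dual A F) (j e : ℕ) :
    differential φ (j + 1) * bidegreeProj A F p (e + 1) =
      bidegreeProj A F p e * differential φ (j + 1) := by
  rw [differential, Finset.sum_mul, Finset.mul_sum]
  refine Finset.sum_congr rfl fun i _ => ?_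
  have hpoly : ((pderiv i).toLinearMap * homogeneousComponent (e + 1) :
      Module.End A (MvPolynomial (Fin p) A)) = homogeneousComponent e * (pderiv i).toLinearMap :=
    LinearMap.ext fun x => pderiv_homogeneousComponent_succ i e x
  rw [bidegreeProj, bidegreeProj, extEnd_mul_polyEnd_mul, extEnd_mul_polyEnd_mul, hpoly,
    ← add_assoc, exteriorContraction_mul_exteriorProj]

theorem mem_term_zero (x : EagonNorthcott A F p) : x ∈ term A F p 0 :=
  Submodule.mem_top

theorem mem_term_succ {e : ℕ} {x : EagonNorthcott A F p} :
    x ∈ term A F p (e + 1) ↔ bidegreeProj A F p e x = x := by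
  refine ⟨?_, fun h => ⟨x, h⟩⟩
  rintro ⟨y, rfl⟩
  exact LinearMap.congr_fun (bidegreeProj_mul_self e) y

theorem flat_term [Module.Free A F] : ∀ j, Module.Flat A (term A F p j)
  | 0 =>
    have : Module.Free A (ExteriorAlgebra A F) := free_exteriorAlgebra
    Module.Flat.of_linearEquiv Submodule.topEquiv
  | e + 1 => by
    have : Module.Free A (ExteriorAlgebra A F) := free_exteriorAlgebra
    refine Module.Flat.of_retract (LinearMap.range (bidegreeProj A F p e)).subtype
      (bidegreeProj A F p e).rangeRestrict (LinearMap.ext fun x => Subtype.ext ?_)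
    exact mem_term_succ.1 x.2

theorem differential_mem_term (φ : Fin p → Module.Dual A F) :
    ∀ j, ∀ x ∈ term A F p (j + 1), differential φ j x ∈ term A F p j
  | 0, _, _ => Submodule.mem_top
  | j + 1, x, hx => by
    rw [mem_term_succ] at hx ⊢
    rw [← Module.End.mul_apply, ← differential_succ_mul_bidegreeProj, Module.End.mul_apply, hx]

theorem differential_differential (φ : Fin p → Module.Dual A F) :
    ∀ j x, differential φ j (differential φ (j + 1) x) = 0
  | 0, x => by
    have H := koszulRelations_zero φ
    refine LinearMap.congr_fun (f := differential φ 0 * differential φ 1) (g := 0) ?_ x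
    rw [differential, differential, Finset.mul_sum]
    refine Finset.sum_eq_zero fun i _ => ?_
    rw [← mul_assoc, H.list_prod_a_mul_a (List.mem_reverse.2 (List.mem_finRange i)), zero_mul]
  | _ + 1, x => LinearMap.congr_fun (koszulRelations_zero φ).aD_sq x

theorem polyEnd_pderiv_eq_zero_of_mem_term_one {x : EagonNorthcott A F p}
    (hx : x ∈ term A F p 1) (i : Fin p) : polyEnd (F := F) (pderiv i).toLinearMap x = 0 := by
  have hpoly : ((pderiv i).toLinearMap * homogeneousComponent 0 :
      Module.End A (MvPolynomial (Fin p) A)) = 0 :=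
    LinearMap.ext fun x => by simp [homogeneousComponent_zero]
  rw [← mem_term_succ.1 hx, ← Module.End.mul_apply, bidegreeProj, ← mul_assoc,
    ← (commute_extEnd_polyEnd _ _).eq, mul_assoc, ← map_mul, hpoly, map_zero, mul_zero,
    LinearMap.zero_apply]

theorem sum_polyEnd_X_mul_pderiv_of_mem_term_succ {e : ℕ} {x : EagonNorthcott A F p}
    (hx : x ∈ term A F p (e + 1)) :
    (∑ i, polyEnd (LinearMap.mulLeft A (X i)) * polyEnd (pderiv i).toLinearMap :
      Module.End A (EagonNorthcott A F p)) x = (e : A) • x := by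
  have hpoly : (∑ i, LinearMap.mulLeft A (X i) * (pderiv i).toLinearMap) *
      homogeneousComponent e =
        ((e : A) • homogeneousComponent e : Module.End A (MvPolynomial (Fin p) A)) :=
    LinearMap.ext fun x => by
      simpa [LinearMap.sum_apply] using sum_X_mul_pderiv_homogeneousComponent e x
  conv_rhs => rw [← mem_term_succ.1 hx, ← LinearMap.smul_apply]
  rw [← mem_term_succ.1 hx, ← Module.End.mul_apply, mem_term_succ.1 hx]
  simp only [← map_mul]
  rw [← map_sum, bidegreeProj, ← mul_assoc, ← (commute_extEnd_polyEnd _ _).eq, mul_assoc,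
    ← map_mul, hpoly, map_smul, mul_smul_comm]

theorem exists_pow_smul_eq_differential [Algebra ℚ A] (φ : Fin p → Module.Dual A F)
    {v : Fin p → F} {δ : A} (h : ∀ i j, φ i (v j) = if i = j then δ else 0) {j : ℕ}
    {x : EagonNorthcott A F p} (hx : x ∈ term A F p (j + 1)) (hd : differential φ j x = 0) :
    ∃ k : ℕ, ∃ y ∈ term A F p (j + 2), δ ^ k • x = differential φ (j + 1) y := by
  have H := koszulRelations φ v δ h
  obtain ⟨k, y, hy⟩ : ∃ k : ℕ, ∃ y, δ ^ k • x = differential φ (j + 1) y := by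
    cases j with
    | zero =>
      exact ⟨_, H.exists_pow_smul_eq_of_list_prod (List.nodup_reverse.2 (List.nodup_finRange p))
        (polyEnd_pderiv_eq_zero_of_mem_term_one hx) hd⟩
    | succ j =>
      exact H.exists_pow_smul_eq_of_pos j.succ_pos hd (sum_polyEnd_X_mul_pderiv_of_mem_term_succ hx)
  refine ⟨k, bidegreeProj A F p (j + 1) y, ⟨y, rfl⟩, ?_⟩
  rw [← Module.End.mul_apply, differential_succ_mul_bidegreeProj, Module.End.mul_apply, ← hy,
    map_smul, mem_term_succ.1 hx]

end EagonNorthcott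

/-- The maximal minors of a `p × ι` matrix, for all choices of `p` columns in any order; repeated
columns contribute zero. -/
def maximalMinors {A ι : Type*} [CommRing A] {p : ℕ} (M : Matrix (Fin p) ι A) : Set A :=
  Set.range fun c : Fin p → ι => (M.submatrix id c).det

namespace EagonNorthcott

variable {A : Type u} {ι : Type v} [CommRing A] [Fintype ι] {p : ℕ}

/-- The rows of a matrix as linear forms. -/
def rowForm (M : Matrix (Fin p) ι A) (i : Fin p) : Module.Dual A (ι → A) :=
  LinearMap.proj i ∘ₗ M.mulVecLin

theorem rowForm_single_one [DecidableEq ι] (M : Matrix (Fin p) ι A) (i : Fin p) (c : ι) :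
    rowForm M i (Pi.single c 1) = M i c := by
  simp [rowForm]

theorem exists_rowForm_eq_ite (M : Matrix (Fin p) ι A) (c : Fin p → ι) :
    ∃ v : Fin p → ι → A,
      ∀ i j, rowForm M i (v j) = if i = j then (M.submatrix id c).det else 0 := by
  classical
  refine ⟨fun j => ∑ k, (M.submatrix id c).adjugate k j • Pi.single (c k) 1, fun i j => ?_⟩
  have hadj := congrFun (congrFun (Matrix.mul_adjugate (M.submatrix id c)) i) j
  rw [Matrix.mul_apply, Matrix.smul_apply, Matrix.one_apply, smul_eq_mul, mul_ite, mul_one,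
    mul_zero] at hadj
  rw [← hadj]
  simp only [map_sum, map_smul, rowForm_single_one, smul_eq_mul]
  exact Finset.sum_congr rfl fun k _ => mul_comm _ _

theorem isTorsionComplex [IsDomain A] [Algebra ℚ A] (M : Matrix (Fin p) ι A) {N : ℕ}
    (hN : Fintype.card ι + 1 = p + N) :
    IsTorsionComplex (maximalMinors M) N (term A (ι → A) p) (differential (rowForm M)) where
  flat := flat_term
  map_mem := differential_mem_term _
  d_comp_d j x _ := differential_differential _ j x
  eq_bot := by
    rw [term, bidegreeProj, exteriorProj_eq_zero_of_finrank_lt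
      (by rw [Module.finrank_fintype_fun_eq_card]; lia), map_zero, zero_mul, LinearMap.range_zero]
  torsion := by
    rintro j x hx hd _ ⟨c, rfl⟩
    obtain ⟨v, hv⟩ := exists_rowForm_eq_ite M c
    exact exists_pow_smul_eq_differential _ hv hx hd

omit [Fintype ι] in
theorem term_one_eq_span [Finite ι] [DecidableEq ι] :
    term A (ι → A) p 1 = Submodule.span A (Set.range fun c : Fin p → ι =>
      ExteriorAlgebra.ιMulti A p (fun j => Pi.single (c j) (1 : A)) ⊗ₜ[A]
        (1 : MvPolynomial (Fin p) A)) := by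
  apply le_antisymm
  · have hspan : ∀ u ∈ ⋀[A]^p (ι → A), u ⊗ₜ[A] (1 : MvPolynomial (Fin p) A) ∈
        Submodule.span A (Set.range fun c : Fin p → ι =>
          ExteriorAlgebra.ιMulti A p (fun j => Pi.single (c j) (1 : A)) ⊗ₜ[A] 1) := fun u hu => by
      have hbasis : Submodule.span A (Set.range fun c : ι => Pi.single c (1 : A)) = ⊤ := by
        rw [← (Pi.basisFun A ι).span_eq]
        exact congrArg _ (congrArg _ (funext fun c => (Pi.basisFun_apply A ι c).symm))
      rw [← exteriorPower.ιMulti_span_fixedDegree_of_span_eq_top A p _ hbasis] at hu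
      refine Submodule.span_mono ?_ (Submodule.apply_mem_span_image_of_mem_span
        ((TensorProduct.mk A _ _).flip (1 : MvPolynomial (Fin p) A)) hu)
      rintro _ ⟨_, ⟨w, hw, rfl⟩, rfl⟩
      choose c hc using fun i => hw (Set.mem_range_self i)
      exact ⟨c, by simp only [hc]; rfl⟩
    rintro _ ⟨x, rfl⟩
    induction x using TensorProduct.induction_on with
    | zero => simp only [map_zero, Submodule.zero_mem]
    | add x y hx hy => rw [map_add]; exact Submodule.add_mem _ hx hy
    | tmul u g =>
      rw [bidegreeProj_zero_tmul]
      exact Submodule.smul_mem _ _ (hspan _ (exteriorProj_mem p u))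
  · rw [Submodule.span_le]
    rintro _ ⟨c, rfl⟩
    refine ⟨ExteriorAlgebra.ιMulti A p (fun j => Pi.single (c j) 1) ⊗ₜ 1, ?_⟩
    rw [bidegreeProj_zero_tmul, coeff_zero_one, one_smul,
      exteriorProj_of_mem_same (ExteriorAlgebra.ιMulti_range A p (Set.mem_range_self _))]

theorem map_differential_zero_term_one (M : Matrix (Fin p) ι A) :
    (term A (ι → A) p 1).map (differential (rowForm M) 0) =
      Submodule.map (LinearMap.toSpanSingleton A _
        ((1 : ExteriorAlgebra A (ι → A)) ⊗ₜ (1 : MvPolynomial (Fin p) A)))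
        (Ideal.span (maximalMinors M)) := by
  classical
  rw [term_one_eq_span, Ideal.span, Submodule.map_span, Submodule.map_span, maximalMinors,
    ← Set.range_comp, ← Set.range_comp]
  refine congrArg _ (congrArg _ (funext fun c => ?_))
  have hminor : (Matrix.of fun i j => rowForm M i (Pi.single (c j) 1)) = M.submatrix id c :=
    Matrix.ext fun i j => rowForm_single_one M i (c j)
  rw [Function.comp_apply, differential_zero]
  refine (congrArg (· ⊗ₜ[A] 1) (prod_exteriorContraction_ιMulti _ _)).trans ?_
  rw [hminor]
  rfl

theorem toSpanSingleton_one_tmul_one_injective (F : Type*) [AddCommGroup F] [Module A F] :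
    Function.Injective (LinearMap.toSpanSingleton A (EagonNorthcott A F p) (1 ⊗ₜ 1)) := by
  refine Function.LeftInverse.injective (g := TensorProduct.lid A A ∘ₗ TensorProduct.map
    (ExteriorAlgebra.algebraMapInv (R := A) (M := F)).toLinearMap
    (aeval (0 : Fin p → A)).toLinearMap) fun a => ?_
  simp

end EagonNorthcott

open EagonNorthcott in
theorem mem_span_maximalMinors_of_forall_mul_mem {A : Type u} {ι : Type v} [CommRing A] [IsDomain A]
    [IsNoetherianRing A] [Algebra ℚ A] [Fintype ι] {p N : ℕ} (M : Matrix (Fin p) ι A)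
    (hN : Fintype.card ι + 1 = p + N)
    (hdepth : ∀ P : Ideal A, P.IsPrime → Ideal.span (maximalMinors M) ≤ P →
      ∃ gs : List A, (∀ g ∈ gs, g ∈ P) ∧ RingTheory.Sequence.IsWeaklyRegular A gs ∧ N ≤ gs.length)
    (P : Ideal A) {gs : List A} (hmem : ∀ g ∈ gs, g ∈ P)
    (hgs : RingTheory.Sequence.IsWeaklyRegular A gs) (hlen : N < gs.length) {w : A}
    (hw : ∀ a ∈ P, a * w ∈ Ideal.span (maximalMinors M)) :
    w ∈ Ideal.span (maximalMinors M) := by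
  have H := isTorsionComplex M hN
  let e := LinearMap.toSpanSingleton A (EagonNorthcott A (ι → A) p) (1 ⊗ₜ 1)
  have hrange : ∀ b, (⟨e b, mem_term_zero _⟩ : term A (ι → A) p 0) ∈ LinearMap.range (H.d 0) ↔
      b ∈ Ideal.span (maximalMinors M) := fun b => by
    have hmap := map_differential_zero_term_one M
    constructor
    · rintro ⟨y, hy⟩
      obtain ⟨b', hb', heq⟩ := hmap.le ⟨y, y.2, congrArg Subtype.val hy⟩
      exact toSpanSingleton_one_tmul_one_injective (ι → A) heq ▸ hb'
    · intro hb
      obtain ⟨y, hy, hye⟩ := hmap.ge (Submodule.mem_map_of_mem hb)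
      exact ⟨⟨y, hy⟩, Subtype.ext hye⟩
  rw [← hrange]
  have hres := H.hasRegularResolution hdepth hgs N 0 (zero_add N)
  refine (Submodule.Quotient.mk_eq_zero _).1 <|
    hres.eq_zero_of_smul_eq_zero P hlen hmem fun a ha => ?_
  refine (Submodule.Quotient.mk_eq_zero _).2 ?_
  convert (hrange (a * w)).2 (hw a ha) using 1
  exact Subtype.ext (map_smul e a w).symm

end MaximalMinors

section Saturation

universe u v w

theorem det_submatrix_mem_minorsIdeal {A ι κ τ : Type*} [CommRing A] [Fintype τ] [DecidableEq τ]
    (M : Matrix ι κ A) (r : τ → ι) (c : τ → κ) :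
    (M.submatrix r c).det ∈ minorsIdeal (Fintype.card τ) M := by
  by_cases hr : Function.Injective r
  · by_cases hc : Function.Injective c
    · have e := (Fintype.equivFin τ).symm
      exact Ideal.subset_span ⟨r ∘ e, c ∘ e, hr.comp e.injective, hc.comp e.injective,
        (Matrix.det_submatrix_equiv_self e (M.submatrix r c)).symm⟩
    · obtain ⟨i, j, hij, hne⟩ := Function.not_injective_iff.1 hc
      rw [Matrix.det_zero_of_column_eq hne fun k => by simp [hij]]
      exact zero_mem _
  · obtain ⟨i, j, hij, hne⟩ := Function.not_injective_iff.1 hr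
    rw [Matrix.det_zero_of_row_eq hne (funext fun k => by simp [hij])]
    exact zero_mem _

theorem minorsIdeal_eq_span_maximalMinors {A ι κ : Type*} [CommRing A] {p : ℕ} (e : Fin p ≃ ι)
    (M : Matrix ι κ A) : minorsIdeal p M = Ideal.span (maximalMinors (M.submatrix e id)) := by
  apply le_antisymm <;> refine Ideal.span_le.2 ?_
  · rintro _ ⟨r, c, hr, -, rfl⟩
    let τ : Equiv.Perm (Fin p) := Equiv.ofBijective (e.symm ∘ r)
      (Finite.injective_iff_bijective.1 (e.symm.injective.comp hr))
    have hτ : M.submatrix r c = (M.submatrix e c).submatrix τ id := Matrix.ext fun i j => by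
      simp [τ]
    rw [hτ, Matrix.det_permute]
    exact Ideal.mul_mem_left _ _ (Ideal.subset_span ⟨c, rfl⟩)
  · rintro _ ⟨c, rfl⟩
    simpa using det_submatrix_mem_minorsIdeal M e c

theorem exists_isPrime_forall_mul_mem_of_pow_mul_mem {A : Type*} [CommRing A] [IsNoetherianRing A]
    {I : Ideal A} {g x : A} {r : ℕ} (hg : g ^ r * x ∈ I) (hx : x ∉ I) :
    ∃ P : Ideal A, P.IsPrime ∧ I ≤ P ∧ g ∈ P ∧ ∃ y ∉ I, ∀ a ∈ P, a * y ∈ I := by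
  obtain ⟨P, hP, hle⟩ := exists_le_isAssociatedPrime_of_isNoetherianRing A (Ideal.Quotient.mk I x)
    (by rwa [Ne, Ideal.Quotient.eq_zero_iff_mem])
  rw [isAssociatedPrime_iff] at hP
  obtain ⟨hprime, z, rfl⟩ := hP
  obtain ⟨y, rfl⟩ := Ideal.Quotient.mk_surjective z
  have hmem : ∀ a u : A, a ∈ (⊥ : Submodule A (A ⧸ I)).colon {Ideal.Quotient.mk I u} ↔
      a * u ∈ I := fun a u => by
    rw [Submodule.mem_colon_singleton, Submodule.mem_bot, ← Ideal.Quotient.eq_zero_iff_mem, map_mul]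
    rfl
  refine ⟨_, hprime, fun a ha => (hmem a y).2 (I.mul_mem_right y ha),
    hprime.mem_of_pow_mem r (hle ((hmem _ x).2 hg)), y, fun hy => hprime.ne_top ?_,
    fun a ha => (hmem a y).1 ha⟩
  rw [Ideal.eq_top_iff_one, hmem, one_mul]
  exact hy

theorem exists_isWeaklyRegular_of_trdeg_add_le {k : Type u} {σ : Type v} [Field k] [Infinite k]
    [Fintype σ] (P : Ideal (MvPolynomial σ k)) [P.IsPrime] {N t j : ℕ}
    (hσ : Fintype.card σ = N + t) (hP : Algebra.trdeg k (MvPolynomial σ k ⧸ P) + j ≤ t) :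
    ∃ gs : List (MvPolynomial σ k), (∀ g ∈ gs, g ∈ P) ∧
      RingTheory.Sequence.IsWeaklyRegular (MvPolynomial σ k) gs ∧ N + j ≤ gs.length := by
  obtain ⟨gs, hmem, hreg, hcard⟩ := exists_isWeaklyRegular_mem_prime P
  refine ⟨gs, hmem, hreg, ?_⟩
  have hle : ((Fintype.card σ + j : ℕ) : Cardinal.{max v u}) ≤ (gs.length + t : ℕ) := by
    push_cast
    calc (Fintype.card σ + j : Cardinal)
        ≤ gs.length + (Algebra.trdeg k (MvPolynomial σ k ⧸ P) + j) := by
          rw [← add_assoc]; gcongr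
      _ ≤ gs.length + t := by gcongr
  have hle' : Fintype.card σ + j ≤ gs.length + t := Nat.cast_le.1 hle
  lia

theorem mem_span_maximalMinors_of_pow_mul_mem {k : Type u} {σ : Type v} {ι : Type w} [Field k]
    [CharZero k] [Fintype σ] [Fintype ι] {p N t r : ℕ} {M : Matrix (Fin p) ι (MvPolynomial σ k)}
    (hι : Fintype.card ι + 1 = p + N) (hσ : Fintype.card σ = N + t)
    (htrdeg : ∀ P : Ideal (MvPolynomial σ k), P.IsPrime → Ideal.span (maximalMinors M) ≤ P →
      Algebra.trdeg k (MvPolynomial σ k ⧸ P) ≤ t)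
    {g : MvPolynomial σ k}
    (htrdeg_g : ∀ P : Ideal (MvPolynomial σ k), P.IsPrime → Ideal.span (maximalMinors M) ≤ P →
      g ∈ P → Algebra.trdeg k (MvPolynomial σ k ⧸ P) + 1 ≤ t)
    {x : MvPolynomial σ k} (hx : g ^ r * x ∈ Ideal.span (maximalMinors M)) :
    x ∈ Ideal.span (maximalMinors M) := by
  by_contra hxM
  obtain ⟨P, hP, hle, hgP, y, hy, hPy⟩ := exists_isPrime_forall_mul_mem_of_pow_mul_mem hx hxM
  obtain ⟨gs, hmem, hreg, hlen⟩ :=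
    exists_isWeaklyRegular_of_trdeg_add_le (j := 1) P hσ (by simpa using htrdeg_g P hP hle hgP)
  refine hy (mem_span_maximalMinors_of_forall_mul_mem M hι (fun P' _ hle' => ?_) P hmem hreg
    hlen hPy)
  exact exists_isWeaklyRegular_of_trdeg_add_le (j := 0) P' hσ (by simpa using htrdeg P' ‹_› hle')

end Saturation

section Rank

open scoped Matrix

variable {K ι κ : Type*} [Field K]

theorem exists_linearIndependent_row_comp [Finite ι] [Fintype κ] (M : Matrix ι κ K) :
    ∃ a : Fin M.rank → ι, Function.Injective a ∧ LinearIndependent K (M.row ∘ a) := by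
  obtain ⟨τ, a, ha, hspan, hli⟩ := exists_linearIndependent' K M.row
  have := Finite.of_injective a ha
  have := Fintype.ofFinite τ
  have hcard : Fintype.card τ = M.rank := by
    rw [M.rank_eq_finrank_span_row, linearIndependent_iff_card_eq_finrank_span.1 hli, Set.finrank,
      hspan]
  let e := (Fintype.equivFinOfCardEq hcard).symm
  exact ⟨a ∘ e, ha.comp e.injective, hli.comp e e.injective⟩

theorem linearIndependent_row_iff_exists_det_ne_zero [Fintype ι] [DecidableEq ι]
    [Finite κ] (M : Matrix ι κ K) :
    LinearIndependent K M.row ↔ ∃ c : ι → κ, (M.submatrix id c).det ≠ 0 := by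
  have := Fintype.ofFinite κ
  constructor
  · intro hM
    obtain ⟨c, -, hc⟩ := exists_linearIndependent_row_comp M.transpose
    have hrank : M.transpose.rank = Fintype.card ι := by rw [M.rank_transpose, hM.rank_matrix]
    let e : ι ≃ Fin M.transpose.rank := Fintype.equivFinOfCardEq hrank.symm
    refine ⟨c ∘ e, ?_⟩
    have hcol : LinearIndependent K (M.submatrix id (c ∘ e)).col := hc.comp e e.injective
    rw [Matrix.linearIndependent_cols_iff_isUnit, Matrix.isUnit_iff_isUnit_det] at hcol
    exact hcol.ne_zero
  · rintro ⟨c, hc⟩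
    have hrow : LinearIndependent K (M.submatrix id c).row := by
      rw [Matrix.linearIndependent_rows_iff_isUnit, Matrix.isUnit_iff_isUnit_det]
      exact hc.isUnit
    exact hrow.of_comp (LinearMap.funLeft K K c)

theorem rank_le_iff_forall_det_eq_zero [Finite ι] [Fintype κ] (M : Matrix ι κ K) (r : ℕ) :
    M.rank ≤ r ↔
      ∀ (a : Fin (r + 1) → ι) (c : Fin (r + 1) → κ), (M.submatrix a c).det = 0 := by
  constructor
  · intro hM a c
    by_contra hdet
    have := (Matrix.rank_of_det_ne_zero hdet).symm.trans_le (M.rank_submatrix_le a c)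
    rw [Fintype.card_fin] at this
    lia
  · intro hM
    by_contra! hr
    obtain ⟨a, -, ha⟩ := exists_linearIndependent_row_comp M
    have hli : LinearIndependent K (M.submatrix (a ∘ Fin.castLE hr) id).row :=
      ha.comp _ (Fin.castLE_injective hr)
    obtain ⟨c, hc⟩ := (linearIndependent_row_iff_exists_det_ne_zero _).1 hli
    exact hc (hM _ c)

theorem mem_of_linearIndependent_row_of_vecMul_mem [Fintype ι] [Finite κ]
    {L : Subfield K} {M : Matrix ι κ K}
    (hli : LinearIndependent K M.row) (hM : ∀ i j, M i j ∈ L) {l : ι → K}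
    (hl : ∀ j, (l ᵥ* M) j ∈ L) (i : ι) : l i ∈ L := by
  classical
  obtain ⟨c, hc⟩ := (linearIndependent_row_iff_exists_det_ne_zero M).1 hli
  let N : Matrix ι ι L := .of fun i i' => ⟨M i (c i'), hM i _⟩
  have hN : L.subtype.mapMatrix N = M.submatrix id c := rfl
  have hdet : IsUnit N.det := by
    refine Ne.isUnit fun h => hc ?_
    rw [← hN, ← RingHom.map_det, h, map_zero]
  let w : ι → L := fun i' => ⟨(l ᵥ* M) (c i'), hl _⟩
  have hw : L.subtype ∘ w = l ᵥ* L.subtype.mapMatrix N := rfl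
  have hl' : l i = (w ᵥ* N⁻¹) i := by
    rw [← Subfield.subtype_apply, RingHom.map_vecMul, hw, Matrix.vecMul_vecMul,
      RingHom.mapMatrix_apply, ← Matrix.map_mul, Matrix.mul_nonsing_inv _ hdet]
    simp
  rw [hl']
  exact ((w ᵥ* N⁻¹) i).2

theorem exists_card_add_rank_eq_and_mem_of_vecMul_eq_zero [Fintype ι] [Fintype κ] {M : Matrix ι κ K}
    {l : ι → K} (hl : l ᵥ* M = 0) :
    ∃ T : Finset ι, T.card + M.rank = Fintype.card ι ∧
      ∀ L : Subfield K, (∀ i j, M i j ∈ L) → (∀ i ∈ T, l i ∈ L) → ∀ i, l i ∈ L := by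
  classical
  obtain ⟨a, ha, hli⟩ := exists_linearIndependent_row_comp M
  refine ⟨(Finset.univ.image a)ᶜ, ?_, fun L hM hT i => ?_⟩
  · have := Finset.card_compl_add_card (Finset.univ.image a)
    rwa [Finset.card_image_of_injective _ ha, Finset.card_fin] at this
  by_cases hi : i ∈ Finset.univ.image a
  swap
  · exact hT i (Finset.mem_compl.2 hi)
  obtain ⟨i, -, rfl⟩ := Finset.mem_image.1 hi
  refine mem_of_linearIndependent_row_of_vecMul_mem (M := M.submatrix a id) (l := l ∘ a) hli
    (fun i j => hM _ j) (fun j => ?_) i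
  have hsum : ((l ∘ a) ᵥ* M.submatrix a id) j + ∑ i ∈ (Finset.univ.image a)ᶜ, l i * M i j = 0 := by
    have hj : ∑ i, l i * M i j = 0 := congrFun hl j
    rw [← Finset.sum_add_sum_compl (Finset.univ.image a), Finset.sum_image ha.injOn] at hj
    exact hj
  rw [eq_neg_of_add_eq_zero_left hsum]
  exact neg_mem (sum_mem fun i hi => mul_mem (hT i hi) (hM i j))

end Rank

section GradedIntegrality

theorem span_adjoin_eq_top_of_sup_span_eq_top {k A : Type*} [CommRing k] [CommRing A] [Algebra k A]
    (𝒜 : ℕ → Submodule k A) [GradedAlgebra 𝒜] {s B : Set A}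
    (hs : ∀ x ∈ s, SetLike.IsHomogeneousElem 𝒜 x)
    (hB : ∀ b ∈ B, ∃ e ≠ 0, b ∈ 𝒜 e)
    (hsup : Submodule.span k s ⊔ (Ideal.span B).restrictScalars k = ⊤) :
    Submodule.span (Algebra.adjoin k B) s = ⊤ := by
  let W : Submodule k A := (Submodule.span (Algebra.adjoin k B) s).restrictScalars k
  have hW : ∀ e, W.comap (GradedAlgebra.proj 𝒜 e) = ⊤ := by
    intro e
    induction e using Nat.strong_induction_on with
    | _ e ih =>
      rw [eq_top_iff, ← hsup, sup_le_iff, Submodule.span_le]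
      refine ⟨fun x hx => ?_, fun v hv => ?_⟩
      · obtain ⟨i, hi⟩ := hs x hx
        change (DirectSum.decompose 𝒜 x e : A) ∈ W
        obtain rfl | hne := eq_or_ne i e
        · rw [DirectSum.decompose_of_mem_same 𝒜 hi]
          exact Submodule.subset_span hx
        · rw [DirectSum.decompose_of_mem_ne 𝒜 hi hne]
          exact zero_mem _
      · rw [Submodule.restrictScalars_mem] at hv
        induction hv using Submodule.closure_induction with
        | zero => exact zero_mem _
        | add x y _ _ hx hy => exact add_mem hx hy
        | smul_mem r b hb =>
          obtain ⟨i, hi, hbi⟩ := hB b hb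
          change (DirectSum.decompose 𝒜 (r * b) e : A) ∈ W
          rw [DirectSum.coe_decompose_mul_of_right_mem 𝒜 e hbi]
          split_ifs with hie
          · have hr : (DirectSum.decompose 𝒜 r (e - i) : A) ∈ W :=
              (ih (e - i) (by lia)).ge (Submodule.mem_top (x := r))
            rw [mul_comm]
            exact Submodule.smul_mem _ (⟨b, Algebra.subset_adjoin hb⟩ : Algebra.adjoin k B) hr
          · exact zero_mem _
  classical
  refine eq_top_iff.2 fun y _ => ?_
  rw [← DirectSum.sum_support_decompose 𝒜 y]
  exact sum_mem fun e _ => (hW e).ge (Submodule.mem_top (x := y))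

theorem isIntegral_adjoin_of_X_pow_mem_span {k σ : Type*} [CommRing k] [Finite σ]
    {B : Set (MvPolynomial σ k)} (hB : ∀ b ∈ B, ∃ e ≠ 0, b.IsHomogeneous e) {N : ℕ}
    (hN : ∀ j, X j ^ N ∈ Ideal.span B) :
    Algebra.IsIntegral (Algebra.adjoin k B) (MvPolynomial σ k) := by
  let s : Set (MvPolynomial σ k) :=
    Set.range fun u : σ → Fin N => monomial (Finsupp.equivFunOnFinite.symm fun j => (u j : ℕ)) 1
  have hs : Submodule.span (Algebra.adjoin k B) s = ⊤ := by
    let _ : GradedAlgebra (homogeneousSubmodule σ k) := gradedAlgebra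
    refine span_adjoin_eq_top_of_sup_span_eq_top (homogeneousSubmodule σ k) ?_ hB ?_
    · rintro _ ⟨u, rfl⟩
      exact ⟨_, isHomogeneous_monomial _ rfl⟩
    · rw [eq_top_iff, ← (basisMonomials σ k).span_eq, Submodule.span_le]
      rintro _ ⟨u, rfl⟩
      rw [coe_basisMonomials]
      by_cases hu : ∀ j, u j < N
      · refine Submodule.mem_sup_left (Submodule.subset_span ⟨fun j => ⟨u j, hu j⟩, ?_⟩)
        exact congrArg (monomial · 1) (Finsupp.ext fun _ => rfl)
      · push Not at hu
        obtain ⟨j, hj⟩ := hu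
        refine Submodule.mem_sup_right ?_
        refine Ideal.mem_of_dvd _ ?_ (hN j)
        rw [X_pow_eq_monomial, monomial_dvd_monomial]
        exact ⟨Or.inr (Finsupp.single_le_iff.2 hj), dvd_rfl⟩
  have : Module.Finite (Algebra.adjoin k B) (MvPolynomial σ k) :=
    ⟨⟨(Set.finite_range _).toFinset, by rw [Set.Finite.coe_toFinset]; exact hs⟩⟩
  infer_instance

theorem exists_forall_X_pow_mem {k σ : Type*} [Field k] [IsAlgClosed k] [Finite σ]
    (J : Ideal (MvPolynomial σ k)) (hJ : ∀ p : σ → k, p ≠ 0 → ∃ q ∈ J, aeval p q ≠ 0) :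
    ∃ N, ∀ j, X j ^ N ∈ J := by
  have hrad : ∀ j, X j ∈ J.radical := by
    intro j
    rw [← vanishingIdeal_zeroLocus_eq_radical (K := k), mem_vanishingIdeal_iff]
    intro p hp
    by_contra hpj
    obtain ⟨q, hq, hq0⟩ := hJ p (by rintro rfl; simp at hpj)
    exact hq0 (hp q hq)
  choose N hN using hrad
  have := Fintype.ofFinite σ
  exact ⟨∑ j, N j, fun j => J.pow_mem_of_pow_mem (hN j) <|
    Finset.single_le_sum (fun _ _ => Nat.zero_le _) (Finset.mem_univ j)⟩

end GradedIntegrality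

section NormalCrossing

open scoped Matrix

variable {k σ ι : Type*}

section CommRing

variable [CommRing k] {K : Type*} [CommRing K] [Algebra k K]

/-- The Jacobian matrix of a family of polynomials. -/
def jacobian (f : ι → MvPolynomial σ k) : Matrix ι σ (MvPolynomial σ k) :=
  .of fun i j => pderiv j (f i)

/-- The Jacobian matrix evaluated at a point with coordinates in a `k`-algebra `K`. -/
def jacobianAt (f : ι → MvPolynomial σ k) (x : σ → K) : Matrix ι σ K :=
  (jacobian f).map (aeval x)

/-- The `r × r` minors of the Jacobian matrix, with repetitions of rows and columns allowed. -/
def jacobianMinors (f : ι → MvPolynomial σ k) (r : ℕ) : Set (MvPolynomial σ k) :=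
  {b | ∃ (a : Fin r → ι) (c : Fin r → σ), b = ((jacobian f).submatrix a c).det}

variable {f : ι → MvPolynomial σ k} {d : ι → ℕ} (hf : ∀ i, (f i).IsHomogeneous (d i))
include hf

theorem jacobianAt_mulVec [Fintype σ] (x : σ → K) (i : ι) :
    (jacobianAt f x *ᵥ x) i = d i * aeval x (f i) := by
  have heuler := congrArg (aeval x) (hf i).sum_X_mul_pderiv
  simp only [map_sum, map_mul, aeval_X, nsmul_eq_mul, map_natCast] at heuler
  rw [← heuler]
  exact Finset.sum_congr rfl fun j _ => mul_comm _ _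

theorem exists_isHomogeneous_of_mem_jacobianMinors {r : ℕ} {b : MvPolynomial σ k}
    (hb : b ∈ jacobianMinors f r) : ∃ e, b.IsHomogeneous e := by
  obtain ⟨a, c, rfl⟩ := hb
  refine ⟨∑ i, (d (a i) - 1), ?_⟩
  rw [Matrix.det_apply]
  refine IsHomogeneous.sum _ _ _ fun τ _ => ?_
  have hτ : (∏ i, (jacobian f).submatrix a c (τ i) i).IsHomogeneous (∑ i, (d (a i) - 1)) := by
    rw [← Equiv.sum_comp τ fun i => d (a i) - 1]
    exact IsHomogeneous.prod _ _ _ fun i _ => (hf _).pderiv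
  exact (homogeneousSubmodule σ k _).smul_of_tower_mem _ hτ

end CommRing

theorem rank_jacobianAt_le_iff [CommRing k] [Finite ι] [Fintype σ] {K : Type*} [Field K]
    [Algebra k K] (f : ι → MvPolynomial σ k) (x : σ → K) (r : ℕ) :
    (jacobianAt f x).rank ≤ r ↔ ∀ b ∈ jacobianMinors f (r + 1), aeval x b = 0 := by
  have hdet : ∀ (a : Fin (r + 1) → ι) (c : Fin (r + 1) → σ),
      aeval x ((jacobian f).submatrix a c).det = ((jacobianAt f x).submatrix a c).det :=
    fun a c => AlgHom.map_det _ _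
  rw [rank_le_iff_forall_det_eq_zero]
  constructor
  · rintro h _ ⟨a, c, rfl⟩
    rw [hdet, h]
  · intro h a c
    rw [← hdet, h _ ⟨a, c, rfl⟩]

variable [Field k] [Fintype σ]

/-- Normal crossings away from the origin: at every nonzero point, at most `card σ` of the
polynomials vanishing there have linearly independent gradients. -/
def NormalCrossing (f : ι → MvPolynomial σ k) : Prop :=
  ∀ p : σ → k, p ≠ 0 → ∀ I : Finset ι, I.card ≤ Fintype.card σ → (∀ i ∈ I, aeval p (f i) = 0) →
    LinearIndepOn k (jacobianAt f p).row I

namespace NormalCrossing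

variable {f : ι → MvPolynomial σ k} {d : ι → ℕ} (h : NormalCrossing f)
  (hf : ∀ i, (f i).IsHomogeneous (d i))
include h hf

theorem card_lt {p : σ → k} (hp : p ≠ 0) {I : Finset ι} (hI : ∀ i ∈ I, aeval p (f i) = 0) :
    I.card < Fintype.card σ := by
  classical
  by_contra! hcard
  obtain ⟨T, hTI, hT⟩ := Finset.exists_subset_card_eq hcard
  have hli := h p hp T hT.le fun i hi => hI i (hTI hi)
  let e : σ ≃ T := Fintype.equivOfCardEq (by rw [Fintype.card_coe, hT])
  have hrow : LinearIndependent k ((jacobianAt f p).submatrix (fun j => (e j : ι)) id).row :=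
    hli.comp e e.injective
  rw [Matrix.linearIndependent_rows_iff_isUnit, Matrix.isUnit_iff_isUnit_det] at hrow
  refine hp (Matrix.eq_zero_of_mulVec_eq_zero hrow.ne_zero (funext fun j => ?_))
  have heuler := jacobianAt_mulVec hf p (e j)
  rwa [hI _ (hTI (e j).2), mul_zero] at heuler

variable [CharZero k] (hd : ∀ i, d i ≠ 0)
include hd

theorem eq_zero_of_vecMul_jacobianAt_eq_zero [Fintype ι] {p : σ → k} (hp : p ≠ 0) {l : ι → k}
    (hl : l ᵥ* jacobianAt f p = 0) {i₀ : ι} (hl₀ : ∀ i ≠ i₀, l i * aeval p (f i) = 0) : l = 0 := by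
  classical
  have heuler : ∑ i, l i * (d i * aeval p (f i)) = 0 := by
    simp only [← jacobianAt_mulVec hf p]
    change l ⬝ᵥ (jacobianAt f p *ᵥ p) = 0
    rw [Matrix.dotProduct_mulVec, hl, zero_dotProduct]
  have hlf : ∀ i, l i * aeval p (f i) = 0 := by
    intro i
    obtain rfl | hi := eq_or_ne i i₀
    · rw [Finset.sum_eq_single i (fun j _ hj => by rw [mul_left_comm, hl₀ j hj, mul_zero])
        (fun hi => absurd (Finset.mem_univ i) hi), mul_left_comm] at heuler
      exact (mul_eq_zero.1 heuler).resolve_left (Nat.cast_ne_zero.2 (hd i))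
    · exact hl₀ i hi
  let I : Finset ι := {i | aeval p (f i) = 0}
  have hI : ∀ i ∈ I, aeval p (f i) = 0 := fun i hi => (Finset.mem_filter.1 hi).2
  have hlI : ∀ i ∉ I, l i = 0 := fun i hi =>
    (mul_eq_zero.1 (hlf i)).resolve_right fun h0 => hi (Finset.mem_filter.2 ⟨Finset.mem_univ i, h0⟩)
  have hsum : ∑ i ∈ I, l i • (jacobianAt f p).row i = 0 := by
    rw [Finset.sum_subset (Finset.subset_univ I) fun i _ hi => by rw [hlI i hi, zero_smul],
      ← hl, Matrix.vecMul_eq_sum]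
    rfl
  have hli := linearIndepOn_finset_iff.1 (h p hp I (h.card_lt hf hp hI).le hI) l hsum
  exact funext fun i => by_cases (hli i) (hlI i)

/-- Where `r` of the `f i` vanish and the Jacobian has rank at most `r`, Euler's identity makes all
the `f i` vanish. -/
theorem card_lt_of_rank_le [Fintype ι] {p : σ → k} (hp : p ≠ 0) {F : Finset ι}
    (hF : F.card ≤ Fintype.card σ) (hF0 : ∀ i ∈ F, aeval p (f i) = 0)
    (hrank : (jacobianAt f p).rank ≤ F.card) : Fintype.card ι < Fintype.card σ := by
  have hspan : Submodule.span k (Set.range fun i : F => (jacobianAt f p).row i) =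
      Submodule.span k (Set.range (jacobianAt f p).row) := by
    refine Submodule.eq_of_le_of_finrank_le
      (Submodule.span_mono (Set.range_comp_subset_range Subtype.val _)) ?_
    have hcard := (finrank_span_eq_card (h p hp F hF hF0)).trans (Fintype.card_coe F)
    rw [← Matrix.rank_eq_finrank_span_row]
    exact hrank.trans hcard.ge
  have hker : Submodule.span k (Set.range (jacobianAt f p).row) ≤
      LinearMap.ker (dotProductBilin k k |>.flip p) := by
    rw [← hspan, Submodule.span_le]
    rintro _ ⟨i, rfl⟩
    have heuler := jacobianAt_mulVec hf p i
    rwa [hF0 i i.2, mul_zero] at heuler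
  refine h.card_lt hf hp (I := Finset.univ) fun i _ => ?_
  have hi : (jacobianAt f p *ᵥ p) i = 0 := hker (Submodule.subset_span ⟨i, rfl⟩)
  rw [jacobianAt_mulVec hf] at hi
  exact (mul_eq_zero.1 hi).resolve_left (Nat.cast_ne_zero.2 (hd i))

theorem exists_X_pow_mem_span_jacobianMinors [IsAlgClosed k] [Fintype ι]
    (hσ : Fintype.card σ ≤ Fintype.card ι) {F : Finset ι} (hF : F.card ≤ Fintype.card σ) :
    ∃ N, ∀ j, X j ^ N ∈ Ideal.span (jacobianMinors f (F.card + 1) ∪ f '' F) := by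
  refine exists_forall_X_pow_mem _ fun p hp => ?_
  by_contra! hvan
  have hrank := (rank_jacobianAt_le_iff f p F.card).2 fun b hb =>
    hvan b (Ideal.subset_span (Or.inl hb))
  have hF0 : ∀ i ∈ F, aeval p (f i) = 0 := fun i hi =>
    hvan _ (Ideal.subset_span (Or.inr ⟨i, hi, rfl⟩))
  exact (h.card_lt_of_rank_le hf hd hp hF hF0 hrank).not_ge hσ

end NormalCrossing

end NormalCrossing

section TranscendenceDegree

universe u

open Cardinal

theorem aeval_mem_of_forall_mem {σ k A : Type*} [CommRing k] [CommRing A] [Algebra k A]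
    {S : Subalgebra k A} {x : σ → A} (hx : ∀ j, x j ∈ S) (q : MvPolynomial σ k) : aeval x q ∈ S :=
  Algebra.adjoin_le (Set.range_subset_iff.2 hx) ((aeval_range x).le ⟨q, rfl⟩)

theorem isIntegrallyClosedIn_algebraicClosure (F E : Type*) [Field F] [Field E] [Algebra F E] :
    IsIntegrallyClosedIn (algebraicClosure F E) E :=
  .of_isIntegralClosure F

theorem trdeg_le_mk_of_forall_algebraMap_mem {k : Type*} {A K : Type u} [Field k] [CommRing A]
    [Algebra k A] [Field K] [Algebra k K] [Algebra A K] [IsScalarTower k A K] [IsFractionRing A K]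
    (Y : Set K)
    (hY : ∀ L : IntermediateField k K, IsIntegrallyClosedIn L K → Y ⊆ L →
      ∀ a, algebraMap A K a ∈ L) :
    Algebra.trdeg k A ≤ #Y := by
  let L := (algebraicClosure (IntermediateField.adjoin k Y) K).restrictScalars k
  have hL : IsIntegrallyClosedIn L K := isIntegrallyClosedIn_algebraicClosure _ K
  have hYL : Y ⊆ L := fun y hy => (algebraicClosure (IntermediateField.adjoin k Y) K).algebraMap_mem
    ⟨y, IntermediateField.subset_adjoin k Y hy⟩
  have hLtop : ∀ z, z ∈ L := by
    intro z
    obtain ⟨a, b, -, rfl⟩ := IsFractionRing.div_surjective (A := A) z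
    exact L.div_mem (hY L hL hYL a) (hY L hL hYL b)
  have : Algebra.IsAlgebraic (IntermediateField.adjoin k Y) K :=
    ⟨fun z => mem_algebraicClosure_iff.1 (hLtop z)⟩
  have : Algebra.IsAlgebraic (Algebra.adjoin k Y) K :=
    IntermediateField.isAlgebraic_adjoin_iff_top.1 this
  exact (trdeg_le_of_injective (IsScalarTower.toAlgHom k A K)
    (IsFractionRing.injective A K)).trans (Algebra.IsAlgebraic.trdeg_le_cardinalMk k Y)

end TranscendenceDegree

namespace NormalCrossing

open scoped Matrix

variable {k σ ι K : Type*} [Field k] [CharZero k] [IsAlgClosed k] [Fintype σ] [Fintype ι]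
  [Field K] [Algebra k K] {f : ι → MvPolynomial σ k} {d : ι → ℕ} {x : σ → K}
  (h : NormalCrossing f) (hf : ∀ i, (f i).IsHomogeneous (d i)) (hd : ∀ i, d i ≠ 0)
  (hσ : Fintype.card σ ≤ Fintype.card ι)
include h hf hd hσ

theorem rank_jacobianAt_pos (hx : x ≠ 0) : 0 < (jacobianAt f x).rank := by
  by_contra! hrank
  obtain ⟨N, hN⟩ := h.exists_X_pow_mem_span_jacobianMinors hf hd hσ (F := ∅) (Nat.zero_le _)
  have hker : Ideal.span (jacobianMinors f 1 ∪ f '' (∅ : Finset ι)) ≤ RingHom.ker (aeval x) := by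
    rw [Finset.coe_empty, Set.image_empty, Set.union_empty, Ideal.span_le]
    exact (rank_jacobianAt_le_iff f x 0).1 hrank
  refine hx (funext fun j => eq_zero_of_pow_eq_zero (n := N) ?_)
  rw [← aeval_X (R := k) x j, ← map_pow]
  exact hker (hN j)

theorem mem_of_forall_aeval_mem {F : Finset ι} (hF : F.card = (jacobianAt f x).rank)
    (L : IntermediateField k K) [IsIntegrallyClosedIn L K] (hL : ∀ i ∈ F, aeval x (f i) ∈ L)
    (j : σ) : x j ∈ L := by
  obtain ⟨N, hN⟩ := h.exists_X_pow_mem_span_jacobianMinors hf hd hσ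
    (hF.trans_le (Matrix.rank_le_card_width _))
  set B := jacobianMinors f (F.card + 1) ∪ f '' F
  have hminors := (rank_jacobianAt_le_iff f x F.card).1 hF.ge
  have hBhom : ∀ b ∈ B, ∃ e ≠ 0, b.IsHomogeneous e := by
    rintro b (hb | ⟨i, -, rfl⟩)
    · obtain ⟨e, he⟩ := exists_isHomogeneous_of_mem_jacobianMinors hf hb
      obtain rfl | he0 := eq_or_ne e 0
      · have hbC := totalDegree_eq_zero_iff_eq_C.1 (Nat.le_zero.1 he.totalDegree_le)
        have hb0 := hminors b hb
        rw [hbC, aeval_C, FaithfulSMul.algebraMap_eq_zero_iff] at hb0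
        rw [hbC, hb0, C_0]
        exact ⟨1, one_ne_zero, isHomogeneous_zero σ k 1⟩
      · exact ⟨e, he0, he⟩
    · exact ⟨d i, hd i, hf i⟩
  have hBL : Algebra.adjoin k B ≤ L.toSubalgebra.comap (aeval x) := by
    refine Algebra.adjoin_le ?_
    rintro b (hb | ⟨i, hi, rfl⟩)
    · rw [SetLike.mem_coe, Subalgebra.mem_comap, hminors b hb]
      exact zero_mem _
    · exact hL i hi
  have hint := (isIntegral_adjoin_of_X_pow_mem_span hBhom hN).isIntegral (X j)
  let φ : Algebra.adjoin k B →ₐ[k] L :=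
    ((aeval x).comp (Algebra.adjoin k B).val).codRestrict L.toSubalgebra fun b => hBL b.2
  have hintL : IsIntegral L (aeval x (X j)) :=
    hint.map_of_comp_eq φ.toRingHom (aeval (R := k) x).toRingHom rfl
  obtain ⟨y, hy⟩ := IsIntegralClosure.isIntegral_iff (A := L).1 hintL
  rw [aeval_X] at hy
  exact hy ▸ y.2

/-- The dimension count behind saturation: a point with Jacobian rank `r` moves in a family of
dimension `r`, or `r - 1` if some `f i` vanishes at it, and the multipliers `l` add `card ι - r`. -/
theorem exists_finset_card_add_card_le (hx : x ≠ 0) {l : ι → K} (hl : l ᵥ* jacobianAt f x = 0)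
    {E : Finset ι} (hE : E.card ≤ 1) (hE0 : ∀ i ∈ E, aeval x (f i) = 0) :
    ∃ Y : Finset K, Y.card + E.card ≤ Fintype.card ι ∧ ∀ L : IntermediateField k K,
      IsIntegrallyClosedIn L K → (Y : Set K) ⊆ L → (∀ j, x j ∈ L) ∧ ∀ i, l i ∈ L := by
  classical
  obtain ⟨F, hEF, hF⟩ := Finset.exists_superset_card_eq
    (hE.trans (h.rank_jacobianAt_pos hf hd hσ hx)) (Matrix.rank_le_card_height _)
  obtain ⟨T, hT, hmem⟩ := exists_card_add_rank_eq_and_mem_of_vecMul_eq_zero hl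
  refine ⟨(F \ E).image (fun i => aeval x (f i)) ∪ T.image l, ?_, fun L hL hYL => ?_⟩
  · have hunion := Finset.card_union_le ((F \ E).image fun i => aeval x (f i)) (T.image l)
    have hFE := Finset.card_image_le (s := F \ E) (f := fun i => aeval x (f i))
    have hTl := Finset.card_image_le (s := T) (f := l)
    have hsdiff := Finset.card_sdiff_add_card_eq_card hEF
    lia
  have hxL : ∀ j, x j ∈ L := h.mem_of_forall_aeval_mem hf hd hσ hF L fun i hi => by
    by_cases hiE : i ∈ E
    · exact (hE0 i hiE).symm ▸ zero_mem L
    · exact hYL (Finset.mem_union_left _ (Finset.mem_image_of_mem _ (by simp [hi, hiE])))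
  refine ⟨hxL, hmem L.toSubfield (fun i j => ?_) fun i hi => ?_⟩
  · exact aeval_mem_of_forall_mem (S := L.toSubalgebra) hxL _
  · exact hYL (Finset.mem_union_right _ (Finset.mem_image_of_mem l hi))

end NormalCrossing

section Multipliers

open scoped Matrix

theorem exists_vecMul_eq_of_forall_det_eq_zero {K ι κ : Type*} [Field K] [Fintype ι]
    [DecidableEq ι] [Finite κ] {M : Matrix (Option ι) κ K}
    (hM : ∀ c : Option ι → κ, (M.submatrix id c).det = 0)
    (hli : LinearIndependent K (M.submatrix some id).row) :
    ∃ l : ι → K, l ᵥ* M.submatrix some id = M.row none := by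
  have hdep : ¬ LinearIndependent K M.row := by
    rw [linearIndependent_row_iff_exists_det_ne_zero]
    rintro ⟨c, hc⟩
    exact hc (hM c)
  rw [linearIndependent_option, not_and_not_right] at hdep
  obtain ⟨l, hl⟩ := (Submodule.mem_span_range_iff_exists_fun K).1 (hdep hli)
  exact ⟨l, (Matrix.vecMul_eq_sum _ _).trans hl⟩

variable {n m : ℕ} {f : Fin m → Rp n} {d : Fin m → ℕ} {K : Type*} [Field K] [Algebra ℂ K]

theorem vecMul_map_Q1_inl {A : Type*} [CommRing A] [Algebra ℂ A] (x : Fin n → A) (l : Fin m → A)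
    {k : Fin m} (hk : (k : ℕ) ≠ 0) :
    (l ᵥ* (Q1 n m f).map (aeval x)) (Sum.inl ⟨k, hk⟩) = l k * aeval x (f k) := by
  simp [Matrix.vecMul, dotProduct, Q1, apply_ite (aeval x)]

theorem algHom_toS_eq_aeval (φ : Sp n m →ₐ[ℂ] K) (q : Rp n) :
    φ (toS n m q) = aeval (fun j => φ (X (Sum.inr j))) q :=
  (DFunLike.congr_fun (aeval_unique (φ.comp (toS n m))) q).trans <| by
    simp [toS, Function.comp_def]

theorem NormalCrossing.linearIndependent_row_map_Q1 (h : NormalCrossing f)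
    (hf : ∀ i, (f i).IsHomogeneous (d i)) (hd : ∀ i, d i ≠ 0) {x : Fin n → K} (hx : x ≠ 0) :
    LinearIndependent K ((Q1 n m f).map (aeval x)).row := by
  have hpoint : ∀ p : Fin n → ℂ, p ≠ 0 → LinearIndependent ℂ ((Q1 n m f).map (aeval p)).row := by
    intro p hp
    refine Matrix.vecMul_injective_iff.1
      ((injective_iff_map_eq_zero (Matrix.vecMulLinear _)).2 fun l hl => ?_)
    obtain _ | m := m
    · exact Subsingleton.elim _ _
    refine h.eq_zero_of_vecMul_jacobianAt_eq_zero hf hd hp (i₀ := 0)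
      (funext fun j => congrFun hl (Sum.inr j)) fun i hi => ?_
    have hi' : (i : ℕ) ≠ 0 := fun hi0 => hi (Fin.ext hi0)
    exact (vecMul_map_Q1_inl p l hi').symm.trans (congrFun hl _)
  obtain ⟨N, hN⟩ := exists_forall_X_pow_mem (Ideal.span (maximalMinors (Q1 n m f))) fun p hp => by
    obtain ⟨c, hc⟩ := (linearIndependent_row_iff_exists_det_ne_zero _).1 (hpoint p hp)
    refine ⟨_, Ideal.subset_span ⟨c, rfl⟩, ?_⟩
    rwa [AlgHom.map_det]
  rw [linearIndependent_row_iff_exists_det_ne_zero]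
  by_contra! hdet
  have hker : Ideal.span (maximalMinors (Q1 n m f)) ≤ RingHom.ker (aeval x) := by
    rw [Ideal.span_le]
    rintro _ ⟨c, rfl⟩
    exact (AlgHom.map_det _ _).trans (hdet c)
  refine hx (funext fun j => eq_zero_of_pow_eq_zero (n := N) ?_)
  rw [← aeval_X (R := ℂ) x j, ← map_pow]
  exact hker (hN j)

theorem NormalCrossing.exists_multipliers (h : NormalCrossing f)
    (hf : ∀ i, (f i).IsHomogeneous (d i)) (hd : ∀ i, d i ≠ 0) {φ : Sp n m →ₐ[ℂ] K}
    (hφ : minorsIdeal (m + 1) (Qs1 n m f) ≤ RingHom.ker φ)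
    (hx : (fun j => φ (X (Sum.inr j))) ≠ 0) :
    ∃ l : Fin m → K, l ᵥ* jacobianAt f (fun j => φ (X (Sum.inr j))) = 0 ∧
      ∀ i : Fin m, (i : ℕ) ≠ 0 → φ (X (Sum.inl i)) = l i * φ (toS n m (f i)) := by
  have hrows : ((Qs1 n m f).map φ).submatrix some id =
      (Q1 n m f).map (aeval fun j => φ (X (Sum.inr j))) :=
    Matrix.ext fun i c => algHom_toS_eq_aeval φ _
  have hdet : ∀ c, (((Qs1 n m f).map φ).submatrix id c).det = 0 := by
    intro c
    have hc := det_submatrix_mem_minorsIdeal (Qs1 n m f) id c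
    rw [Fintype.card_option, Fintype.card_fin] at hc
    exact (AlgHom.map_det φ _).symm.trans (hφ hc)
  obtain ⟨l, hl⟩ := exists_vecMul_eq_of_forall_det_eq_zero hdet
    (hrows ▸ h.linearIndependent_row_map_Q1 hf hd hx)
  rw [hrows] at hl
  refine ⟨l, funext fun j => ?_, fun i hi => ?_⟩
  · exact (congrFun hl (Sum.inr j)).trans (map_zero φ)
  · rw [algHom_toS_eq_aeval]
    exact (congrFun hl (Sum.inl ⟨i, hi⟩)).symm.trans (vecMul_map_Q1_inl _ l hi)

end Multipliers

section DeterminantalSaturation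

open Cardinal

variable {n m : ℕ} {f : Fin m → Rp n} {d : Fin m → ℕ}

namespace NormalCrossing

variable (h : NormalCrossing f) (hf : ∀ i, (f i).IsHomogeneous (d i)) (hd : ∀ i, d i ≠ 0)
  (hnm : n ≤ m)
include h hf hd hnm

theorem exists_finset_generators {K : Type*} [Field K] [Algebra ℂ K] {φ : Sp n m →ₐ[ℂ] K}
    (hφ : minorsIdeal (m + 1) (Qs1 n m f) ≤ RingHom.ker φ) {E : Finset (Fin m)} (hE : E.card ≤ 1)
    (hE0 : ∀ i ∈ E, φ (toS n m (f i)) = 0) :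
    ∃ Y : Finset K, Y.card + E.card ≤ m + 1 ∧ ∀ L : IntermediateField ℂ K,
      IsIntegrallyClosedIn L K → (Y : Set K) ⊆ L → ∀ v, φ (X v) ∈ L := by
  classical
  by_cases hx : (fun j => φ (X (Sum.inr j))) = 0
  · refine ⟨Finset.univ.image fun i => φ (X (Sum.inl i)), ?_, fun L _ hL v => ?_⟩
    · have hcard := Finset.card_image_le (s := Finset.univ) (f := fun i => φ (X (Sum.inl i)))
      rw [Finset.card_fin] at hcard
      exact add_le_add hcard hE
    · obtain i | j := v
      · exact hL (Finset.mem_image_of_mem _ (Finset.mem_univ i))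
      · exact (congrFun hx j).symm ▸ zero_mem L
  obtain ⟨l, hl, hs⟩ := h.exists_multipliers hf hd hφ hx
  obtain ⟨Y, hY, hYL⟩ := h.exists_finset_card_add_card_le hf hd (by simpa using hnm) hx hl hE
    fun i hi => (algHom_toS_eq_aeval φ _).symm.trans (hE0 i hi)
  let s : Finset K :=
    (Finset.univ.filter fun i : Fin m => (i : ℕ) = 0).image fun i => φ (X (Sum.inl i))
  have hs1 : s.card ≤ 1 := by
    refine Finset.card_image_le.trans (Finset.card_le_one.2 fun i hi j hj => Fin.ext ?_)
    rw [(Finset.mem_filter.1 hi).2, (Finset.mem_filter.1 hj).2]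
  refine ⟨Y ∪ s, ?_, fun L hL hYsL v => ?_⟩
  · have hunion := Finset.card_union_le Y s
    rw [Fintype.card_fin] at hY
    lia
  rw [Finset.coe_union, Set.union_subset_iff] at hYsL
  obtain ⟨hxL, hlL⟩ := hYL L hL hYsL.1
  obtain i | j := v
  · by_cases hi : (i : ℕ) = 0
    · exact hYsL.2 (Finset.mem_image_of_mem _ (by simpa using hi))
    · rw [hs i hi, algHom_toS_eq_aeval]
      exact mul_mem (hlL i) (aeval_mem_of_forall_mem (S := L.toSubalgebra) hxL _)
  · exact hxL j

theorem trdeg_quotient_add_card_le {P : Ideal (Sp n m)} [P.IsPrime]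
    (hP : minorsIdeal (m + 1) (Qs1 n m f) ≤ P) {E : Finset (Fin m)} (hE : E.card ≤ 1)
    (hEP : ∀ i ∈ E, toS n m (f i) ∈ P) :
    Algebra.trdeg ℂ (Sp n m ⧸ P) + E.card ≤ (m + 1 : ℕ) := by
  let K := FractionRing (Sp n m ⧸ P)
  let φ : Sp n m →ₐ[ℂ] K := (IsScalarTower.toAlgHom ℂ (Sp n m ⧸ P) K).comp (Ideal.Quotient.mkₐ ℂ P)
  have hφ : ∀ g ∈ P, φ g = 0 := fun g hg =>
    (congrArg (algebraMap _ K) (Ideal.Quotient.eq_zero_iff_mem.2 hg)).trans (map_zero _)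
  obtain ⟨Y, hY, hYL⟩ := h.exists_finset_generators hf hd hnm (fun g hg => hφ g (hP hg)) hE
    fun i hi => hφ _ (hEP i hi)
  have htrdeg : Algebra.trdeg ℂ (Sp n m ⧸ P) ≤ #(Y : Set K) := by
    refine trdeg_le_mk_of_forall_algebraMap_mem (Y : Set K) fun L hL hYL' a => ?_
    obtain ⟨q, rfl⟩ := Ideal.Quotient.mk_surjective a
    have hq := aeval_mem_of_forall_mem (S := L.toSubalgebra) (hYL L hL hYL') q
    exact (DFunLike.congr_fun (aeval_unique φ) q).symm ▸ hq
  calc Algebra.trdeg ℂ (Sp n m ⧸ P) + E.card ≤ #(Y : Set K) + E.card := by gcongr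
    _ = (Y.card + E.card : ℕ) := by rw [Finset.coe_sort_coe, mk_coe_finset, Nat.cast_add]
    _ ≤ (m + 1 : ℕ) := Nat.cast_le.2 hY

theorem mem_minorsIdeal_of_pow_mul_mem (hn : n ≠ 0) {r : ℕ} {g : Sp n m}
    (hg : toS n m (∏ i, f i) ^ r * g ∈ minorsIdeal (m + 1) (Qs1 n m f)) :
    g ∈ minorsIdeal (m + 1) (Qs1 n m f) := by
  rw [minorsIdeal_eq_span_maximalMinors (finSuccEquiv m)] at hg ⊢
  refine mem_span_maximalMinors_of_pow_mul_mem (N := n - 1) (t := m + 1) ?_ ?_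
    (fun P _ hP => ?_) (fun P hPprime hP hfP => ?_) hg
  · have : NeZero m := ⟨by lia⟩
    simp only [Fintype.card_sum, Fin.val_ne_zero_iff, Fintype.card_subtype_compl,
      Fintype.card_subtype_eq, Fintype.card_fin]
    lia
  · rw [Fintype.card_sum, Fintype.card_fin, Fintype.card_fin]
    lia
  all_goals rw [← minorsIdeal_eq_span_maximalMinors (finSuccEquiv m)] at hP
  · simpa using h.trdeg_quotient_add_card_le hf hd hnm hP (E := ∅) (by simp) (by simp)
  · rw [map_prod, hPprime.prod_mem_iff] at hfP
    obtain ⟨i, -, hi⟩ := hfP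
    simpa using h.trdeg_quotient_add_card_le hf hd hnm hP (E := {i}) (by simp) (by simpa using hi)

end NormalCrossing

theorem SNC.normalCrossing (h : SNC n m f) : NormalCrossing f := by
  intro p hp I hI hI0
  rw [Fintype.card_fin] at hI
  obtain hI0' | hpos := I.card.eq_zero_or_pos
  · rw [Finset.card_eq_zero.1 hI0']
    simp
  have hrank := h.2 I hpos hI p hp hI0
  rw [Matrix.rank_eq_finrank_span_row] at hrank
  exact linearIndependent_iff_card_eq_finrank_span.2 ((Fintype.card_coe I).trans hrank.symm)

end DeterminantalSaturation

section BorderedDeterminant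

open scoped Matrix

theorem det_mul_det_fromBlocks_replicateCol_replicateRow_zero {A ι : Type*} [CommRing A]
    [Fintype ι] [DecidableEq ι] (M : Matrix ι ι A) (u v : ι → A) :
    M.det * (Matrix.fromBlocks M (Matrix.replicateCol Unit u) (Matrix.replicateRow Unit v) 0).det =
      -(M.det * (v ⬝ᵥ M.adjugate *ᵥ u)) := by
  let N : Matrix (ι ⊕ Unit) (ι ⊕ Unit) A := Matrix.fromBlocks 1
    (Matrix.replicateCol Unit (-(M.adjugate *ᵥ u))) 0 (M.det • 1)
  have hmul : Matrix.fromBlocks M (Matrix.replicateCol Unit u) (Matrix.replicateRow Unit v) 0 * N =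
      Matrix.fromBlocks M 0 (Matrix.replicateRow Unit v) (-(v ⬝ᵥ M.adjugate *ᵥ u) • 1) := by
    rw [Matrix.fromBlocks_multiply, Matrix.fromBlocks_inj]
    refine ⟨by simp, ?_, by simp, ?_⟩
    · rw [← Matrix.replicateCol_mulVec, Matrix.mulVec_neg, Matrix.mulVec_mulVec,
        Matrix.mul_adjugate, Matrix.smul_mulVec, Matrix.one_mulVec]
      ext i t
      simp [mul_comm]
    · ext s t
      simp [Matrix.mul_apply, dotProduct]
  have hN : N.det = M.det := by simp [N, Matrix.det_fromBlocks_zero₂₁]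
  have hdet := congrArg Matrix.det hmul
  rw [Matrix.det_mul, hN, Matrix.det_fromBlocks_zero₁₂] at hdet
  simpa [mul_comm] using hdet

end BorderedDeterminant

section LikelihoodIdeal

open scoped Matrix

variable {n m : ℕ} {f : Fin m → Rp n} {d : Fin m → ℕ}

theorem mem_IA_iff {g : Sp n m} :
    g ∈ IA n m f ↔
      ∃ k : ℕ, toS n m (∏ i, f i) ^ k * g ∈ Ideal.span (Set.range (hpoly n m f)) := by
  rw [IA, Ideal.mem_comap]
  rw [Set.range_comp' (algebraMap (Sp n m) (Localization.Away (toS n m (∏ i, f i)))),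
    ← Ideal.map_span,
    IsLocalization.algebraMap_mem_map_algebraMap_iff (Submonoid.powers (toS n m (∏ i, f i)))]
  simp only [Submonoid.mem_powers_iff, exists_exists_eq_and]

theorem sum_X_mul_toS_pderiv (hf : ∀ i, (f i).IsHomogeneous (d i)) (i : Fin m) :
    ∑ j, X (Sum.inr j) * toS n m (pderiv j (f i)) = (d i : Sp n m) * toS n m (f i) := by
  simpa [toS] using congrArg (toS n m) (hf i).sum_X_mul_pderiv

theorem prod_mul_linForm_mem_span_hpoly (hf : ∀ i, (f i).IsHomogeneous (d i)) :
    toS n m (∏ i, f i) * linForm n m d ∈ Ideal.span (Set.range (hpoly n m f)) := by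
  have hsum : toS n m (∏ i, f i) * linForm n m d = ∑ j, X (Sum.inr j) * hpoly n m f j := by
    simp only [hpoly, linForm, Finset.mul_sum]
    rw [Finset.sum_comm]
    refine Finset.sum_congr rfl fun i _ => ?_
    calc toS n m (∏ i, f i) * ((d i : Sp n m) * X (Sum.inl i))
        = X (Sum.inl i) * toS n m ((Finset.univ.erase i).prod f) *
            ((d i : Sp n m) * toS n m (f i)) := by
          rw [← Finset.prod_erase_mul _ _ (Finset.mem_univ i), map_mul]
          ring
      _ = ∑ j, X (Sum.inr j) * (X (Sum.inl i) *
            toS n m ((Finset.univ.erase i).prod f * pderiv j (f i))) := by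
          rw [← sum_X_mul_toS_pderiv hf, Finset.mul_sum]
          exact Finset.sum_congr rfl fun j _ => by rw [map_mul]; ring
  rw [hsum]
  exact Ideal.sum_mem _ fun j _ => Ideal.mul_mem_left _ _ (Ideal.subset_span ⟨j, rfl⟩)

theorem mul_det_mem_of_forall_vecMul_mem {A ι : Type*} [CommRing A] [Fintype ι] [DecidableEq ι]
    {I : Ideal A} {M : Matrix ι ι A} {v : ι → A} (h : ∀ k, (v ᵥ* M) k ∈ I) (i : ι) :
    v i * M.det ∈ I := by
  have hadj : v i * M.det = ((v ᵥ* M) ᵥ* M.adjugate) i := by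
    simp [Matrix.vecMul_vecMul, Matrix.mul_adjugate, Matrix.vecMul_smul, mul_comm]
  rw [hadj]
  exact Ideal.sum_mem _ fun k _ => I.mul_mem_right _ (h k)

/-- The left multiplier `(f, -s_i ∏_{k ≠ i} f_k)`, indexed like the rows of `Q^s_{∖1}`: the
Lagrange multipliers `s_i / f_i` with denominators cleared. -/
def clearedMultiplier (f : Fin m → Rp n) : Option (Fin m) → Sp n m :=
  fun i? => i?.elim (toS n m (∏ i, f i))
    fun i => -(X (Sum.inl i) * toS n m ((Finset.univ.erase i).prod f))

theorem clearedMultiplier_vecMul_Qs1_inl (k : {k : Fin m // (k : ℕ) ≠ 0}) :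
    (clearedMultiplier f ᵥ* Qs1 n m f) (Sum.inl k) = 0 := by
  have hcancel : toS n m (∏ i, f i) * X (Sum.inl k.1) +
      -(X (Sum.inl k.1) * toS n m ((Finset.univ.erase k.1).prod f)) * toS n m (f k) = 0 := by
    rw [← Finset.prod_erase_mul _ _ (Finset.mem_univ k.1), map_mul]
    ring
  simpa [Matrix.vecMul, dotProduct, clearedMultiplier, Qs1, Q1, Fintype.sum_option,
    apply_ite (toS n m)] using hcancel

theorem clearedMultiplier_vecMul_Qs1_inr (j : Fin n) :
    (clearedMultiplier f ᵥ* Qs1 n m f) (Sum.inr j) = -hpoly n m f j := by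
  simp [Matrix.vecMul, dotProduct, clearedMultiplier, Qs1, Q1, Fintype.sum_option, hpoly,
    mul_assoc]

theorem prod_mul_mem_span_hpoly_of_mem_minorsIdeal {g : Sp n m}
    (hg : g ∈ minorsIdeal (m + 1) (Qs1 n m f)) :
    toS n m (∏ i, f i) * g ∈ Ideal.span (Set.range (hpoly n m f)) := by
  rw [minorsIdeal_eq_span_maximalMinors (finSuccEquiv m)] at hg
  induction hg using Submodule.span_induction with
  | zero => simp
  | add a b _ _ ha hb => rw [mul_add]; exact add_mem ha hb
  | smul a b _ hb => rw [smul_eq_mul, mul_left_comm]; exact Ideal.mul_mem_left _ a hb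
  | mem _ h =>
    obtain ⟨c, rfl⟩ := h
    refine mul_det_mem_of_forall_vecMul_mem (v := clearedMultiplier f ∘ finSuccEquiv m)
      (fun k => ?_) 0
    have hk : (clearedMultiplier f ᵥ* Qs1 n m f) (c k) ∈ Ideal.span (Set.range (hpoly n m f)) := by
      obtain i | j := c k
      · rw [clearedMultiplier_vecMul_Qs1_inl]
        exact zero_mem _
      · rw [clearedMultiplier_vecMul_Qs1_inr]
        exact neg_mem (Ideal.subset_span ⟨j, rfl⟩)
    have hreindex : ((clearedMultiplier f ∘ finSuccEquiv m) ᵥ*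
        ((Qs1 n m f).submatrix (finSuccEquiv m) id).submatrix id c) k =
          (clearedMultiplier f ᵥ* Qs1 n m f) (c k) :=
      Equiv.sum_comp (finSuccEquiv m) fun i? => clearedMultiplier f i? * Qs1 n m f i? (c k)
    rwa [hreindex]

end LikelihoodIdeal

section BorderedMatrix

open scoped Matrix

variable {n m : ℕ} {f : Fin m → Rp n} {d : Fin m → ℕ}

/-- The square matrix of columns `1, …, m` and `m + j` of `Q`, bordered by the row
`(s_1,…,s_m,0)`; its determinant is `-h_j`. -/
def borderedMatrix (f : Fin m → Rp n) (j : Fin n) :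
    Matrix (Fin m ⊕ Unit) (Fin m ⊕ Unit) (Sp n m) :=
  Matrix.fromBlocks (Matrix.diagonal fun i => toS n m (f i))
    (Matrix.replicateCol Unit fun i => toS n m (pderiv j (f i)))
    (Matrix.replicateRow Unit fun i => X (Sum.inl i)) 0

theorem prod_mul_det_borderedMatrix (f : Fin m → Rp n) (j : Fin n) :
    toS n m (∏ i, f i) * (borderedMatrix f j).det = -(toS n m (∏ i, f i) * hpoly n m f j) := by
  have hdet := det_mul_det_fromBlocks_replicateCol_replicateRow_zero
    (Matrix.diagonal fun i => toS n m (f i)) (fun i => toS n m (pderiv j (f i)))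
    (fun i => X (Sum.inl i))
  rw [Matrix.det_diagonal, Matrix.adjugate_diagonal, ← map_prod] at hdet
  simpa [borderedMatrix, hpoly, dotProduct, Matrix.mulVec_diagonal] using hdet

theorem borderedMatrix_mulVec (hf : ∀ i, (f i).IsHomogeneous (d i)) (j : Fin n) :
    borderedMatrix f j *ᵥ Sum.elim (fun i => (d i : Sp n m)) 0 =
      ∑ k, (X (Sum.inr k) : Sp n m) • Sum.elim (fun i => toS n m (pderiv k (f i))) 0 +
        linForm n m d • Pi.single (Sum.inr ()) 1 := by
  rw [borderedMatrix, Matrix.fromBlocks_mulVec]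
  ext1 (i | _)
  · simp [Matrix.mulVec_diagonal, Finset.sum_apply, sum_X_mul_toS_pderiv hf, mul_comm]
  · simp [Finset.sum_apply, linForm, Matrix.mulVec, dotProduct, mul_comm]

theorem det_updateCol_borderedMatrix_mem_minorsIdeal [NeZero m] (f : Fin m → Rp n) (j k : Fin n) :
    ((borderedMatrix f j).updateCol (Sum.inl 0)
      (Sum.elim (fun i => toS n m (pderiv k (f i))) 0)).det ∈ minorsIdeal (m + 1) (Qs1 n m f) := by
  have hsub : (borderedMatrix f j).updateCol (Sum.inl 0)
      (Sum.elim (fun i => toS n m (pderiv k (f i))) 0) =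
        (Qs1 n m f).submatrix (Sum.elim some fun _ => none)
          (Sum.elim (fun i => if hi : ((i : Fin m) : ℕ) ≠ 0 then Sum.inl ⟨i, hi⟩ else Sum.inr k)
            fun _ => Sum.inr j) := by
    ext1 r c
    obtain i | _ := c
    · by_cases hi : i = 0
      · subst hi
        obtain r | _ := r <;> simp [Qs1, Q1]
      · obtain r | _ := r <;> simp [Qs1, Q1, hi, borderedMatrix, Matrix.diagonal_apply,
          apply_ite (toS n m)]
    · obtain r | _ := r <;> simp [Qs1, Q1, borderedMatrix]
  rw [hsub]
  have hcard : Fintype.card (Fin m ⊕ Unit) = m + 1 := by simp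
  exact hcard ▸ det_submatrix_mem_minorsIdeal (Qs1 n m f) _ _

theorem det_borderedMatrix_mem [NeZero m] (hf : ∀ i, (f i).IsHomogeneous (d i))
    (hd : ∀ i, d i ≠ 0) (j : Fin n) :
    (borderedMatrix f j).det ∈
      minorsIdeal (m + 1) (Qs1 n m f) + Ideal.span {linForm n m d} := by
  have hcramer : (d 0 : Sp n m) * (borderedMatrix f j).det =
      ∑ k, X (Sum.inr k) * (borderedMatrix f j).cramer
        (Sum.elim (fun i => toS n m (pderiv k (f i))) 0) (Sum.inl 0) +
      linForm n m d * (borderedMatrix f j).cramer (Pi.single (Sum.inr ()) 1) (Sum.inl 0) :=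
    calc (d 0 : Sp n m) * (borderedMatrix f j).det
        = (borderedMatrix f j).cramer
            (borderedMatrix f j *ᵥ Sum.elim (fun i => (d i : Sp n m)) 0) (Sum.inl 0) := by
          simp [Matrix.cramer_eq_adjugate_mulVec, Matrix.mulVec_mulVec, Matrix.adjugate_mul,
            Matrix.smul_mulVec, mul_comm]
      _ = _ := by
          rw [borderedMatrix_mulVec hf, map_add, map_sum, Pi.add_apply, Finset.sum_apply]
          simp only [map_smul, Pi.smul_apply, smul_eq_mul]
  have hunit : IsUnit (d 0 : Sp n m) := by
    simpa using (Nat.cast_ne_zero.2 (hd 0)).isUnit.map (C : ℂ →+* Sp n m)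
  rw [← Ideal.unit_mul_mem_iff_mem _ hunit, hcramer]
  refine Submodule.add_mem_sup (Ideal.sum_mem _ fun k _ => Ideal.mul_mem_left _ _ ?_)
    (Ideal.mul_mem_right _ _ (Ideal.mem_span_singleton_self _))
  rw [Matrix.cramer_apply]
  exact det_updateCol_borderedMatrix_mem_minorsIdeal f j k

end BorderedMatrix

section LinearElimination

theorem mem_sup_span_singleton_of_pow_mul_mem {A : Type*} [CommRing A] {I : Ideal A} {a b : A}
    {ψ : A →+* A} (hI : I ≤ I.comap ψ) (ha : ψ a = 0) (hb : ψ b = b)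
    (hψ : ∀ g, g - ψ g ∈ Ideal.span {a}) (hsat : ∀ k g, b ^ k * g ∈ I → g ∈ I) {k : ℕ} {g : A}
    (hg : b ^ k * g ∈ I + Ideal.span {a}) : g ∈ I + Ideal.span {a} := by
  have hmap : ψ (b ^ k * g) ∈ I := by
    obtain ⟨x, hx, y, hy, hxy⟩ := Submodule.mem_sup.1 hg
    obtain ⟨z, rfl⟩ := Ideal.mem_span_singleton'.1 hy
    rw [← hxy, map_add, map_mul, ha, mul_zero, add_zero]
    exact hI hx
  rw [map_mul, map_pow, hb] at hmap
  rw [← add_sub_cancel (ψ g) g]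
  exact Submodule.add_mem_sup (hsat k _ hmap) (hψ g)

variable {n m : ℕ} [NeZero m] {f : Fin m → Rp n} {d : Fin m → ℕ}

/-- The substitution eliminating `s_1` by means of the linear form `∑ d_i s_i`. -/
def linFormElim (n : ℕ) (d : Fin m → ℕ) : Sp n m →ₐ[ℂ] Sp n m :=
  aeval fun v => X v - if v = Sum.inl 0 then C (d 0 : ℂ)⁻¹ * linForm n m d else 0

theorem linFormElim_linForm (hd : d 0 ≠ 0) : linFormElim n d (linForm n m d) = 0 := by
  have hinv : (d 0 : Sp n m) * C (d 0 : ℂ)⁻¹ = 1 := by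
    rw [← map_natCast (C : ℂ →+* Sp n m), ← map_mul, mul_inv_cancel₀ (Nat.cast_ne_zero.2 hd),
      map_one]
  calc linFormElim n d (linForm n m d)
      = linForm n m d - (d 0 : Sp n m) * (C (d 0 : ℂ)⁻¹ * linForm n m d) := by
        simp only [linFormElim, linForm, map_sum, map_mul, map_natCast, aeval_X, mul_sub,
          Sum.inl.injEq, mul_ite, mul_zero, Finset.sum_sub_distrib, Finset.sum_ite_eq',
          Finset.mem_univ, if_true]
    _ = 0 := by rw [← mul_assoc, hinv, one_mul, sub_self]

theorem linFormElim_toS (q : Rp n) : linFormElim n d (toS n m q) = toS n m q := by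
  have hcomp : (linFormElim n d).comp (toS n m) = toS n m :=
    algHom_ext fun j => by simp [toS, linFormElim]
  exact DFunLike.congr_fun hcomp q

theorem sub_linFormElim_mem (g : Sp n m) :
    g - linFormElim n d g ∈ Ideal.span {linForm n m d} := by
  rw [← Ideal.Quotient.mk_eq_mk_iff_sub_mem]
  have hcomp : (Ideal.Quotient.mkₐ ℂ (Ideal.span {linForm n m d})).comp (linFormElim n d) =
      Ideal.Quotient.mkₐ ℂ (Ideal.span {linForm n m d}) := by
    refine algHom_ext fun v => Ideal.Quotient.eq.2 ?_
    change linFormElim n d (X v) - X v ∈ _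
    rw [linFormElim, aeval_X, sub_sub_cancel_left]
    split_ifs
    · exact neg_mem (Ideal.mul_mem_left _ _ (Ideal.mem_span_singleton_self _))
    · simp
  exact (DFunLike.congr_fun hcomp g).symm

theorem minorsIdeal_Qs1_le_comap_linFormElim (k : ℕ) :
    minorsIdeal k (Qs1 n m f) ≤ (minorsIdeal k (Qs1 n m f)).comap (linFormElim n d) := by
  have hfix : (Qs1 n m f).map (linFormElim n d) = Qs1 n m f := by
    ext1 (_ | i) (⟨k, hk⟩ | j)
    · simp [Qs1, linFormElim, Fin.val_ne_zero_iff.1 hk]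
    · simp [Qs1]
    all_goals exact linFormElim_toS _
  refine Ideal.span_le.2 ?_
  rintro _ ⟨r, c, hr, hc, rfl⟩
  refine Ideal.subset_span ⟨r, c, hr, hc, ?_⟩
  rw [AlgHom.map_det, AlgHom.mapMatrix_apply, ← Matrix.submatrix_map, hfix]

end LinearElimination

section Determinantal

variable {n m : ℕ} {f : Fin m → Rp n} {d : Fin m → ℕ}

theorem prod_mul_mem_of_mem_span_hpoly [NeZero m] (hf : ∀ i, (f i).IsHomogeneous (d i))
    (hd : ∀ i, d i ≠ 0) {g : Sp n m} (hg : g ∈ Ideal.span (Set.range (hpoly n m f))) :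
    toS n m (∏ i, f i) * g ∈ minorsIdeal (m + 1) (Qs1 n m f) + Ideal.span {linForm n m d} := by
  induction hg using Submodule.span_induction with
  | zero => simp
  | add a b _ _ ha hb => rw [mul_add]; exact add_mem ha hb
  | smul a b _ hb => rw [smul_eq_mul, mul_left_comm]; exact Ideal.mul_mem_left _ a hb
  | mem _ h =>
    obtain ⟨j, rfl⟩ := h
    rw [← neg_mem_iff, ← prod_mul_det_borderedMatrix]
    exact Ideal.mul_mem_left _ _ (det_borderedMatrix_mem hf hd j)

theorem prod_mul_mem_span_hpoly_of_mem (hf : ∀ i, (f i).IsHomogeneous (d i)) {g : Sp n m}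
    (hg : g ∈ minorsIdeal (m + 1) (Qs1 n m f) + Ideal.span {linForm n m d}) :
    toS n m (∏ i, f i) * g ∈ Ideal.span (Set.range (hpoly n m f)) := by
  obtain ⟨a, ha, b, hb, rfl⟩ := Submodule.mem_sup.1 hg
  obtain ⟨c, rfl⟩ := Ideal.mem_span_singleton'.1 hb
  rw [mul_add, mul_left_comm]
  exact add_mem (prod_mul_mem_span_hpoly_of_mem_minorsIdeal ha)
    (Ideal.mul_mem_left _ c (prod_mul_linForm_mem_span_hpoly hf))

theorem NormalCrossing.mem_of_prod_pow_mul_mem [NeZero m] (h : NormalCrossing f)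
    (hf : ∀ i, (f i).IsHomogeneous (d i)) (hd : ∀ i, d i ≠ 0) (hn : n ≠ 0) (hnm : n ≤ m)
    {k : ℕ} {g : Sp n m} (hg : toS n m (∏ i, f i) ^ k * g ∈
      minorsIdeal (m + 1) (Qs1 n m f) + Ideal.span {linForm n m d}) :
    g ∈ minorsIdeal (m + 1) (Qs1 n m f) + Ideal.span {linForm n m d} :=
  mem_sup_span_singleton_of_pow_mul_mem (ψ := (linFormElim n d : Sp n m →+* Sp n m))
    (minorsIdeal_Qs1_le_comap_linFormElim _) (linFormElim_linForm (hd 0)) (linFormElim_toS _)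
    sub_linFormElim_mem (fun _ _ => h.mem_minorsIdeal_of_pow_mul_mem hf hd hnm hn) hg

end Determinantal

theorem likelihood_ideal_eq_determinantal_general (n m : ℕ) (hn : n ≠ 0) (hnm : n ≤ m)
    (f : Fin m → Rp n) (d : Fin m → ℕ) (hf : ∀ i, (f i).IsHomogeneous (d i))
    (hd : ∀ i, d i ≠ 0) (h : NormalCrossing f) :
    IA n m f = minorsIdeal (m + 1) (Qs1 n m f) + Ideal.span {linForm n m d} := by
  have : NeZero m := ⟨by lia⟩
  ext g
  rw [mem_IA_iff]
  constructor
  · rintro ⟨k, hk⟩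
    have hmem := prod_mul_mem_of_mem_span_hpoly hf hd hk
    rw [← mul_assoc, ← pow_succ'] at hmem
    exact h.mem_of_prod_pow_mul_mem hf hd hn hnm hmem
  · intro hg
    exact ⟨1, by simpa only [pow_one] using prod_mul_mem_span_hpoly_of_mem hf hg⟩

/-- Under the SNC hypothesis and `m ≥ n+1`, the likelihood ideal equals the
determinantal ideal `I_{m+1}(Q^s_{∖1}) + ⟨Σ d_i s_i⟩`. -/
theorem likelihood_ideal_eq_determinantal (n m : ℕ) (hn : 2 ≤ n) (hm : n + 1 ≤ m)
    (f : Fin m → Rp n) (d : Fin m → ℕ)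
    (hf0 : ∀ i, f i ≠ 0) (hfh : ∀ i, (f i).IsHomogeneous (d i)) (hd : ∀ i, 1 ≤ d i)
    (hsnc : SNC n m f) :
    IA n m f = minorsIdeal (m + 1) (Qs1 n m f) + Ideal.span {linForm n m d} :=
  likelihood_ideal_eq_determinantal_general n m (by lia) (by lia) f d hfh
    (fun i => Nat.one_le_iff_ne_zero.1 (hd i)) hsnc.normalCrossing
end
end

section
/- Assume m ≥ n+1 and that f_1,…,f_m satisfy the SNC hypothesis. Then the kernel of the R-linear map R^{m+n−1} → R^m given by v ↦ Q_{∖1}·v is generated as an R-module by the circuit vectors c_T, where T ranges over all (m+1)-element subsets of the column index set {1,…,m+n−1}. (Each c_T lies in the kernel by Laplace expansion; the content is that together they generate it.) -/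
open MvPolynomial

noncomputable section

/-- Linear order on the columns of `Q_{∖1}`: diagonal columns first, then Jacobian columns. -/
def colIdx (n m : ℕ) : Col n m → ℕ :=
  Sum.elim (fun k => ((k : Fin m) : ℕ)) (fun j => m + (j : ℕ))

instance (n m : ℕ) : LinearOrder (Col n m) :=
  LinearOrder.lift' (colIdx n m) (by
    rintro (⟨k, hk⟩ | j) (⟨k', hk'⟩ | j') h <;>
      simp only [colIdx, Sum.elim_inl, Sum.elim_inr] at h
    · exact congrArg Sum.inl (Subtype.ext (Fin.val_injective h))
    · exact absurd h (by have := k.isLt; omega)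
    · exact absurd h (by have := k'.isLt; omega)
    · exact congrArg Sum.inr (Fin.val_injective (by omega)))

/-- The circuit vector `c_T` attached to an `(m+1)`-element subset `T` of the columns of
`Q_{∖1}`: its entry at the `k`-th smallest element `t_k` of `T` is
`(−1)^k · det(Q_{∖1}[T ∖ {t_k}])` (the columns of `T ∖ {t_k}` taken in increasing order,
via `k.succAbove`), and it vanishes outside `T`. -/
def circuit (n m : ℕ) (f : Fin m → Rp n) (T : Finset (Col n m)) (hT : T.card = m + 1) :
    Col n m → Rp n := fun c =>
  ∑ k : Fin (m + 1),
    if c = T.orderEmbOfFin hT k then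
      (-1 : Rp n) ^ (k : ℕ) *
        ((Q1 n m f).submatrix id fun l : Fin m => T.orderEmbOfFin hT (k.succAbove l)).det
    else 0

/-!
Let `M = R^{m+n-1}`. The Buchsbaum–Rim complex `⋯ → D_1(Rᵐ) ⊗ ⋀^(m+2) M → ⋀^(m+1) M → M → Rᵐ` of
`Q_{∖1} : M → Rᵐ` maps the standard basis of `⋀^(m+1) M` to the circuit vectors up to sign, so the
claim is exactness at `M`. By the normal crossing condition and Euler's identity, `Q_{∖1}` has rank
`m` at every nonzero point; by the Nullstellensatz some power of each variable then annihilates its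
cokernel. This gives `Q_{∖1}` a right inverse up to that power, hence homotopies showing that a
power of each variable kills the homology in positive degrees. The complex consists of free modules
and has length at most `n`, and `x_1, …, x_n` is a regular sequence, so this homology vanishes by
the acyclicity lemma.
-/

open scoped Pointwise

open RingTheory.Sequence (IsWeaklyRegular isWeaklyRegular_cons_iff)

namespace BuchsbaumRim

section Acyclicity

variable {R : Type*} [CommRing R]

section ThreeTerm

variable {K L M N : Type*} [AddCommGroup K] [AddCommGroup L] [AddCommGroup M] [AddCommGroup N]
  [Module R K] [Module R L] [Module R M] [Module R N] {a : R}

lemma quotSMulTop_mk_eq_zero_iff {x : M} :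
    (Submodule.Quotient.mk x : QuotSMulTop a M) = 0 ↔ ∃ y, a • y = x := by
  simp [Submodule.mem_smul_pointwise_iff_exists]

lemma mem_range_of_smul_mem_range {f : K →ₗ[R] L} {g : L →ₗ[R] M} (hgf : g ∘ₗ f = 0)
    (ha : IsSMulRegular M a) (hex : Function.Exact (QuotSMulTop.map a f) (QuotSMulTop.map a g))
    {x : M} (hx : a • x ∈ LinearMap.range g) : x ∈ LinearMap.range g := by
  obtain ⟨y, hy⟩ := hx
  have hy₀ : QuotSMulTop.map a g (Submodule.Quotient.mk y) = 0 := by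
    rw [QuotSMulTop.map_apply_mk, quotSMulTop_mk_eq_zero_iff]
    exact ⟨x, hy.symm⟩
  obtain ⟨z, hz⟩ := (hex _).1 hy₀
  obtain ⟨z, rfl⟩ := Submodule.Quotient.mk_surjective _ z
  rw [QuotSMulTop.map_apply_mk, ← sub_eq_zero, ← Submodule.Quotient.mk_sub,
    quotSMulTop_mk_eq_zero_iff] at hz
  obtain ⟨t, ht⟩ := hz
  refine ⟨-t, ha ?_⟩
  have hgfz : g (f z) = 0 := LinearMap.congr_fun hgf z
  change a • g (-t) = a • x
  rw [map_neg, smul_neg, ← map_smul, ht, map_sub, hgfz, hy, zero_sub, neg_neg]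

lemma mem_range_of_pow_smul_mem_range {f : K →ₗ[R] L} {g : L →ₗ[R] M} (hgf : g ∘ₗ f = 0)
    (ha : IsSMulRegular M a) (hex : Function.Exact (QuotSMulTop.map a f) (QuotSMulTop.map a g))
    {x : M} {r : ℕ} (hx : a ^ r • x ∈ LinearMap.range g) : x ∈ LinearMap.range g := by
  induction r with
  | zero => simpa using hx
  | succ r ih =>
    rw [pow_succ', mul_smul] at hx
    exact ih (mem_range_of_smul_mem_range hgf ha hex hx)

lemma mul_smul_mem_range_quotSMulTop_map {f : K →ₗ[R] L} {g : L →ₗ[R] M} {h : M →ₗ[R] N}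
    (hhg : h ∘ₗ g = 0) (ha : IsSMulRegular N a) {b c : R}
    (hb : ∀ x ∈ LinearMap.ker h, b • x ∈ LinearMap.range g)
    (hc : ∀ y ∈ LinearMap.ker g, c • y ∈ LinearMap.range f) :
    ∀ y ∈ LinearMap.ker (QuotSMulTop.map a g),
      (c * b) • y ∈ LinearMap.range (QuotSMulTop.map a f) := by
  intro y hy
  obtain ⟨y, rfl⟩ := Submodule.Quotient.mk_surjective _ y
  rw [LinearMap.mem_ker, QuotSMulTop.map_apply_mk, quotSMulTop_mk_eq_zero_iff] at hy
  obtain ⟨x, hx⟩ := hy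
  have hx₀ : h x = 0 := ha.right_eq_zero_of_smul (by
    rw [← map_smul, hx]; exact LinearMap.congr_fun hhg y)
  obtain ⟨z, hz⟩ := hb x hx₀
  obtain ⟨w, hw⟩ := hc (b • y - a • z) (by
    rw [LinearMap.mem_ker, map_sub, map_smul, map_smul, hz, ← hx, smul_comm, sub_self])
  refine ⟨Submodule.Quotient.mk w, ?_⟩
  rw [QuotSMulTop.map_apply_mk, hw, ← Submodule.Quotient.mk_smul, ← sub_eq_zero,
    ← Submodule.Quotient.mk_sub, quotSMulTop_mk_eq_zero_iff]
  refine ⟨-(c • z), ?_⟩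
  rw [smul_sub, smul_smul, smul_comm c a z, smul_neg]
  abel

end ThreeTerm

/- Induction on the sequence: if `a` is its first entry, the complex `C (k + 1) / a` satisfies the
hypotheses for the remaining entries and is shorter by one; its exactness says that `a`, hence a
power of `a`, acts injectively on the homology of `C`. -/
theorem exact_of_isWeaklyRegular (as : List R) (C : ℕ → Type*) [∀ k, AddCommGroup (C k)]
    [∀ k, Module R (C k)] (d : ∀ k, C (k + 1) →ₗ[R] C k) (hd : ∀ k, d k ∘ₗ d (k + 1) = 0)
    (hC : ∀ k, as.length < k → Subsingleton (C k)) (hreg : ∀ k, IsWeaklyRegular (C k) as)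
    (hkill : ∀ a ∈ as, ∀ k, ∃ r : ℕ, ∀ u ∈ LinearMap.ker (d k),
      a ^ r • u ∈ LinearMap.range (d (k + 1))) (k : ℕ) :
    Function.Exact (d (k + 1)) (d k) := by
  induction as generalizing C k with
  | nil =>
    have := hC (k + 1) (by simp)
    exact fun u => ⟨fun _ => ⟨0, Subsingleton.elim _ _⟩, fun _ => by simp [Subsingleton.elim u 0]⟩
  | cons a as ih =>
    have ha k : IsSMulRegular (C k) a := ((isWeaklyRegular_cons_iff ..).1 (hreg k)).1
    have hquot : ∀ k, Function.Exact (QuotSMulTop.map a (d (k + 2)))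
        (QuotSMulTop.map a (d (k + 1))) := by
      refine ih (fun k => QuotSMulTop a (C (k + 1))) (fun k => QuotSMulTop.map a (d (k + 1)))
        (fun k => ?_) (fun k hk => ?_) (fun k => ((isWeaklyRegular_cons_iff ..).1 (hreg _)).2)
        (fun b hb k => ?_)
      · rw [← QuotSMulTop.map_comp, hd, map_zero]
      · have := hC (k + 1) (by simpa using hk)
        exact (Submodule.Quotient.mk_surjective _).subsingleton
      · obtain ⟨r, hr⟩ := hkill b (List.mem_cons_of_mem a hb) k
        obtain ⟨s, hs⟩ := hkill b (List.mem_cons_of_mem a hb) (k + 1)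
        exact ⟨s + r, by
          rw [pow_add]; exact mul_smul_mem_range_quotSMulTop_map (hd k) (ha k) hr hs⟩
    refine fun u => ⟨fun hu => ?_, ?_⟩
    · obtain ⟨r, hr⟩ := hkill a List.mem_cons_self k
      exact mem_range_of_pow_smul_mem_range (hd (k + 1)) (ha (k + 1)) (hquot k) (hr u hu)
    · rintro ⟨w, rfl⟩
      exact LinearMap.congr_fun (hd k) w

lemma isWeaklyRegular_of_flat {as : List R} (has : IsWeaklyRegular R as) (M : Type*)
    [AddCommGroup M] [Module R M] [Module.Flat R M] : IsWeaklyRegular M as :=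
  ((TensorProduct.rid R M).isWeaklyRegular_congr as).1 has.isWeaklyRegular_lTensor

end Acyclicity

lemma isWeaklyRegular_ofFn_X (R : Type*) [CommRing R] (n : ℕ) :
    IsWeaklyRegular (MvPolynomial (Fin n) R) (List.ofFn (X : Fin n → MvPolynomial (Fin n) R)) := by
  rw [RingTheory.Sequence.isWeaklyRegular_iff_Fin]
  intro i
  have hi : (i : ℕ) < n := by simpa using i.2
  have htake : Ideal.ofList ((List.ofFn (X : Fin n → MvPolynomial (Fin n) R)).take i) =
      Ideal.span (X '' {j : Fin n | (j : ℕ) < i}) := by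
    refine congrArg Ideal.span (Set.ext fun r => ?_)
    simp only [Set.mem_ofPred_eq, Set.mem_image, List.mem_take_iff_getElem, List.getElem_ofFn,
      List.length_ofFn]
    exact ⟨fun ⟨j, hj, hr⟩ => ⟨⟨j, by omega⟩, by simp; omega, hr⟩,
      fun ⟨j, hj, hr⟩ => ⟨j, by simp; omega, hr⟩⟩
  rw [isSMulRegular_quotient_iff_mem_of_smul_mem]
  intro p hp
  simp only [Fin.getElem_fin, List.getElem_ofFn, smul_eq_mul, Ideal.mul_top, htake,
    mem_ideal_span_X_image] at hp ⊢
  intro s hs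
  obtain ⟨j, hj, hsj⟩ := hp (Finsupp.single ⟨i, hi⟩ 1 + s)
    (by rwa [mem_support_iff, coeff_X_mul, ← mem_support_iff])
  have hij : (⟨i, hi⟩ : Fin n) ≠ j := fun h => by simp [← h] at hj
  exact ⟨j, hj, by simpa [Finsupp.single_apply, hij] using hsj⟩

section Contraction

variable {R M : Type*} [CommRing R] [AddCommGroup M] [Module R M]

local infixl:70 " ⌋ " => CliffordAlgebra.contractLeft (R := R) (M := M)

open ExteriorAlgebra (ι ιMulti)

lemma ι_mul_mem_exteriorPower {p : ℕ} (w : M) {x : ExteriorAlgebra R M} (hx : x ∈ ⋀[R]^p M) :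
    ι R w * x ∈ ⋀[R]^(p + 1) M := by
  rw [ExteriorAlgebra.exteriorPower, pow_succ']
  exact Submodule.mul_mem_mul (LinearMap.mem_range_self _ w) hx

lemma contractLeft_mem_exteriorPower (φ : Module.Dual R M) {p : ℕ} {x : ExteriorAlgebra R M}
    (hx : x ∈ ⋀[R]^(p + 1) M) : φ ⌋ x ∈ ⋀[R]^p M := by
  induction p generalizing x with
  | zero =>
    rw [ExteriorAlgebra.exteriorPower, zero_add, pow_one] at hx
    obtain ⟨w, rfl⟩ := hx
    rw [ExteriorAlgebra.exteriorPower, pow_zero, CliffordAlgebra.contractLeft_ι]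
    exact Submodule.algebraMap_mem _
  | succ p ih =>
    rw [ExteriorAlgebra.exteriorPower, pow_succ'] at hx
    refine Submodule.mul_induction_on hx ?_ fun x y hx hy => by rw [map_add]; exact add_mem hx hy
    rintro _ ⟨w, rfl⟩ y hy
    rw [CliffordAlgebra.contractLeft_ι_mul]
    exact sub_mem (Submodule.smul_mem _ _ hy) (ι_mul_mem_exteriorPower w (ih hy))

lemma contractLeft_ιMulti (φ : Module.Dual R M) {q : ℕ} (v : Fin (q + 1) → M) :
    φ ⌋ ιMulti R (q + 1) v =
      ∑ k : Fin (q + 1), ((-1) ^ (k : ℕ) * φ (v k)) • ιMulti R q fun l => v (k.succAbove l) := by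
  induction q with
  | zero => simp [ExteriorAlgebra.ιMulti_succ_apply, Algebra.algebraMap_eq_smul_one]
  | succ q ih =>
    rw [ExteriorAlgebra.ιMulti_succ_apply, CliffordAlgebra.contractLeft_ι_mul, ih,
      Fin.sum_univ_succ (n := q + 1), Finset.mul_sum, sub_eq_add_neg, ← Finset.sum_neg_distrib]
    congr 1
    · simp [Matrix.vecTail, Function.comp_def]
    · refine Finset.sum_congr rfl fun k _ => ?_
      rw [ExteriorAlgebra.ιMulti_succ_apply, mul_smul_comm, ← neg_smul]
      simp [Matrix.vecTail, Function.comp_def, pow_succ]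

/-- The contraction `x ↦ φ (q - 1) ⌋ (⋯ ⌋ (φ 0 ⌋ x))` of the exterior algebra with a finite
sequence of linear forms. On `⋀^(m+1) M`, for the `m` components `φ` of a map `M → Rᵐ`, it is the
splice map `⋀^(m+1) M → M` of the Buchsbaum–Rim complex. -/
def iteratedContract : ∀ {q : ℕ}, (Fin q → Module.Dual R M) →
    (ExteriorAlgebra R M →ₗ[R] ExteriorAlgebra R M)
  | 0, _ => LinearMap.id
  | _ + 1, φ => iteratedContract (Fin.tail φ) ∘ₗ CliffordAlgebra.contractLeft (φ 0)

lemma iteratedContract_succ {q : ℕ} (φ : Fin (q + 1) → Module.Dual R M)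
    (x : ExteriorAlgebra R M) :
    iteratedContract φ x = iteratedContract (Fin.tail φ) (φ 0 ⌋ x) := rfl

lemma iteratedContract_mem_exteriorPower {p q : ℕ} (φ : Fin q → Module.Dual R M)
    {x : ExteriorAlgebra R M} (hx : x ∈ ⋀[R]^(q + p) M) : iteratedContract φ x ∈ ⋀[R]^p M := by
  induction q generalizing x with
  | zero => simpa [iteratedContract] using hx
  | succ q ih =>
    rw [Nat.add_right_comm] at hx
    exact ih _ (contractLeft_mem_exteriorPower _ hx)

lemma contractLeft_iteratedContract {q : ℕ} (φ : Fin q → Module.Dual R M) (ψ : Module.Dual R M)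
    (x : ExteriorAlgebra R M) :
    ψ ⌋ iteratedContract φ x = (-1 : R) ^ q • iteratedContract φ (ψ ⌋ x) := by
  induction q generalizing x with
  | zero => simp [iteratedContract]
  | succ q ih =>
    rw [iteratedContract_succ, iteratedContract_succ, ih, CliffordAlgebra.contractLeft_comm,
      map_neg, pow_succ, mul_neg_one, neg_smul, smul_neg]

lemma iteratedContract_contractLeft_self {q : ℕ} (φ : Fin q → Module.Dual R M) (i : Fin q)
    (x : ExteriorAlgebra R M) : iteratedContract φ (φ i ⌋ x) = 0 := by
  induction q generalizing x with
  | zero => exact i.elim0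
  | succ q ih =>
    rw [iteratedContract_succ]
    cases i using Fin.cases with
    | zero => rw [CliffordAlgebra.contractLeft_contractLeft, map_zero]
    | succ i =>
      rw [CliffordAlgebra.contractLeft_comm, map_neg, neg_eq_zero]
      exact ih (Fin.tail φ) i _

lemma iteratedContract_ιMulti {q : ℕ} (φ : Fin q → Module.Dual R M) (v : Fin q → M) :
    iteratedContract φ (ιMulti R q v) =
      algebraMap R _ (Matrix.of fun i j => φ i (v j)).det := by
  induction q with
  | zero => simp [iteratedContract]
  | succ q ih =>
    simp_rw [iteratedContract_succ, contractLeft_ιMulti, map_sum, map_smul, ih,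
      Matrix.det_succ_row_zero, map_sum, map_mul (algebraMap R _), Algebra.smul_def, map_mul]
    rfl

section DualVectors

variable {q : ℕ} {φ : Fin q → Module.Dual R M} {w : Fin q → M} {δ : R}

lemma exists_iteratedContract_eq_pow_smul (hw : ∀ i j, φ i (w j) = if i = j then δ else 0) {p : ℕ}
    {x : ExteriorAlgebra R M} (hx : x ∈ ⋀[R]^p M) (hφx : ∀ i, φ i ⌋ x = 0) :
    ∃ y ∈ ⋀[R]^(q + p) M, iteratedContract φ y = δ ^ q • x ∧
      ∀ ψ : Module.Dual R M, (∀ j, ψ (w j) = 0) → ψ ⌋ x = 0 → ψ ⌋ y = 0 := by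
  induction q with
  | zero => exact ⟨x, by simpa using hx, by simp [iteratedContract], fun _ _ h => h⟩
  | succ q ih =>
    obtain ⟨y, hy, hφy, hψ⟩ := ih (φ := Fin.tail φ) (w := Fin.tail w)
      (fun i j => by simpa [Fin.tail] using hw i.succ j.succ) fun i => hφx i.succ
    have hφ₀y : φ 0 ⌋ y = 0 :=
      hψ (φ 0) (fun j => by simpa [Fin.tail, eq_comm] using hw 0 j.succ) (hφx 0)
    refine ⟨ι R (w 0) * y, ?_, ?_, fun ψ hψw hψx => ?_⟩
    · rw [Nat.add_right_comm]
      exact ι_mul_mem_exteriorPower _ hy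
    · rw [iteratedContract_succ, CliffordAlgebra.contractLeft_ι_mul, hφ₀y, hw, if_pos rfl,
        mul_zero, sub_zero, map_smul, hφy, smul_smul, pow_succ']
    · rw [CliffordAlgebra.contractLeft_ι_mul, hψw, hψ ψ (fun j => hψw j.succ) hψx, zero_smul,
        mul_zero, sub_zero]

lemma exists_pow_smul_eq_sum_contractLeft (hw : ∀ i j, φ i (w j) = if i = j then δ else 0) {p : ℕ}
    {x : ExteriorAlgebra R M} (hx : x ∈ ⋀[R]^(q + p) M) (hφx : iteratedContract φ x = 0) :
    ∃ y : Fin q → ExteriorAlgebra R M, (∀ j, y j ∈ ⋀[R]^(q + p + 1) M) ∧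
      δ ^ q • x = ∑ j, φ j ⌋ y j := by
  induction q generalizing x with
  | zero => exact ⟨0, fun j => j.elim0, by simpa [iteratedContract] using hφx⟩
  | succ q ih =>
    rw [Nat.add_right_comm q 1 p] at hx ⊢
    obtain ⟨y, hy, hφy⟩ := ih (φ := Fin.tail φ) (w := Fin.tail w)
      (fun i j => by simpa [Fin.tail] using hw i.succ j.succ)
      (contractLeft_mem_exteriorPower (φ 0) hx) hφx
    have hδx : δ • x = φ 0 ⌋ (ι R (w 0) * x) + ι R (w 0) * (φ 0 ⌋ x) := by
      rw [CliffordAlgebra.contractLeft_ι_mul, hw, if_pos rfl, sub_add_cancel]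
    refine ⟨Fin.cons (δ ^ q • (ι R (w 0) * x)) fun j => -(ι R (w 0) * y j), fun j => ?_, ?_⟩
    · cases j using Fin.cases with
      | zero => exact Submodule.smul_mem _ _ (ι_mul_mem_exteriorPower _ hx)
      | succ j => exact neg_mem (ι_mul_mem_exteriorPower _ (hy j))
    · rw [Fin.sum_univ_succ, pow_succ, mul_smul, hδx, smul_add, ← mul_smul_comm, hφy,
        Finset.mul_sum]
      simp [CliffordAlgebra.contractLeft_ι_mul, hw, Fin.tail]

end DualVectors

/-- Contraction with a linear form as a map `⋀^(p+1) M → ⋀^p M`. -/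
def contract (φ : Module.Dual R M) (p : ℕ) : ⋀[R]^(p + 1) M →ₗ[R] ⋀[R]^p M :=
  (CliffordAlgebra.contractLeft φ).restrict fun _ => contractLeft_mem_exteriorPower φ

/-- Left multiplication by a vector as a map `⋀^p M → ⋀^(p+1) M`. -/
def wedge (w : M) (p : ℕ) : ⋀[R]^p M →ₗ[R] ⋀[R]^(p + 1) M :=
  (LinearMap.mulLeft R (ι R w)).restrict fun _ => ι_mul_mem_exteriorPower w

@[simp]
lemma coe_contract (φ : Module.Dual R M) {p : ℕ} (x : ⋀[R]^(p + 1) M) :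
    (contract φ p x : ExteriorAlgebra R M) = φ ⌋ x := rfl

lemma contract_wedge (φ : Module.Dual R M) (w : M) {p : ℕ} (x : ⋀[R]^(p + 1) M) :
    contract φ (p + 1) (wedge w (p + 1) x) = φ w • x - wedge w p (contract φ p x) :=
  Subtype.ext (CliffordAlgebra.contractLeft_ι_mul ..)

lemma contract_contract_self (φ : Module.Dual R M) {p : ℕ} (x : ⋀[R]^(p + 2) M) :
    contract φ p (contract φ (p + 1) x) = 0 :=
  Subtype.ext (CliffordAlgebra.contractLeft_contractLeft φ _)

lemma contract_comm (φ ψ : Module.Dual R M) {p : ℕ} (x : ⋀[R]^(p + 2) M) :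
    contract φ p (contract ψ (p + 1) x) = -contract ψ p (contract φ (p + 1) x) :=
  Subtype.ext (CliffordAlgebra.contractLeft_comm ..)

end Contraction

section Koszul

variable {R M σ : Type*} [CommRing R] [AddCommGroup M] [Module R M]

section Differential

variable [Fintype σ] (φ : σ → Module.Dual R M) (k p : ℕ)

/-- The Koszul differential `D_{k+1}(G*) ⊗ ⋀^(p+1) M → D_k(G*) ⊗ ⋀^p M` of a map
`φ : M → G` to the free module `G` with basis `σ`. The divided power `D_k(G*)` is free on the
monomials of degree `k`, so an element of `D_k(G*) ⊗ N` is encoded as a function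
`Sym σ k → N`. -/
def koszulD : (Sym σ (k + 1) → ⋀[R]^(p + 1) M) →ₗ[R] (Sym σ k → ⋀[R]^p M) :=
  LinearMap.pi fun s => ∑ i, contract (φ i) p ∘ₗ LinearMap.proj (i ::ₛ s)

variable {φ k p}

lemma koszulD_apply (u : Sym σ (k + 1) → ⋀[R]^(p + 1) M) (s : Sym σ k) :
    koszulD φ k p u s = ∑ i, contract (φ i) p (u (i ::ₛ s)) := by
  simp [koszulD]

lemma koszulD_comp_koszulD : koszulD φ k p ∘ₗ koszulD φ (k + 1) (p + 1) = 0 := by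
  refine LinearMap.ext fun u => funext fun s => ?_
  simp only [LinearMap.comp_apply, koszulD_apply, map_sum, LinearMap.zero_apply, Pi.zero_apply]
  rw [← Fintype.sum_prod_type' fun i j =>
    contract (φ i) p (contract (φ j) (p + 1) (u (j ::ₛ i ::ₛ s)))]
  refine Finset.sum_involution (fun ij _ => ij.swap) ?_ ?_ (fun _ _ => Finset.mem_univ _)
    fun _ _ => Prod.swap_swap _
  · rintro ⟨i, j⟩ -
    rw [contract_comm, Sym.cons_swap]
    exact neg_add_cancel _
  · rintro ⟨i, j⟩ - hij hswap
    obtain rfl : j = i := congrArg Prod.fst hswap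
    exact hij (contract_contract_self _ _)

end Differential

section Homotopy

variable [DecidableEq σ] {k p : ℕ}

/-- The homotopy that divides by the variable `i` and multiplies by the vector `w`. -/
def koszulHomotopy (w : M) (i : σ) (u : Sym σ k → ⋀[R]^p M) : Sym σ (k + 1) → ⋀[R]^(p + 1) M :=
  fun s => if h : i ∈ s then wedge w p (u (s.erase i h)) else 0

lemma koszulHomotopy_cons (w : M) (i : σ) (u : Sym σ k → ⋀[R]^p M) (s : Sym σ k) :
    koszulHomotopy w i u (i ::ₛ s) = wedge w p (u s) := by
  rw [koszulHomotopy, dif_pos (Sym.mem_cons_self i s), Sym.erase_cons_head]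

lemma koszulHomotopy_of_notMem (w : M) {i : σ} (u : Sym σ k → ⋀[R]^p M) {s : Sym σ (k + 1)}
    (h : i ∉ s) : koszulHomotopy w i u s = 0 :=
  dif_neg h

variable [Fintype σ] {φ : σ → Module.Dual R M} {w : σ → M} {δ : R}

lemma koszulD_koszulHomotopy (hw : ∀ i j, φ i (w j) = if i = j then δ else 0) (i : σ)
    {u : Sym σ (k + 1) → ⋀[R]^(p + 1) M} (hu : koszulD φ k p u = 0) (s : Sym σ (k + 1)) :
    koszulD φ (k + 1) (p + 1) (koszulHomotopy (w i) i u) s =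
      δ • u s - if i ∈ s then 0 else wedge (w i) p (contract (φ i) p (u s)) := by
  rw [koszulD_apply]
  split_ifs with his
  · obtain ⟨t, rfl⟩ := Sym.exists_cons_of_mem his
    calc ∑ j, contract (φ j) (p + 1) (koszulHomotopy (w i) i u (j ::ₛ i ::ₛ t))
      _ = ∑ j, (φ j (w i) • u (j ::ₛ t) - wedge (w i) p (contract (φ j) p (u (j ::ₛ t)))) := by
        refine Finset.sum_congr rfl fun j _ => ?_
        rw [Sym.cons_swap, koszulHomotopy_cons, contract_wedge]
      _ = δ • u (i ::ₛ t) - wedge (w i) p (koszulD φ k p u t) := by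
        simp [Finset.sum_sub_distrib, koszulD_apply, hw, ite_smul]
      _ = δ • u (i ::ₛ t) - 0 := by rw [hu, Pi.zero_apply, map_zero]
  · rw [Finset.sum_eq_single i, koszulHomotopy_cons, contract_wedge, hw, if_pos rfl]
    · intro j _ hji
      rw [koszulHomotopy_of_notMem, map_zero]
      simp [Sym.mem_cons, his, Ne.symm hji]
    · simp

/- Each homotopy kills the coefficients of the monomials divisible by its variable, so running
through all variables leaves nothing in positive degree. -/
lemma pow_card_smul_mem_range_koszulD (hw : ∀ i j, φ i (w j) = if i = j then δ else 0)
    {u : Sym σ (k + 1) → ⋀[R]^(p + 1) M} (hu : koszulD φ k p u = 0) :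
    δ ^ Fintype.card σ • u ∈ LinearMap.range (koszulD φ (k + 1) (p + 1)) := by
  suffices h : ∀ l : Finset σ, ∃ v, ∀ s : Sym σ (k + 1), (∃ i ∈ l, i ∈ s) →
      (δ ^ l.card • u - koszulD φ (k + 1) (p + 1) v) s = 0 by
    obtain ⟨v, hv⟩ := h Finset.univ
    refine ⟨v, (sub_eq_zero.1 (_root_.funext fun s => ?_)).symm⟩
    obtain ⟨i, hi⟩ := s.exists_mem
    exact hv s ⟨i, Finset.mem_univ i, hi⟩
  intro l
  induction l using Finset.induction_on with
  | empty => exact ⟨0, by simp⟩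
  | insert i l hil ih =>
    obtain ⟨v, hv⟩ := ih
    set r := δ ^ l.card • u - koszulD φ (k + 1) (p + 1) v with hr
    have hdr : koszulD φ k p r = 0 := by
      rw [hr, map_sub, map_smul, hu, smul_zero, ← LinearMap.comp_apply, koszulD_comp_koszulD,
        LinearMap.zero_apply, sub_zero]
    refine ⟨δ • v + koszulHomotopy (w i) i r, fun s hs => ?_⟩
    have hdiff : δ ^ (insert i l).card • u -
        koszulD φ (k + 1) (p + 1) (δ • v + koszulHomotopy (w i) i r) =
          δ • r - koszulD φ (k + 1) (p + 1) (koszulHomotopy (w i) i r) := by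
      rw [Finset.card_insert_of_notMem hil, pow_succ', mul_smul, map_add, map_smul, hr, smul_sub]
      abel
    rw [hdiff, Pi.sub_apply, Pi.smul_apply, koszulD_koszulHomotopy hw i hdr, sub_sub_cancel]
    split_ifs with his
    · rfl
    · obtain ⟨j, hj, hjs⟩ := hs
      have hjl : j ∈ l := (Finset.mem_insert.1 hj).resolve_left fun h => his (h ▸ hjs)
      rw [hv s ⟨j, hjl, hjs⟩, map_zero, map_zero]

end Homotopy

end Koszul

section Complex

variable {R M : Type*} [CommRing R] [AddCommGroup M] [Module R M] {m : ℕ}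

lemma subsingleton_exteriorPower [Module.Free R M] [Module.Finite R M] {p : ℕ}
    (hp : Module.finrank R M < p) : Subsingleton (⋀[R]^p M) := by
  cases subsingleton_or_nontrivial R
  · exact Module.subsingleton R _
  rw [← Module.finrank_eq_zero_iff_of_free (R := R), exteriorPower.finrank_eq,
    Nat.choose_eq_zero_of_lt hp]

/-- The index set of the `k`-th term of the Buchsbaum–Rim complex, which is a sum of copies of one
exterior power of `M`: the basis of `Rᵐ` for `k = 0`, one point for `k = 1`, and the monomials of
degree `k - 2` for `k ≥ 2`. -/
abbrev complexIndex (m : ℕ) : ℕ → Type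
  | 0 => Fin m
  | 1 => Unit
  | k + 2 => Sym (Fin m) k

/-- The exterior degree of the `k`-th term of the Buchsbaum–Rim complex. -/
abbrev complexDegree (m : ℕ) : ℕ → ℕ
  | 0 => 0
  | 1 => 1
  | k + 2 => m + 1 + k

/-- The `k`-th term of the Buchsbaum–Rim complex
`⋯ → D_1(Rᵐ) ⊗ ⋀^(m+2) M → ⋀^(m+1) M → M → Rᵐ`, with `M` and `R` written `⋀^1 M` and `⋀^0 M`. -/
abbrev complexModule (R M : Type*) [CommRing R] [AddCommGroup M] [Module R M] (m k : ℕ) : Type _ :=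
  complexIndex m k → ⋀[R]^(complexDegree m k) M

instance (k : ℕ) : Finite (complexIndex m k) :=
  match k with
  | 0 => inferInstanceAs (Finite (Fin m))
  | 1 => inferInstanceAs (Finite Unit)
  | k + 2 => inferInstanceAs (Finite (Sym (Fin m) k))

lemma subsingleton_complexModule [Module.Free R M] [Module.Finite R M] {n k : ℕ} (hn : n ≠ 0)
    (hM : Module.finrank R M + 1 ≤ m + n) (hk : n < k) : Subsingleton (complexModule R M m k) := by
  obtain ⟨k, rfl⟩ : ∃ j, k = j + 2 := ⟨k - 2, by omega⟩
  have : Subsingleton (⋀[R]^(m + 1 + k) M) := subsingleton_exteriorPower (by omega)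
  exact inferInstanceAs (Subsingleton (Sym (Fin m) k → ⋀[R]^(m + 1 + k) M))

variable (φ : Fin m → Module.Dual R M)

/-- The map `⋀^(m+1) M → ⋀^1 M` that splices the Koszul part of the Buchsbaum–Rim complex to
`M → Rᵐ`. -/
def splice : ⋀[R]^(m + 1) M →ₗ[R] ⋀[R]^1 M :=
  (iteratedContract φ).restrict fun _ => iteratedContract_mem_exteriorPower φ

lemma contract_splice (i : Fin m) (x : ⋀[R]^(m + 1) M) : contract (φ i) 0 (splice φ x) = 0 := by
  refine Subtype.ext ((contractLeft_iteratedContract φ (φ i) x).trans ?_)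
  rw [iteratedContract_contractLeft_self, smul_zero, Submodule.coe_zero]

lemma splice_contract (i : Fin m) (x : ⋀[R]^(m + 2) M) : splice φ (contract (φ i) (m + 1) x) = 0 :=
  Subtype.ext (iteratedContract_contractLeft_self φ i x)

/-- The differentials of the Buchsbaum–Rim complex of the map `M → Rᵐ` with components `φ`. -/
def complexD : ∀ k, complexModule R M m (k + 1) →ₗ[R] complexModule R M m k
  | 0 => LinearMap.pi fun i => contract (φ i) 0 ∘ₗ LinearMap.proj ()
  | 1 => LinearMap.pi fun _ => splice φ ∘ₗ LinearMap.proj Sym.nil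
  | k + 2 => koszulD φ k (m + 1 + k)

lemma complexD_comp_complexD : ∀ k, complexD φ k ∘ₗ complexD φ (k + 1) = 0
  | 0 => LinearMap.ext fun u => funext fun i => contract_splice φ i (u Sym.nil)
  | 1 => by
    refine LinearMap.ext fun u => funext fun _ => ?_
    change splice φ (koszulD φ 0 (m + 1) u Sym.nil) = 0
    rw [koszulD_apply, map_sum]
    exact Finset.sum_eq_zero fun i _ => splice_contract φ i _
  | k + 2 => koszulD_comp_koszulD

section Kill

variable {φ} {w : Fin m → M} {δ : R} (hw : ∀ i j, φ i (w j) = if i = j then δ else 0)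
include hw

lemma pow_smul_mem_range_splice {x : ⋀[R]^1 M} (hx : ∀ i, contract (φ i) 0 x = 0) :
    δ ^ m • x ∈ LinearMap.range (splice φ) := by
  obtain ⟨y, hy, hφy, -⟩ :=
    exists_iteratedContract_eq_pow_smul hw x.2 fun i => congrArg Subtype.val (hx i)
  exact ⟨⟨y, hy⟩, Subtype.ext hφy⟩

lemma pow_smul_eq_koszulD_of_splice_eq_zero {x : ⋀[R]^(m + 1) M} (hx : splice φ x = 0) :
    ∃ v, koszulD φ 0 (m + 1) v = fun _ => δ ^ m • x := by
  obtain ⟨y, hy, hφy⟩ := exists_pow_smul_eq_sum_contractLeft hw x.2 (congrArg Subtype.val hx)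
  refine ⟨fun s => ⟨y (Sym.oneEquiv.symm s), hy _⟩, funext fun s => Subtype.ext ?_⟩
  have hs (i : Fin m) : Sym.oneEquiv.symm (i ::ₛ s) = i := by
    rw [Equiv.symm_apply_eq, Subsingleton.elim s Sym.nil]
    rfl
  simp [koszulD_apply, hs, hφy]

lemma pow_smul_mem_range_complexD :
    ∀ k, ∀ u ∈ LinearMap.ker (complexD φ k), δ ^ m • u ∈ LinearMap.range (complexD φ (k + 1))
  | 0, u, hu => by
    obtain ⟨y, hy⟩ := pow_smul_mem_range_splice hw (x := u ()) fun i => congrFun hu i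
    exact ⟨fun _ => y, funext fun _ => hy⟩
  | 1, u, hu => by
    obtain ⟨v, hv⟩ := pow_smul_eq_koszulD_of_splice_eq_zero hw (x := u Sym.nil) (congrFun hu ())
    exact ⟨v, hv.trans (funext fun s => by rw [Subsingleton.elim s Sym.nil]; rfl)⟩
  | k + 2, u, hu => by
    have h := pow_card_smul_mem_range_koszulD hw hu
    rw [Fintype.card_fin] at h
    exact h

end Kill

/-- Exactness of the Buchsbaum–Rim complex at `M`. -/
theorem exists_iteratedContract_eq_ι [Module.Free R M] [Module.Finite R M] {as : List R}
    (has : IsWeaklyRegular R as) (has₀ : as ≠ [])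
    (hM : Module.finrank R M + 1 ≤ m + as.length)
    (hφ : ∀ a ∈ as, ∃ (r : ℕ) (w : Fin m → M), ∀ i j, φ i (w j) = if i = j then a ^ r else 0)
    {v : M} (hv : ∀ i, φ i v = 0) :
    ∃ x ∈ ⋀[R]^(m + 1) M, iteratedContract φ x = ExteriorAlgebra.ι R v := by
  have hexact : Function.Exact (complexD φ 1) (complexD φ 0) := by
    refine exact_of_isWeaklyRegular as (complexModule R M m) (complexD φ)
      (complexD_comp_complexD φ) (fun k => subsingleton_complexModule ?_ hM)
      (fun k => isWeaklyRegular_of_flat has _) (fun a ha k => ?_) 0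
    · simpa using has₀
    · obtain ⟨r, w, hw⟩ := hφ a ha
      refine ⟨r * m, ?_⟩
      rw [pow_mul]
      exact pow_smul_mem_range_complexD hw k
  let v₁ : ⋀[R]^1 M := ⟨ExteriorAlgebra.ι R v, by
    rw [ExteriorAlgebra.exteriorPower, pow_one]; exact LinearMap.mem_range_self _ v⟩
  obtain ⟨u, hu⟩ := (hexact fun _ => v₁).1 (funext fun i => Subtype.ext (by
    change CliffordAlgebra.contractLeft (φ i) (ExteriorAlgebra.ι R v) = 0
    rw [CliffordAlgebra.contractLeft_ι, hv, map_zero]))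
  exact ⟨u Sym.nil, (u Sym.nil).2, congrArg Subtype.val (congrFun hu ())⟩

end Complex

section Circuits

variable {R ι κ : Type*} [CommRing R] [Fintype κ]

section Cokernel

variable [DecidableEq ι] (Q : Matrix ι κ R)

lemma mem_annihilator_coker_mulVecLin_iff [Finite ι] {a : R} :
    a ∈ Module.annihilator R ((ι → R) ⧸ LinearMap.range Q.mulVecLin) ↔
      ∃ W : Matrix κ ι R, Q * W = a • 1 := by
  cases nonempty_fintype ι
  simp only [Module.mem_annihilator, (Submodule.Quotient.mk_surjective _).forall,
    ← Submodule.Quotient.mk_smul, Submodule.Quotient.mk_eq_zero, LinearMap.mem_range,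
    Matrix.mulVecLin_apply]
  refine ⟨fun h => ?_, ?_⟩
  · choose w hw using fun j => h (Pi.single j 1)
    refine ⟨Matrix.of fun c j => w j c, Matrix.ext fun i j => ?_⟩
    simpa [Matrix.mul_apply, Matrix.mulVec, dotProduct, Matrix.one_apply, Pi.single_apply] using
      congrFun (hw j) i
  · rintro ⟨W, hW⟩ x
    exact ⟨W.mulVec x, by rw [Matrix.mulVec_mulVec, hW, Matrix.smul_mulVec, Matrix.one_mulVec]⟩

lemma det_mul_mem_annihilator_coker_mulVecLin [Fintype ι] (B : Matrix κ ι R) :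
    (Q * B).det ∈ Module.annihilator R ((ι → R) ⧸ LinearMap.range Q.mulVecLin) :=
  (mem_annihilator_coker_mulVecLin_iff Q).2
    ⟨B * (Q * B).adjugate, by rw [← Matrix.mul_assoc, Matrix.mul_adjugate]⟩

end Cokernel

/-- The linear form `v ↦ (Q v)_i` given by the `i`-th row of `Q`. -/
def rowForm (Q : Matrix ι κ R) (i : ι) : Module.Dual R (κ → R) := LinearMap.proj i ∘ₗ Q.mulVecLin

variable {m : ℕ} (Q : Matrix (Fin m) κ R) [LinearOrder κ]

/-- The circuit vector of a matrix with `m` rows attached to a set `T` of `m + 1` columns, listed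
in increasing order: its entry at the `k`-th element of `T` is `(-1)^k` times the minor on the other
elements of `T`. -/
def circuitVector (T : Finset κ) (hT : T.card = m + 1) : κ → R := fun c =>
  ∑ k : Fin (m + 1), if c = T.orderEmbOfFin hT k then
    (-1) ^ (k : ℕ) * (Q.submatrix id fun l => T.orderEmbOfFin hT (k.succAbove l)).det else 0

lemma iteratedContract_rowForm_ιMulti_single (T : Finset κ) (hT : T.card = m + 1) :
    iteratedContract (rowForm Q) (ExteriorAlgebra.ιMulti R (m + 1) fun k =>
        (Pi.single (T.orderEmbOfFin hT k) 1 : κ → R)) =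
      (-1 : R) ^ m • ExteriorAlgebra.ι R (circuitVector Q T hT) := by
  set x := ExteriorAlgebra.ιMulti R (m + 1) fun k => (Pi.single (T.orderEmbOfFin hT k) 1 : κ → R)
  have hx : iteratedContract (rowForm Q) x ∈ ⋀[R]^1 (κ → R) :=
    iteratedContract_mem_exteriorPower _ (ExteriorAlgebra.ιMulti_range R (m + 1) ⟨_, rfl⟩)
  rw [ExteriorAlgebra.exteriorPower, pow_one] at hx
  obtain ⟨v, hv⟩ := hx
  rw [← hv, ← map_smul]
  refine congrArg _ (funext fun c => ?_)
  rw [← ExteriorAlgebra.algebraMap_inj (κ → R)]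
  calc algebraMap R _ (v c)
    _ = CliffordAlgebra.contractLeft (LinearMap.proj c) (iteratedContract (rowForm Q) x) := by
      rw [← hv, CliffordAlgebra.contractLeft_ι, LinearMap.proj_apply]
    _ = algebraMap R _ (((-1 : R) ^ m • circuitVector Q T hT) c) := by
      rw [contractLeft_iteratedContract, contractLeft_ιMulti, map_sum, Pi.smul_apply,
        circuitVector, smul_eq_mul, map_mul, map_sum, Algebra.smul_def]
      congr 1
      refine Finset.sum_congr rfl fun k _ => ?_
      rw [map_smul, iteratedContract_ιMulti, Algebra.smul_def, ← map_mul]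
      rcases eq_or_ne c (T.orderEmbOfFin hT k) with rfl | hc
      · simp [rowForm, Matrix.submatrix]
      · simp [hc]

lemma circuitVector_mem_ker (T : Finset κ) (hT : T.card = m + 1) :
    circuitVector Q T hT ∈ LinearMap.ker Q.mulVecLin := by
  refine funext fun i => (ExteriorAlgebra.algebraMap_eq_zero_iff (κ → R) _).1 ?_
  change algebraMap R _ (rowForm Q i (circuitVector Q T hT)) = 0
  have h := contractLeft_iteratedContract (rowForm Q) (rowForm Q i)
    (ExteriorAlgebra.ιMulti R (m + 1) fun k => (Pi.single (T.orderEmbOfFin hT k) 1 : κ → R))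
  rw [iteratedContract_contractLeft_self, iteratedContract_rowForm_ιMulti_single, smul_zero,
    map_smul, CliffordAlgebra.contractLeft_ι] at h
  exact ((isUnit_one.neg.pow m).smul_eq_zero).1 h

lemma iteratedContract_rowForm_mem_span {x : ExteriorAlgebra R (κ → R)}
    (hx : x ∈ ⋀[R]^(m + 1) (κ → R)) :
    iteratedContract (rowForm Q) x ∈ (Submodule.span R
      {v | ∃ (T : Finset κ) (hT : T.card = m + 1), v = circuitVector Q T hT}).map
        (ExteriorAlgebra.ι R) := by
  rw [← exteriorPower.ιMulti_family_span_fixedDegree_of_span R (Pi.basisFun R κ).span_eq] at hx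
  induction hx using Submodule.span_induction with
  | mem x hx =>
    obtain ⟨⟨T, hT⟩, rfl⟩ := hx
    have h := iteratedContract_rowForm_ιMulti_single Q T hT
    refine ⟨(-1 : R) ^ m • circuitVector Q T hT,
      Submodule.smul_mem _ _ (Submodule.subset_span ⟨T, hT, rfl⟩), ?_⟩
    rw [map_smul, ← h]
    simp only [← Pi.basisFun_apply]
    rfl
  | zero => rw [map_zero]; exact zero_mem _
  | add x y _ _ hx hy => rw [map_add]; exact add_mem hx hy
  | smul a x _ hx => rw [map_smul]; exact Submodule.smul_mem _ a hx

/-- The Buchsbaum–Rim theorem in matrix form: the sequence `as` witnesses that the annihilator of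
the cokernel has the maximal depth that the format of `Q` allows. -/
theorem ker_mulVecLin_eq_span_circuitVector {as : List R} (has : IsWeaklyRegular R as)
    (has₀ : as ≠ []) (hκ : Fintype.card κ + 1 ≤ m + as.length)
    (hQ : ∀ a ∈ as,
      a ∈ (Module.annihilator R ((Fin m → R) ⧸ LinearMap.range Q.mulVecLin)).radical) :
    LinearMap.ker Q.mulVecLin =
      Submodule.span R {v | ∃ (T : Finset κ) (hT : T.card = m + 1), v = circuitVector Q T hT} := by
  nontriviality R
  apply le_antisymm
  · intro v hv
    have hφ : ∀ a ∈ as, ∃ (r : ℕ) (w : Fin m → κ → R),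
        ∀ i j, rowForm Q i (w j) = if i = j then a ^ r else 0 := by
      intro a ha
      obtain ⟨r, hr⟩ := hQ a ha
      obtain ⟨W, hW⟩ := (mem_annihilator_coker_mulVecLin_iff Q).1 hr
      refine ⟨r, W.col, fun i j => ?_⟩
      exact (congrFun (congrFun hW i) j).trans (by simp [Matrix.one_apply])
    obtain ⟨x, hx, hxv⟩ := exists_iteratedContract_eq_ι (rowForm Q) has has₀
      (by rwa [Module.finrank_fintype_fun_eq_card]) hφ (v := v) fun i => congrFun hv i
    obtain ⟨u, hu, huv⟩ := iteratedContract_rowForm_mem_span Q hx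
    rwa [← (ExteriorAlgebra.ι_inj R _ _).1 (huv.trans hxv)]
  · rw [Submodule.span_le]
    rintro _ ⟨T, hT, rfl⟩
    exact circuitVector_mem_ker Q T hT

end Circuits

end BuchsbaumRim

section NormalCrossing

variable {K ι : Type*} [Field K] {n : ℕ}

/-- The Jacobian criterion for the hypersurfaces `f i = 0` to cross normally away from the origin,
over an arbitrary field; over `ℂ` it is the second half of `SNC`. -/
def IsNormalCrossing (f : ι → MvPolynomial (Fin n) K) : Prop :=
  ∀ I : Finset ι, 1 ≤ I.card → I.card ≤ n →
    ∀ p : Fin n → K, p ≠ 0 → (∀ i ∈ I, eval p (f i) = 0) →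
      (Matrix.of fun (i : I) (j : Fin n) => eval p (pderiv j (f i.1))).rank = I.card

lemma sum_eval_pderiv_mul {g : MvPolynomial (Fin n) K} {e : ℕ} (hg : g.IsHomogeneous e)
    (p : Fin n → K) : ∑ j, eval p (pderiv j g) * p j = e * eval p g := by
  simpa [mul_comm] using congrArg (eval p) hg.sum_X_mul_pderiv

namespace IsNormalCrossing

variable {f : ι → MvPolynomial (Fin n) K} (hf : IsNormalCrossing f) {p : Fin n → K} (hp : p ≠ 0)
include hf hp

lemma linearIndependent {I : Finset ι} (hI : I.card ≤ n) (hfp : ∀ i ∈ I, eval p (f i) = 0) :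
    LinearIndependent K fun (i : I) (j : Fin n) => eval p (pderiv j (f i)) := by
  rcases I.eq_empty_or_nonempty with rfl | hne
  · exact linearIndependent_empty_type
  · have hrank := hf I hne.card_pos hI p hp hfp
    rw [Matrix.rank_eq_finrank_span_row] at hrank
    rw [linearIndependent_iff_card_eq_finrank_span, Fintype.card_coe]
    exact hrank.symm

variable {d : ι → ℕ} (hd : ∀ i, (f i).IsHomogeneous (d i))
include hd

/- If `n` of the `f i` vanished at `p`, then `p` would be orthogonal to a basis of `Kⁿ`, because
Euler's identity makes it orthogonal to their gradients. -/
lemma card_lt {I : Finset ι} (hfp : ∀ i ∈ I, eval p (f i) = 0) : I.card < n := by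
  by_contra! hn
  obtain ⟨J, hJI, hJ⟩ := Finset.exists_subset_card_eq hn
  have hfpJ : ∀ i ∈ J, eval p (f i) = 0 := fun i hi => hfp i (hJI hi)
  have hspan := (hf.linearIndependent hp hJ.le hfpJ).span_eq_top_of_card_eq_finrank'
    (by rw [Fintype.card_coe, hJ, Module.finrank_fin_fun])
  have horth : dotProductBilin K K p = 0 := by
    refine LinearMap.ext_on hspan ?_
    rintro _ ⟨i, rfl⟩
    rw [dotProductBilin_apply_apply, dotProduct_comm, LinearMap.zero_apply]
    exact (sum_eval_pderiv_mul (hd i) p).trans (by rw [hfpJ i i.2, mul_zero])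
  exact hp (dotProduct_eq_zero p fun v => LinearMap.congr_fun horth v)

variable [Fintype ι]

lemma eq_zero_of_sum_mul_pderiv_eq_zero {y : ι → K} (hyf : ∀ i, y i * eval p (f i) = 0)
    (hy : ∀ j, ∑ i, y i * eval p (pderiv j (f i)) = 0) : y = 0 := by
  classical
  set I := Finset.univ.filter fun i => eval p (f i) = 0 with hI
  have hfp : ∀ i ∈ I, eval p (f i) = 0 := fun i hi => (Finset.mem_filter.1 hi).2
  have hyI : ∀ i ∉ I, y i = 0 := fun i hi =>
    (mul_eq_zero.1 (hyf i)).resolve_right (by simpa [hI] using hi)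
  have hsum : ∑ i : I, y i • (fun j => eval p (pderiv j (f i))) = 0 := by
    refine _root_.funext fun j => ?_
    rw [Finset.sum_apply, Pi.zero_apply, ← hy j,
      ← Finset.sum_subset I.subset_univ fun i _ hi => by rw [hyI i hi, zero_mul]]
    exact Finset.sum_coe_sort I fun i => y i * eval p (pderiv j (f i))
  have hli := hf.linearIndependent hp (hf.card_lt hp hd hfp).le hfp
  refine _root_.funext fun i => ?_
  by_cases hi : i ∈ I
  · exact Fintype.linearIndependent_iff.1 hli (fun i => y i) hsum ⟨i, hi⟩
  · exact hyI i hi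

/- Euler's identity recovers the missing relation `y i₀ * f i₀ p = 0` from the others. -/
lemma eq_zero_of_forall_ne {i₀ : ι} (hi₀ : (d i₀ : K) ≠ 0) {y : ι → K}
    (hyf : ∀ i ≠ i₀, y i * eval p (f i) = 0)
    (hy : ∀ j, ∑ i, y i * eval p (pderiv j (f i)) = 0) : y = 0 := by
  have hsum : ∑ i, y i * (d i * eval p (f i)) = 0 := by
    calc ∑ i, y i * (d i * eval p (f i))
      _ = ∑ i, ∑ j, y i * eval p (pderiv j (f i)) * p j := by
        simp_rw [← sum_eval_pderiv_mul (hd _), Finset.mul_sum, mul_assoc]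
      _ = ∑ j, (∑ i, y i * eval p (pderiv j (f i))) * p j := by
        rw [Finset.sum_comm]
        simp_rw [Finset.sum_mul]
      _ = 0 := Finset.sum_eq_zero fun j _ => by rw [hy, zero_mul]
  have hi₀f : d i₀ * (y i₀ * eval p (f i₀)) = 0 := by
    rw [← hsum, Finset.sum_eq_single i₀ (fun i _ hi => by rw [mul_left_comm, hyf i hi, mul_zero])
      (by simp), mul_left_comm]
  refine hf.eq_zero_of_sum_mul_pderiv_eq_zero hp hd (fun i => ?_) hy
  rcases eq_or_ne i i₀ with rfl | hi
  · exact (mul_eq_zero.1 hi₀f).resolve_left hi₀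
  · exact hyf i hi

end IsNormalCrossing

end NormalCrossing

lemma X_mem_radical_annihilator_coker_mulVecLin {K ι κ : Type*} [Field K] [IsAlgClosed K]
    [Finite ι] [Fintype κ] {n : ℕ} {Q : Matrix ι κ (MvPolynomial (Fin n) K)}
    (hQ : ∀ p ≠ 0, LinearIndependent K (Q.map (eval p)).row) (j : Fin n) :
    X j ∈ (Module.annihilator (MvPolynomial (Fin n) K)
      ((ι → MvPolynomial (Fin n) K) ⧸ LinearMap.range Q.mulVecLin)).radical := by
  classical
  cases nonempty_fintype ι
  rw [← vanishingIdeal_zeroLocus_eq_radical (K := K), mem_vanishingIdeal_iff]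
  intro p hpI
  rw [aeval_eq_eval, eval_X]
  by_contra hpj
  have hp : p ≠ 0 := fun h => hpj (by rw [h, Pi.zero_apply])
  obtain ⟨B, hB⟩ : ∃ B : Matrix κ ι K, Q.map (eval p) * B = 1 := by
    rw [← Matrix.mulVec_surjective_iff_exists_right_inverse, ← Matrix.coe_mulVecLin,
      ← LinearMap.range_eq_top]
    apply Submodule.eq_top_of_finrank_eq
    rw [← Matrix.rank, (hQ p hp).rank_matrix, Module.finrank_fintype_fun_eq_card]
  have hdet := (mem_zeroLocus_iff.1 hpI) _
    (BuchsbaumRim.det_mul_mem_annihilator_coker_mulVecLin Q (Matrix.map B C))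
  rw [aeval_eq_eval, RingHom.map_det, RingHom.mapMatrix_apply, Matrix.map_mul,
    Matrix.map_map] at hdet
  have hBC : Matrix.map B (eval p ∘ C) = B := by ext; simp
  rw [hBC, hB, Matrix.det_one] at hdet
  exact one_ne_zero hdet

section DeletedMatrix

variable {K : Type*} [Field K] {n m : ℕ}

/-- The matrix `Q_{∖1}` for polynomials over an arbitrary field; `Q1` is the case of `ℂ`. -/
def deletedMatrix (f : Fin m → MvPolynomial (Fin n) K) :
    Matrix (Fin m) (Col n m) (MvPolynomial (Fin n) K) :=
  Matrix.of fun i => Sum.elim (fun k => if i = (k : Fin m) then f i else 0)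
    (fun j => pderiv j (f i))

variable {f : Fin m → MvPolynomial (Fin n) K} {d : Fin m → ℕ}

lemma linearIndependent_row_map_eval_deletedMatrix (hm : 1 ≤ m) (hf : IsNormalCrossing f)
    (hfh : ∀ i, (f i).IsHomogeneous (d i)) (hd : (d ⟨0, hm⟩ : K) ≠ 0) {p : Fin n → K}
    (hp : p ≠ 0) :
    LinearIndependent K ((deletedMatrix f).map (eval p)).row := by
  rw [← Matrix.vecMul_injective_iff, ← Matrix.coe_vecMulLinear, ← LinearMap.ker_eq_bot,
    LinearMap.ker_eq_bot']
  intro y hy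
  refine hf.eq_zero_of_forall_ne hp hfh hd (fun i hi => ?_) fun j => ?_
  · have hi₀ : (i : ℕ) ≠ 0 := fun h => hi (Fin.ext h)
    simpa [Matrix.vecMul, dotProduct, deletedMatrix, apply_ite] using congrFun hy (Sum.inl ⟨i, hi₀⟩)
  · simpa [Matrix.vecMul, dotProduct, deletedMatrix] using congrFun hy (Sum.inr j)

theorem ker_generated_by_circuits_general [IsAlgClosed K] (hn : 1 ≤ n) (hm : 1 ≤ m)
    (hf : IsNormalCrossing f) (hfh : ∀ i, (f i).IsHomogeneous (d i))
    (hd : (d ⟨0, hm⟩ : K) ≠ 0) :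
    LinearMap.ker (deletedMatrix f).mulVecLin =
      Submodule.span (MvPolynomial (Fin n) K)
        {v | ∃ (T : Finset (Col n m)) (hT : T.card = m + 1),
          v = BuchsbaumRim.circuitVector (deletedMatrix f) T hT} := by
  have hcard : Fintype.card (Col n m) < m + n := by
    simpa using Fintype.card_subtype_lt (p := fun k : Fin m => (k : ℕ) ≠ 0) (x := ⟨0, hm⟩) (by simp)
  refine BuchsbaumRim.ker_mulVecLin_eq_span_circuitVector _
    (BuchsbaumRim.isWeaklyRegular_ofFn_X K n) (by simpa using Nat.one_le_iff_ne_zero.1 hn)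
    (by simpa using hcard) fun a ha => ?_
  obtain ⟨j, rfl⟩ := (List.mem_ofFn' _ _).1 ha
  exact X_mem_radical_annihilator_coker_mulVecLin
    (fun p hp => linearIndependent_row_map_eval_deletedMatrix hm hf hfh hd hp) j

lemma circuit_eq_circuitVector {n m : ℕ} (f : Fin m → Rp n) (T : Finset (Col n m))
    (hT : T.card = m + 1) : circuit n m f T hT = BuchsbaumRim.circuitVector (Q1 n m f) T hT := by
  refine _root_.funext fun c => ?_
  rw [circuit, BuchsbaumRim.circuitVector]
  congr!

end DeletedMatrix

/-- Under the SNC hypothesis, the kernel of `v ↦ Q_{∖1}·v` is generated by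
the circuit vectors `c_T`, `T` ranging over `(m+1)`-element subsets of the columns. -/
theorem ker_generated_by_circuits (n m : ℕ) (hn : 2 ≤ n) (hm : n + 1 ≤ m)
    (f : Fin m → Rp n) (d : Fin m → ℕ)
    (hf0 : ∀ i, f i ≠ 0) (hfh : ∀ i, (f i).IsHomogeneous (d i)) (hd : ∀ i, 1 ≤ d i)
    (hsnc : SNC n m f) :
    LinearMap.ker (Q1 n m f).mulVecLin =
      Submodule.span (Rp n)
        {v | ∃ T : Finset (Col n m), ∃ hT : T.card = m + 1, v = circuit n m f T hT} := by
  simp_rw [circuit_eq_circuitVector]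
  exact ker_generated_by_circuits_general (by omega) (by omega) hsnc.2 hfh
    (Nat.cast_ne_zero.2 (Nat.one_le_iff_ne_zero.1 (hd _)))
end
end
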